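/- For every bounded conjugate-linear functional Y on X there exists a unique W ∈ X such that B(W,V) = ⟨Y,V⟩ for all V ∈ X; moreover there is a constant C > 0, independent of Y, such that ‖W‖_X ≤ C ‖Y‖_{X*}. (Well-posedness of the boundary integral equation for the diffraction problem.) -/

import Mathlib

noncomputable section

open MeasureTheory Complex Filter Topology
open scoped Real NNReal ContDiff

/-- The plane `ℝ²`. -/
abbrev R2 : Type := EuclideanSpace ℝ (Fin 2)

/-- Euclidean dot product on `ℝ²`. -/
def rdot (x ξ : R2) : ℝ := x 0 * ξ 0 + x 1 * ξ 1

/-- `testFT φ ξ = ∫ e^{i x·ξ} φ(x) dx`, the (inverse-type) Fourier integral of a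
test function `φ`. -/
def testFT (φ : R2 → ℂ) (ξ : R2) : ℂ :=
  ∫ x : R2, Complex.exp (Complex.I * (rdot x ξ : ℂ)) * φ x

/-- The squared `H^s(ℝ²)` norm of the distribution whose Fourier transform is `F`:
`‖f‖² = (2π)⁻² ∫ (1+|ξ|²)^s |f̂(ξ)|² dξ`. -/
def wnormSq (s : ℝ) (F : R2 → ℂ) : ℝ :=
  ((2 * π) ^ 2)⁻¹ * ∫ ξ : R2, ((1 : ℝ) + ‖ξ‖ ^ 2) ^ s * ‖F ξ‖ ^ 2

/-- The `H^s(ℝ²)` norm (Fourier-side representation). -/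
def wnorm (s : ℝ) (F : R2 → ℂ) : ℝ := Real.sqrt (wnormSq s F)

/-- `F` is the Fourier transform of an element of `H^s(ℝ²)`. -/
def MemHs (s : ℝ) (F : R2 → ℂ) : Prop :=
  AEStronglyMeasurable F (volume : Measure R2) ∧
    Integrable (fun ξ : R2 => ((1 : ℝ) + ‖ξ‖ ^ 2) ^ s * ‖F ξ‖ ^ 2) volume

/-- An element `f` of `H̃^s(Γ)`: a distribution on `ℝ²` of Sobolev regularity `s`
supported in the closure of `Γ`, represented by its Fourier transform `ft`
(a continuous function, `f` being a compactly supported distribution).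
The support condition is expressed by testing against smooth compactly supported
functions `φ` whose support avoids `closure Γ`, via the Parseval pairing
`∫ f φ dx = (2π)⁻² ∫ f̂(ξ) φ̌(ξ) dξ` with `φ̌(ξ) = ∫ e^{ix·ξ} φ(x) dx`. -/
structure HTildeElt (s : ℝ) (Γ : Set R2) where
  ft : R2 → ℂ
  cont : Continuous ft
  mem : Integrable (fun ξ : R2 => ((1 : ℝ) + ‖ξ‖ ^ 2) ^ s * ‖ft ξ‖ ^ 2) volume
  supp : ∀ φ : R2 → ℂ, ContDiff ℝ ∞ φ → HasCompactSupport φ →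
    tsupport φ ∩ closure Γ = ∅ → (∫ ξ : R2, ft ξ * testFT φ ξ) = 0

/-- `Γ` is a bounded Lipschitz domain in `ℝ²`: a nonempty bounded open set whose
boundary is locally, after a rigid motion, the graph of a Lipschitz function with
the domain on one side. -/
def IsLipschitzDomain (Γ : Set R2) : Prop :=
  IsOpen Γ ∧ Bornology.IsBounded Γ ∧ Γ.Nonempty ∧
    ∀ x ∈ frontier Γ, ∃ (e : R2 ≃ₗᵢ[ℝ] R2) (L : ℝ≥0) (f : ℝ → ℝ) (U : Set R2),
      LipschitzWith L f ∧ IsOpen U ∧ x ∈ U ∧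
        ∀ y ∈ U, (y ∈ Γ ↔ f (e y 0) < e y 1)

/-- `ξ·V̂(ξ)`, i.e. `-i` times the Fourier transform of `div V`. -/
def dotFt (F1 F2 : R2 → ℂ) (ξ : R2) : ℂ := (ξ 0 : ℂ) * F1 ξ + (ξ 1 : ℂ) * F2 ξ

/-- `ξ⊥·V̂(ξ)`, i.e. `-i` times the Fourier transform of `curl V`. -/
def curlFt (F1 F2 : R2 → ℂ) (ξ : R2) : ℂ := (ξ 1 : ℂ) * F1 ξ - (ξ 0 : ℂ) * F2 ξ

/-- An element of `X = H̃^{-1/2}_div(Γ)`: a pair of elements of `H̃^{-1/2}(Γ)`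
whose distributional divergence also belongs to `H̃^{-1/2}(Γ)`. -/
structure Xelt (Γ : Set R2) where
  c1 : HTildeElt (-(1/2) : ℝ) Γ
  c2 : HTildeElt (-(1/2) : ℝ) Γ
  divMem : Integrable (fun ξ : R2 =>
    ((1 : ℝ) + ‖ξ‖ ^ 2) ^ (-(1/2) : ℝ) * ‖dotFt c1.ft c2.ft ξ‖ ^ 2) volume

/-- The Fourier transform of `div V`. -/
def divFt {Γ : Set R2} (V : Xelt Γ) (ξ : R2) : ℂ :=
  Complex.I * dotFt V.c1.ft V.c2.ft ξ

/-- The squared `H`-norm `‖V‖²_H` of a vector field. -/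
def HnormSq {Γ : Set R2} (V : Xelt Γ) : ℝ :=
  wnormSq (-(1/2)) V.c1.ft + wnormSq (-(1/2)) V.c2.ft

/-- The squared `X`-norm `‖V‖²_X = ‖V‖²_H + ‖div V‖²_{H̃^{-1/2}}`. -/
def XnormSq {Γ : Set R2} (V : Xelt Γ) : ℝ :=
  HnormSq V + wnormSq (-(1/2)) (divFt V)

/-- The `X`-norm. -/
def Xnorm {Γ : Set R2} (V : Xelt Γ) : ℝ := Real.sqrt (XnormSq V)

/-- `ĝ₀(ξ) = i/√(k²-|ξ|²)`, with the branch `√(k²-|ξ|²) = i√(|ξ|²-k²)` for `|ξ| > k`. -/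
def g0hat (k : ℝ) (ξ : R2) : ℂ :=
  if ‖ξ‖ < k then Complex.I / ((Real.sqrt (k ^ 2 - ‖ξ‖ ^ 2) : ℝ) : ℂ)
  else 1 / ((Real.sqrt (‖ξ‖ ^ 2 - k ^ 2) : ℝ) : ℂ)

/-- The integrand of the sesquilinear form `B`:
`ĝ₀(ξ) [ (|ξ|²-k²) a₁ b̄₁ - k² a₂ b̄₂ ]` with `a₁ = ξ·Ŵ/|ξ|`, `a₂ = ξ⊥·Ŵ/|ξ|`, etc. -/
def Bintegrand (k : ℝ) (F1 F2 G1 G2 : R2 → ℂ) (ξ : R2) : ℂ :=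
  g0hat k ξ *
    (((‖ξ‖ ^ 2 - k ^ 2 : ℝ) : ℂ) * (dotFt F1 F2 ξ * starRingEnd ℂ (dotFt G1 G2 ξ)) -
      ((k ^ 2 : ℝ) : ℂ) * (curlFt F1 F2 ξ * starRingEnd ℂ (curlFt G1 G2 ξ))) /
    ((‖ξ‖ ^ 2 : ℝ) : ℂ)

/-- The sesquilinear form `B(W,V)`. -/
def Bform (k : ℝ) {Γ : Set R2} (W V : Xelt Γ) : ℂ :=
  ∫ ξ : R2, Bintegrand k W.c1.ft W.c2.ft V.c1.ft V.c2.ft ξ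

/-- The sesquilinear form `E(q,V) = B(curl⃗ q, V)`, where
`curl⃗ q = (∂q/∂x₂, -∂q/∂x₁)` has Fourier transform `(iξ₂ q̂, -iξ₁ q̂)`. -/
def Eform (k : ℝ) {Γ : Set R2} (q : HTildeElt (1/2 : ℝ) Γ) (V : Xelt Γ) : ℂ :=
  ∫ ξ : R2, Bintegrand k (fun η => Complex.I * (η 1 : ℂ) * q.ft η)
      (fun η => -(Complex.I * (η 0 : ℂ) * q.ft η)) V.c1.ft V.c2.ft ξ

/-- The inner product of the Hilbert space `X`; by the Riesz representation
theorem, every bounded conjugate-linear functional on `X` is `V ↦ Xinner Y V`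
for a unique `Y ∈ X`, with functional norm `Xnorm Y`. -/
def Xinner {Γ : Set R2} (Y V : Xelt Γ) : ℂ :=
  ((((2 * π) ^ 2)⁻¹ : ℝ) : ℂ) * ∫ ξ : R2, ((((1 : ℝ) + ‖ξ‖ ^ 2) ^ (-(1/2) : ℝ) : ℝ) : ℂ) *
    (Y.c1.ft ξ * starRingEnd ℂ (V.c1.ft ξ) + Y.c2.ft ξ * starRingEnd ℂ (V.c2.ft ξ) +
      divFt Y ξ * starRingEnd ℂ (divFt V ξ))

/-- `√(k²-|ξ|²)`, with the branch `i√(|ξ|²-k²)` for `|ξ| > k`. -/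
def rootk (k : ℝ) (ξ : R2) : ℂ :=
  if ‖ξ‖ < k then ((Real.sqrt (k ^ 2 - ‖ξ‖ ^ 2) : ℝ) : ℂ)
  else Complex.I * ((Real.sqrt (‖ξ‖ ^ 2 - k ^ 2) : ℝ) : ℂ)

/-- The Fourier multiplier `i/(2√(k²-|ξ|²))` of the Helmholtz single-layer
operator `T` with kernel `e^{ik|x-y|}/(4π|x-y|)`. -/
def mT (k : ℝ) (ξ : R2) : ℂ := Complex.I / (2 * rootk k ξ)

/-- The Fourier multiplier `1/(2|ξ|)` of the Laplace single-layer operator `T₀`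
with kernel `1/(4π|x-y|)`. -/
def mT0 (ξ : R2) : ℂ := 1 / (2 * ((‖ξ‖ : ℝ) : ℂ))

/-- The Fourier multiplier of `R = T - T₀`. -/
def mR (k : ℝ) (ξ : R2) : ℂ := mT k ξ - mT0 ξ

/-- The distributions with Fourier data `G` and `E` have the same restriction to
the open set `Γ`: `⟨G - E, φ⟩ = 0` for all smooth `φ` compactly supported in `Γ`
(pairing written on the Fourier side). -/
def AgreeOn (Γ : Set R2) (G E : R2 → ℂ) : Prop :=
  ∀ φ : R2 → ℂ, ContDiff ℝ ∞ φ → HasCompactSupport φ → tsupport φ ⊆ Γ →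
    (∫ ξ : R2, (G ξ - E ξ) * testFT φ ξ) = 0

/-- The duality pairing `⟨f, ψ⟩` between `H^{1/2}(Γ)` and `H̃^{-1/2}(Γ)`, written
on the Fourier side (Plancherel): `(2π)⁻² ∫ f̂(ξ) conj(ψ̂(ξ)) dξ`, where `G = f̂`
is the Fourier data of (an extension of) `f`. -/
def dualPair (G ψ : R2 → ℂ) : ℂ :=
  ((((2 * π) ^ 2)⁻¹ : ℝ) : ℂ) * ∫ ξ : R2, G ξ * starRingEnd ℂ (ψ ξ)

noncomputable section
open MeasureTheory Complex Filter Topology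
open scoped Real NNReal ContDiff FourierTransform

/-- weight -/
def wt (ξ : R2) : ℝ := ((1 : ℝ) + ‖ξ‖ ^ 2) ^ (-(1/2) : ℝ)

lemma one_add_sq_pos (ξ : R2) : 0 < 1 + ‖ξ‖ ^ 2 := by positivity

lemma wt_pos (ξ : R2) : 0 < wt ξ := Real.rpow_pos_of_pos (one_add_sq_pos ξ) _

lemma wt_le_one (ξ : R2) : wt ξ ≤ 1 :=
  Real.rpow_le_one_of_one_le_of_nonpos (by nlinarith [sq_nonneg ‖ξ‖]) (by norm_num)

lemma wt_cont : Continuous wt := by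
  unfold wt
  refine Continuous.rpow_const (by fun_prop) (fun x => Or.inl (one_add_sq_pos x).ne')

lemma wt_eq (ξ : R2) : wt ξ = (Real.sqrt (1 + ‖ξ‖ ^ 2))⁻¹ := by
  unfold wt
  rw [Real.rpow_neg (one_add_sq_pos ξ).le, Real.sqrt_eq_rpow]

lemma wt_sq (ξ : R2) : wt ξ ^ 2 = (1 + ‖ξ‖ ^ 2)⁻¹ := by
  rw [wt_eq, inv_pow, Real.sq_sqrt (one_add_sq_pos ξ).le]

def IsTest (φ : R2 → ℂ) : Prop := ContDiff ℝ ∞ φ ∧ HasCompactSupport φ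

def Hm (F : R2 → ℂ) : Prop := Continuous F ∧ Integrable (fun ξ => wt ξ * ‖F ξ‖ ^ 2) volume

def Nw (F : R2 → ℂ) : ℝ := ∫ ξ, wt ξ * ‖F ξ‖ ^ 2

def SuppIn (F : R2 → ℂ) (K : Set R2) : Prop :=
  ∀ φ : R2 → ℂ, IsTest φ → tsupport φ ∩ K = ∅ → (∫ ξ : R2, F ξ * testFT φ ξ) = 0

/-- quickly decaying continuous functions -/
def Dec (m : R2 → ℂ) : Prop := Continuous m ∧ ∃ C : ℝ, 0 ≤ C ∧ ∀ ζ, ‖m ζ‖ ≤ C * ((1 + ‖ζ‖ ^ 2) ^ 2)⁻¹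

lemma rdot_eq_inner (x ξ : R2) : rdot x ξ = inner ℝ x ξ := by
  simp [rdot, PiLp.inner_apply, Fin.sum_univ_two, mul_comm]

lemma rdot_le (x ξ : R2) : |rdot x ξ| ≤ ‖x‖ * ‖ξ‖ := by
  rw [rdot_eq_inner]; exact abs_real_inner_le_norm x ξ

lemma norm_cexp_rdot (x ξ : R2) : ‖Complex.exp (Complex.I * (rdot x ξ : ℂ))‖ = 1 := by
  rw [mul_comm]; exact Complex.norm_exp_ofReal_mul_I _

lemma rdot_cont : Continuous (fun p : R2 × R2 => rdot p.1 p.2) := by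
  unfold rdot; fun_prop

lemma testFT_eq_fourier (φ : R2 → ℂ) (ξ : R2) : testFT φ ξ = 𝓕 φ (-((2 * π)⁻¹ • ξ)) := by
  rw [Real.fourier_eq']
  unfold testFT
  congr 1
  ext x
  rw [smul_eq_mul, rdot_eq_inner, inner_neg_right, inner_smul_right]
  congr 2
  push_cast
  field_simp

lemma fourier_eq_testFT (φ : R2 → ℂ) (y : R2) : 𝓕 φ y = testFT φ (-((2 * π) • y)) := by
  rw [testFT_eq_fourier]
  rw [smul_neg, neg_neg, smul_smul, inv_mul_cancel₀ (by positivity), one_smul]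

lemma fourierInv_eq_testFT (φ : R2 → ℂ) (y : R2) : 𝓕⁻ φ y = testFT φ ((2 * π) • y) := by
  rw [Real.fourierInv_eq_fourier_neg, fourier_eq_testFT, smul_neg, neg_neg]

lemma IsTest.integrable {φ : R2 → ℂ} (h : IsTest φ) : Integrable φ :=
  h.1.continuous.integrable_of_hasCompactSupport h.2

lemma testFT_cont_of_integrable {φ : R2 → ℂ} (h : Integrable φ) : Continuous (testFT φ) := by
  unfold testFT
  refine continuous_of_dominated (bound := fun x => ‖φ x‖) ?_ ?_ h.norm ?_
  · intro ξ
    refine AEStronglyMeasurable.mul ?_ h.1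
    have : Continuous (fun x => rdot x ξ) := rdot_cont.comp (by fun_prop : Continuous fun x : R2 => (x, ξ))
    exact Continuous.aestronglyMeasurable (by fun_prop)
  · intro ξ
    refine Filter.Eventually.of_forall fun x => ?_
    rw [norm_mul, norm_cexp_rdot, one_mul]
  · refine Filter.Eventually.of_forall fun x => ?_
    have : Continuous (fun ξ => rdot x ξ) := rdot_cont.comp (by fun_prop : Continuous fun ξ : R2 => (x, ξ))
    fun_prop

lemma testFT_cont {φ : R2 → ℂ} (h : IsTest φ) : Continuous (testFT φ) :=
  testFT_cont_of_integrable h.integrable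

lemma testFT_norm_le {φ : R2 → ℂ} (ξ : R2) : ‖testFT φ ξ‖ ≤ ∫ x, ‖φ x‖ := by
  unfold testFT
  refine (norm_integral_le_integral_norm _).trans (le_of_eq ?_)
  congr 1; ext x; rw [norm_mul, norm_cexp_rdot, one_mul]

lemma testFT_decay {φ : R2 → ℂ} (h : IsTest φ) (n : ℕ) :
    ∃ C : ℝ, 0 ≤ C ∧ ∀ ξ, ‖testFT φ ξ‖ ≤ C * ((1 + ‖ξ‖ ^ 2) ^ n)⁻¹ := by
  let f := h.2.toSchwartzMap h.1
  have key := fun x => SchwartzMap.one_add_le_sup_seminorm_apply (𝕜 := ℝ) (m := (2 * n, 0)) (k := 2 * n)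
    (n := 0) le_rfl le_rfl (𝓕 f) x
  set C0 := 2 ^ (2 * n, 0).1 * ((Finset.Iic (2 * n, 0)).sup fun m ↦ SchwartzMap.seminorm ℝ m.1 m.2) (𝓕 f)
  refine ⟨(2 * π) ^ (2 * n) * max C0 0, by positivity, fun ξ => ?_⟩
  have h1 := key (-((2 * π)⁻¹ • ξ))
  rw [norm_iteratedFDeriv_zero] at h1
  have h2 : (𝓕 f) (-((2 * π)⁻¹ • ξ)) = testFT φ ξ := by
    rw [testFT_eq_fourier]; rfl
  rw [h2, norm_neg, norm_smul, Real.norm_of_nonneg (by positivity)] at h1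
  rw [le_mul_inv_iff₀ (by positivity)]
  have h3 : (1 + ‖ξ‖ ^ 2) ^ n ≤ (2 * π) ^ (2 * n) * (1 + (2 * π)⁻¹ * ‖ξ‖) ^ (2 * n) := by
    rw [← mul_pow, pow_mul]
    have : (2 * π) * (1 + (2 * π)⁻¹ * ‖ξ‖) = 2 * π + ‖ξ‖ := by field_simp
    rw [this]
    have := Real.pi_gt_three
    gcongr
    nlinarith [norm_nonneg ξ]
  calc ‖testFT φ ξ‖ * (1 + ‖ξ‖ ^ 2) ^ n
      ≤ ‖testFT φ ξ‖ * ((2 * π) ^ (2 * n) * (1 + (2 * π)⁻¹ * ‖ξ‖) ^ (2 * n)) := by gcongr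
    _ = (2 * π) ^ (2 * n) * ((1 + (2 * π)⁻¹ * ‖ξ‖) ^ (2 * n) * ‖testFT φ ξ‖) := by ring
    _ ≤ _ := by gcongr; exact h1.trans (le_max_left _ _)

lemma testFT_dec {φ : R2 → ℂ} (h : IsTest φ) : Dec (testFT φ) := ⟨testFT_cont h, testFT_decay h 2⟩

lemma coord_le (ξ : R2) (i : Fin 2) : ‖(ξ i : ℂ)‖ ≤ ‖ξ‖ := by
  rw [Complex.norm_real]; exact PiLp.norm_apply_le ξ i

lemma testFT_coord_dec {φ : R2 → ℂ} (h : IsTest φ) (i : Fin 2) :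
    Dec (fun ξ => (ξ i : ℂ) * testFT φ ξ) := by
  refine ⟨?_, ?_⟩
  · have := testFT_cont h
    fun_prop
  · obtain ⟨C, hC, hb⟩ := testFT_decay h 3
    refine ⟨C, hC, fun ξ => ?_⟩
    rw [norm_mul]
    calc ‖(ξ i : ℂ)‖ * ‖testFT φ ξ‖ ≤ (1 + ‖ξ‖ ^ 2) * (C * ((1 + ‖ξ‖ ^ 2) ^ 3)⁻¹) := by
          gcongr
          · exact (coord_le ξ i).trans (by nlinarith [sq_nonneg (‖ξ‖ - 1), norm_nonneg ξ])
          · exact hb ξ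
      _ = C * ((1 + ‖ξ‖ ^ 2) ^ 2)⁻¹ := by
          have := (one_add_sq_pos ξ).ne'
          field_simp

lemma integrable_bracket (r : ℝ) (hr : 1 < r) : Integrable (fun ξ : R2 => (1 + ‖ξ‖ ^ 2) ^ (-r)) := by
  have := integrable_rpow_neg_one_add_norm_sq (E := R2) (μ := volume) (r := 2 * r) (by simp; linarith)
  convert this using 3
  ring

lemma integrable_bracket2 : Integrable (fun ξ : R2 => ((1 + ‖ξ‖ ^ 2) ^ 2)⁻¹) := by
  refine (integrable_bracket 2 (by norm_num)).congr (Eventually.of_forall fun ξ => ?_)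
  simp only [Real.rpow_neg (one_add_sq_pos ξ).le]
  norm_cast

lemma integrable_bracket_wt : Integrable (fun ξ : R2 => ((1 + ‖ξ‖ ^ 2) ^ 2)⁻¹ * (wt ξ)⁻¹) := by
  refine (integrable_bracket (3/2) (by norm_num)).congr (Eventually.of_forall fun ξ => ?_)
  have h := one_add_sq_pos ξ
  simp only [wt]
  generalize 1 + ‖ξ‖ ^ 2 = b at h ⊢
  rw [← Real.rpow_natCast b 2, ← Real.rpow_neg h.le, ← Real.rpow_neg h.le, ← Real.rpow_add h]
  norm_num

lemma Dec.integrable {m : R2 → ℂ} (h : Dec m) : Integrable m := by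
  obtain ⟨hc, C, hC, hb⟩ := h
  refine (integrable_bracket2.const_mul C).mono' hc.aestronglyMeasurable (Eventually.of_forall hb)

lemma Dec.wint {m : R2 → ℂ} (h : Dec m) : Integrable (fun ξ => (wt ξ)⁻¹ * ‖m ξ‖ ^ 2) := by
  obtain ⟨hc, C, hC, hb⟩ := h
  have hwc : Continuous (fun ξ => (wt ξ)⁻¹) := wt_cont.inv₀ (fun ξ => (wt_pos ξ).ne')
  refine (integrable_bracket_wt.const_mul (C ^ 2)).mono' (Continuous.aestronglyMeasurable (by fun_prop)) (Eventually.of_forall fun ξ => ?_)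
  have hw := wt_pos ξ
  rw [Real.norm_of_nonneg (by positivity)]
  have h1 : ((1 + ‖ξ‖ ^ 2) ^ 2)⁻¹ ≤ 1 := inv_le_one_of_one_le₀ (one_le_pow₀ (by nlinarith [sq_nonneg ‖ξ‖]))
  have h0 : 0 ≤ ((1 + ‖ξ‖ ^ 2) ^ 2)⁻¹ := by positivity
  calc (wt ξ)⁻¹ * ‖m ξ‖ ^ 2 ≤ (wt ξ)⁻¹ * (C * ((1 + ‖ξ‖ ^ 2) ^ 2)⁻¹) ^ 2 := by gcongr; exact hb ξ
    _ = C ^ 2 * (((1 + ‖ξ‖ ^ 2) ^ 2)⁻¹ * ((1 + ‖ξ‖ ^ 2) ^ 2)⁻¹ * (wt ξ)⁻¹) := by ring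
    _ ≤ C ^ 2 * (((1 + ‖ξ‖ ^ 2) ^ 2)⁻¹ * 1 * (wt ξ)⁻¹) := by gcongr
    _ = _ := by ring

/-- Cauchy-Schwarz -/
lemma integral_CS {α : Type*} [MeasurableSpace α] {μ : Measure α} {f g : α → ℝ}
    (hf0 : ∀ x, 0 ≤ f x) (hg0 : ∀ x, 0 ≤ g x)
    (hfm : AEStronglyMeasurable f μ) (hgm : AEStronglyMeasurable g μ)
    (hf : Integrable (fun x => f x ^ 2) μ) (hg : Integrable (fun x => g x ^ 2) μ) :
    Integrable (fun x => f x * g x) μ ∧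
    (∫ x, f x * g x ∂μ) ^ 2 ≤ (∫ x, f x ^ 2 ∂μ) * (∫ x, g x ^ 2 ∂μ) := by
  have h2f : MemLp f (ENNReal.ofReal 2) μ := by
    rw [ENNReal.ofReal_ofNat]; exact (memLp_two_iff_integrable_sq hfm).2 hf
  have h2g : MemLp g (ENNReal.ofReal 2) μ := by
    rw [ENNReal.ofReal_ofNat]; exact (memLp_two_iff_integrable_sq hgm).2 hg
  have hi : Integrable (fun x => f x * g x) μ := by
    refine (hf.add hg).mono' (hfm.mul hgm) (Eventually.of_forall fun x => ?_)
    rw [Real.norm_of_nonneg (mul_nonneg (hf0 x) (hg0 x))]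
    simp only [Pi.add_apply]
    nlinarith [sq_nonneg (f x - g x), sq_nonneg (f x), sq_nonneg (g x)]
  refine ⟨hi, ?_⟩
  have := integral_mul_le_Lp_mul_Lq_of_nonneg (μ := μ) (Real.HolderConjugate.two_two)
    (Eventually.of_forall hf0) (Eventually.of_forall hg0) h2f h2g
  simp only [Real.rpow_two] at this
  rw [← Real.sqrt_eq_rpow, ← Real.sqrt_eq_rpow] at this
  have h0 : 0 ≤ ∫ x, f x * g x ∂μ := integral_nonneg fun x => mul_nonneg (hf0 x) (hg0 x)
  calc _ ≤ (√(∫ a, f a ^ 2 ∂μ) * √(∫ a, g a ^ 2 ∂μ)) ^ 2 := by gcongr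
    _ = _ := by
      rw [mul_pow, Real.sq_sqrt (integral_nonneg fun x => sq_nonneg _),
        Real.sq_sqrt (integral_nonneg fun x => sq_nonneg _)]

lemma Nw_nonneg (F : R2 → ℂ) : 0 ≤ Nw F := integral_nonneg fun ξ => mul_nonneg (wt_pos ξ).le (sq_nonneg _)

lemma Hm.mul_dec {F m : R2 → ℂ} (hF : Hm F) (hm : Dec m) :
    Integrable (fun ξ => F ξ * m ξ) ∧
    (∫ ξ, ‖F ξ * m ξ‖) ^ 2 ≤ Nw F * ∫ ξ, (wt ξ)⁻¹ * ‖m ξ‖ ^ 2 := by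
  have hFc := hF.1
  have hmc := hm.1
  have hwc := wt_cont
  have hwp : ∀ ξ, wt ξ ≠ 0 := fun ξ => (wt_pos ξ).ne'
  have hs : ∀ ξ, √(wt ξ) ≠ 0 := fun ξ => (Real.sqrt_pos.2 (wt_pos ξ)).ne'
  have e1 : ∀ ξ, (√(wt ξ) * ‖F ξ‖) ^ 2 = wt ξ * ‖F ξ‖ ^ 2 := fun ξ => by
    rw [mul_pow, Real.sq_sqrt (wt_pos ξ).le]
  have e2 : ∀ ξ, ((√(wt ξ))⁻¹ * ‖m ξ‖) ^ 2 = (wt ξ)⁻¹ * ‖m ξ‖ ^ 2 := fun ξ => by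
    rw [mul_pow, inv_pow, Real.sq_sqrt (wt_pos ξ).le]
  have e3 : ∀ ξ, √(wt ξ) * ‖F ξ‖ * ((√(wt ξ))⁻¹ * ‖m ξ‖) = ‖F ξ * m ξ‖ := fun ξ => by
    rw [norm_mul]; field_simp [hs ξ]
  have := integral_CS (μ := (volume : Measure R2)) (f := fun ξ => √(wt ξ) * ‖F ξ‖) (g := fun ξ => (√(wt ξ))⁻¹ * ‖m ξ‖)
    (fun ξ => by positivity) (fun ξ => by positivity) (Continuous.aestronglyMeasurable (by fun_prop))
    (Continuous.aestronglyMeasurable (by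
      have : Continuous fun ξ => (√(wt ξ))⁻¹ := (Real.continuous_sqrt.comp wt_cont).inv₀ hs
      fun_prop)) (by simp only [e1]; exact hF.2) (by simp only [e2]; exact hm.wint)
  simp only [e1, e2, e3] at this
  exact ⟨(integrable_norm_iff (Continuous.aestronglyMeasurable (by fun_prop))).1 this.1, this.2⟩

end

noncomputable section
open MeasureTheory Complex Filter Topology
open scoped Real NNReal ContDiff FourierTransform

lemma IsTest.translate {j : R2 → ℂ} (hj : IsTest j) (x : R2) : IsTest (fun y => j (y - x)) := by
  refine ⟨hj.1.comp (by fun_prop), ?_⟩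
  have := hj.2.comp_homeomorph (Homeomorph.subRight x)
  exact this

lemma mem_tsupport_translate {j : R2 → ℂ} {x y : R2} (h : y ∈ tsupport (fun y => j (y - x))) :
    y - x ∈ tsupport j := 
  tsupport_comp_subset_preimage j (f := fun y => y - x) (by fun_prop) h

lemma testFT_translate (j : R2 → ℂ) (x ξ : R2) :
    testFT (fun y => j (y - x)) ξ = Complex.exp (Complex.I * (rdot x ξ : ℂ)) * testFT j ξ := by
  unfold testFT
  rw [← integral_const_mul, ← integral_add_right_eq_self _ x]
  congr 1; ext y
  beta_reduce
  rw [add_sub_cancel_right, ← mul_assoc, ← Complex.exp_add]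
  congr 2
  simp only [rdot, PiLp.add_apply]
  push_cast; ring

lemma bump_exists (θ : R2) {δ : ℝ} (hδ : 0 < δ) : ∃ φ : R2 → ℂ, IsTest φ ∧
    tsupport φ ⊆ Metric.closedBall θ δ ∧ (∫ x, φ x) = 1 ∧ (∫ x, ‖φ x‖) = 1 := by
  let b : ContDiffBump θ := ⟨δ / 2, δ, by positivity, by linarith⟩
  have hn : ∀ x, 0 ≤ b.normed volume x := fun x => b.nonneg_normed x
  refine ⟨fun x => ((b.normed volume x : ℝ) : ℂ), ⟨?_, ?_⟩, ?_, ?_, ?_⟩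
  · exact Complex.ofRealCLM.contDiff.comp b.contDiff_normed
  · exact b.hasCompactSupport_normed.comp_left (g := fun r : ℝ => (r : ℂ)) (by simp)
  · refine (closure_mono ?_).trans (b.tsupport_normed_eq (μ := volume)).le
    intro x hx hx0
    exact hx (by simp [hx0])
  · have h := integral_complex_ofReal (μ := (volume : Measure R2)) (f := fun x => b.normed volume x)
    rw [b.integral_normed] at h; simpa using h
  · simp only [Complex.norm_real, Real.norm_of_nonneg (hn _)]
    exact b.integral_normed

lemma norm_cexp_sub_one_le (x ξ : R2) :
    ‖Complex.exp (Complex.I * (rdot x ξ : ℂ)) - 1‖ ≤ ‖x‖ * ‖ξ‖ :=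
  (Real.norm_exp_I_mul_ofReal_sub_one_le).trans (rdot_le x ξ)

lemma norm_cexp_sub_le (x ξ ξ' : R2) :
    ‖Complex.exp (Complex.I * (rdot x ξ : ℂ)) - Complex.exp (Complex.I * (rdot x ξ' : ℂ))‖
      ≤ ‖x‖ * ‖ξ - ξ'‖ := by
  have : Complex.exp (Complex.I * (rdot x ξ : ℂ)) - Complex.exp (Complex.I * (rdot x ξ' : ℂ))
    = Complex.exp (Complex.I * (rdot x ξ' : ℂ)) * (Complex.exp (Complex.I * (rdot x (ξ - ξ') : ℂ)) - 1) := by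
    rw [mul_sub, ← Complex.exp_add, mul_one]
    congr 2
    simp only [rdot, PiLp.sub_apply]
    push_cast; ring
  rw [this, norm_mul, norm_cexp_rdot, one_mul]
  exact norm_cexp_sub_one_le _ _

lemma cexp_rdot_cont (ξ : R2) : Continuous (fun x => Complex.exp (Complex.I * (rdot x ξ : ℂ))) := by
  have : Continuous (fun x => rdot x ξ) := rdot_cont.comp (by fun_prop : Continuous fun x : R2 => (x, ξ))
  fun_prop

lemma cexp_mul_integrable {φ : R2 → ℂ} (h : Integrable φ) (ξ : R2) :
    Integrable (fun x => Complex.exp (Complex.I * (rdot x ξ : ℂ)) * φ x) :=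
  h.bdd_mul (c := 1) (cexp_rdot_cont ξ).aestronglyMeasurable
    (Eventually.of_forall fun x => (norm_cexp_rdot x ξ).le)

/-- Lipschitz bound for transforms of compactly supported functions -/
lemma testFT_lip {φ : R2 → ℂ} (h : Integrable φ) {r : ℝ} (hr : ∀ x, r < ‖x‖ → φ x = 0) (ξ ξ' : R2) :
    ‖testFT φ ξ - testFT φ ξ'‖ ≤ r * (∫ x, ‖φ x‖) * ‖ξ - ξ'‖ := by
  unfold testFT
  rw [← integral_sub (cexp_mul_integrable h ξ) (cexp_mul_integrable h ξ')]
  have : r * (∫ x, ‖φ x‖) * ‖ξ - ξ'‖ = ∫ x, r * ‖ξ - ξ'‖ * ‖φ x‖ := by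
    rw [integral_const_mul]; ring
  rw [this]
  refine norm_integral_le_of_norm_le (h.norm.const_mul _) (Eventually.of_forall fun x => ?_)
  rw [← sub_mul, norm_mul]
  by_cases hx : r < ‖x‖
  · simp [hr x hx]
  · gcongr
    refine (norm_cexp_sub_le _ _ _).trans ?_
    gcongr
    exact not_lt.1 hx

lemma testFT_zero (φ : R2 → ℂ) : testFT φ 0 = ∫ x, φ x := by
  simp [testFT, rdot]

lemma notsupp {φ : R2 → ℂ} {r : ℝ} (h : tsupport φ ⊆ Metric.closedBall 0 r) (x : R2) (hx : r < ‖x‖) : φ x = 0 := by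
  by_contra hne
  have := h (subset_tsupport φ hne)
  rw [mem_closedBall_zero_iff] at this
  linarith

/-- a mollifier whose transform is at least 1/2 on a ball. -/
lemma moll_exists (R : ℝ) : ∃ φ : R2 → ℂ, IsTest φ ∧ tsupport φ ⊆ Metric.closedBall 0 1 ∧
    ∀ ξ, ‖ξ‖ ≤ R → 1 / 2 ≤ ‖testFT φ ξ‖ := by
  obtain ⟨φ, h1, h2, h3, h4⟩ := bump_exists 0 (δ := 1 / (2 * (|R| + 1))) (by positivity)
  have hδ : 1 / (2 * (|R| + 1)) ≤ 1 := by
    rw [div_le_one (by positivity)]; linarith [abs_nonneg R]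
  refine ⟨φ, h1, h2.trans (Metric.closedBall_subset_closedBall hδ), fun ξ hξ => ?_⟩
  have := testFT_lip h1.integrable (notsupp h2) ξ 0
  rw [testFT_zero, h3, h4, sub_zero, mul_one] at this
  have h5 : 1 / (2 * (|R| + 1)) * ‖ξ‖ ≤ 1 / 2 := by
    rw [div_mul_eq_mul_div, one_mul, div_le_div_iff₀ (by positivity) (by positivity)]
    linarith [le_abs_self R]
  have h6 : ‖(1:ℂ)‖ - ‖1 - testFT φ ξ‖ ≤ ‖testFT φ ξ‖ := by
    have := norm_sub_norm_le (1:ℂ) (1 - testFT φ ξ)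
    simpa using this
  rw [norm_sub_rev] at h6
  simp at h6
  linarith

/-- the mollified distribution is compactly supported -/
lemma moll_supp {F j : R2 → ℂ} {K : Set R2} (hs : SuppIn F K) (hj : IsTest j)
    (x : R2) (hx : ∀ y ∈ K, y - x ∉ tsupport j) : testFT (fun ξ => F ξ * testFT j ξ) x = 0 := by
  have := hs _ (hj.translate x) (by
    rw [Set.eq_empty_iff_forall_notMem]
    rintro y ⟨h1, h2⟩
    exact hx y h2 (mem_tsupport_translate h1))
  rw [← this]
  unfold testFT
  congr 1; ext ξ
  change _ = F ξ * testFT (fun y => j (y - x)) ξ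
  rw [testFT_translate]
  unfold testFT
  rw [show rdot ξ x = rdot x ξ by unfold rdot; ring]
  ring

lemma moll_inv {F j : R2 → ℂ} {r : ℝ} (hr : 0 ≤ r) (hF : Hm F) (hs : SuppIn F (Metric.closedBall 0 r))
    (hj : IsTest j) (hj1 : tsupport j ⊆ Metric.closedBall 0 1) :
    ∃ U : R2 → ℂ, Continuous U ∧ (∀ y, r + 1 < ‖y‖ → U y = 0) ∧
      (∀ y, ‖U y‖ ≤ ∫ ξ, ‖F ξ * testFT j ξ‖) ∧ ∀ ξ, F ξ * testFT j ξ = testFT U ((2 * π) • ξ) := by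
  have hi := (hF.mul_dec (testFT_dec hj)).1
  have hpi := Real.pi_gt_three
  have hU : ∀ y, r + 1 < ‖y‖ → 𝓕 (fun ξ => F ξ * testFT j ξ) y = 0 := by
    intro y hy
    rw [fourier_eq_testFT]
    refine moll_supp hs hj _ (fun z hz hzz => ?_)
    have h1 := mem_closedBall_zero_iff.1 (hj1 hzz)
    have h2 := mem_closedBall_zero_iff.1 hz
    have h3 : ‖(2 * π) • y‖ = 2 * π * ‖y‖ := by rw [norm_smul, Real.norm_of_nonneg (by positivity)]
    have h4 : ‖(2 * π) • y‖ ≤ ‖z - -((2 * π) • y)‖ + ‖z‖ := by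
      have := norm_sub_le (z - -((2 * π) • y)) z
      simpa using this
    nlinarith
  have hc : Continuous (𝓕 (fun ξ => F ξ * testFT j ξ)) := by
    have := testFT_cont_of_integrable hi
    have h2 : 𝓕 (fun ξ => F ξ * testFT j ξ) = fun y => testFT (fun ξ => F ξ * testFT j ξ) (-((2 * π) • y)) := by
      ext y; rw [fourier_eq_testFT]
    rw [h2]
    exact this.comp (by fun_prop)
  have h_integ : Integrable (𝓕 (fun ξ => F ξ * testFT j ξ)) := by
    refine hc.integrable_of_hasCompactSupport ?_
    refine HasCompactSupport.of_support_subset_isCompact (isCompact_closedBall 0 (r + 1)) ?_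
    intro y hy
    rw [mem_closedBall_zero_iff]
    by_contra h
    exact hy (hU y (not_le.1 h))
  refine ⟨_, hc, hU, ?_, ?_⟩
  · intro y
    rw [fourier_eq_testFT]
    exact testFT_norm_le _
  · intro ξ
    rw [← fourierInv_eq_testFT, Continuous.fourierInv_fourier_eq _ hi h_integ]
    exact hF.1.mul (testFT_cont hj)

lemma norm_int_le_ball {U : R2 → ℂ} (hc : Continuous U) {ρ A : ℝ} (hs : ∀ y, ρ < ‖y‖ → U y = 0)
    (hA : ∀ y, ‖U y‖ ≤ A) : Integrable U ∧ ∫ y, ‖U y‖ ≤ A * volume.real (Metric.closedBall (0:R2) ρ) := by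
  have hcs : HasCompactSupport U := by
    refine HasCompactSupport.of_support_subset_isCompact (isCompact_closedBall 0 ρ) ?_
    intro y hy
    rw [mem_closedBall_zero_iff]
    by_contra h
    exact hy (hs y (not_le.1 h))
  have hi := hc.integrable_of_hasCompactSupport hcs (μ := volume)
  refine ⟨hi, ?_⟩
  have : ∫ y, ‖U y‖ = ∫ y in Metric.closedBall (0:R2) ρ, ‖U y‖ := by
    rw [setIntegral_eq_integral_of_forall_compl_eq_zero]
    intro y hy
    rw [mem_closedBall_zero_iff, not_le] at hy
    simp [hs y hy]
  rw [this]
  calc _ ≤ ∫ y in Metric.closedBall (0:R2) ρ, A := by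
        refine setIntegral_mono hi.norm.integrableOn ?_ hA
        exact integrableOn_const (measure_closedBall_lt_top.ne)
    _ = _ := by simp [mul_comm]

lemma rkhs_aux {r : ℝ} (hr : 0 ≤ r) (R : ℝ) : ∃ C : ℝ, 0 ≤ C ∧ ∀ F, Hm F →
    SuppIn F (Metric.closedBall 0 r) → ∀ ξ ξ' : R2, ‖ξ‖ ≤ R → ‖ξ'‖ ≤ R →
      ‖F ξ‖ ≤ C * √(Nw F) ∧ ‖F ξ - F ξ'‖ ≤ C * √(Nw F) * ‖ξ - ξ'‖ := by
  obtain ⟨j, hj, hj1, hjR⟩ := moll_exists R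
  set J := √(∫ ξ, (wt ξ)⁻¹ * ‖testFT j ξ‖ ^ 2) with hJ
  set v := volume.real (Metric.closedBall (0:R2) (r + 1)) with hv
  have hJ0 : 0 ≤ J := Real.sqrt_nonneg _
  have hv0 : 0 ≤ v := measureReal_nonneg
  set I1 := ∫ x, ‖j x‖
  have hI1 : 0 ≤ I1 := integral_nonneg fun _ => norm_nonneg _
  have hpi := Real.pi_pos
  refine ⟨2 * (J * v) + 2 * ((r + 1) * (J * v) * (2 * π) + 2 * (J * v) * I1), by positivity, fun F hF hs ξ ξ' hξ hξ' => ?_⟩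
  obtain ⟨U, hUc, hUs, hUb, hU⟩ := moll_inv hr hF hs hj hj1
  have hA : ∫ ξ, ‖F ξ * testFT j ξ‖ ≤ √(Nw F) * J := by
    rw [hJ, ← Real.sqrt_mul (Nw_nonneg F)]
    exact Real.le_sqrt_of_sq_le (hF.mul_dec (testFT_dec hj)).2
  obtain ⟨hUi, hUn⟩ := norm_int_le_ball hUc hUs (fun y => (hUb y).trans hA)
  rw [← hv] at hUn
  set n := √(Nw F)
  have hn : 0 ≤ n := Real.sqrt_nonneg _
  have hsmall : ∀ η : R2, ‖η‖ ≤ R → ‖F η‖ ≤ 2 * (n * J * v) := by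
    intro η hη
    have h1 : ‖F η * testFT j η‖ ≤ n * J * v := by
      rw [hU]; exact (testFT_norm_le _).trans hUn
    rw [norm_mul] at h1
    nlinarith [hjR η hη, norm_nonneg (F η)]
  refine ⟨(hsmall ξ hξ).trans ?_, ?_⟩
  · have : 0 ≤ 2 * ((r + 1) * (J * v) * (2 * π) + 2 * (J * v) * I1) * n := by positivity
    linarith
  · have h1 : ‖F ξ * testFT j ξ - F ξ' * testFT j ξ'‖ ≤ (r + 1) * (n * J * v) * (2 * π * ‖ξ - ξ'‖) := by
      rw [hU, hU]
      refine (testFT_lip hUi hUs _ _).trans ?_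
      rw [← smul_sub, norm_smul, Real.norm_of_nonneg (by positivity)]
      gcongr
    have h2 : ‖testFT j ξ' - testFT j ξ‖ ≤ I1 * ‖ξ - ξ'‖ := by
      have := testFT_lip hj.integrable (notsupp hj1) ξ' ξ
      rw [one_mul, norm_sub_rev ξ'] at this
      exact this
    have h3 : (F ξ - F ξ') * testFT j ξ = (F ξ * testFT j ξ - F ξ' * testFT j ξ') + F ξ' * (testFT j ξ' - testFT j ξ) := by ring
    have h4 : ‖F ξ - F ξ'‖ * ‖testFT j ξ‖ ≤ (r + 1) * (n * J * v) * (2 * π * ‖ξ - ξ'‖) + 2 * (n * J * v) * (I1 * ‖ξ - ξ'‖) := by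
      rw [← norm_mul, h3]
      refine (norm_add_le _ _).trans (add_le_add h1 ?_)
      rw [norm_mul]
      gcongr
      exact hsmall ξ' hξ'
    have h5 : ‖F ξ - F ξ'‖ ≤ 2 * ((r + 1) * (n * J * v) * (2 * π * ‖ξ - ξ'‖) + 2 * (n * J * v) * (I1 * ‖ξ - ξ'‖)) := by
      nlinarith [hjR ξ hξ, norm_nonneg (F ξ - F ξ')]
    refine h5.trans ?_
    have : 0 ≤ 2 * (J * v) * n * ‖ξ - ξ'‖ := by positivity
    linarith

lemma SuppIn.mono {F : R2 → ℂ} {K K' : Set R2} (h : SuppIn F K) (hK : K ⊆ K') : SuppIn F K' := by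
  intro φ hφ h0
  refine h φ hφ ?_
  rw [Set.eq_empty_iff_forall_notMem] at h0 ⊢
  exact fun x hx => h0 x ⟨hx.1, hK hx.2⟩

lemma rkhs {K : Set R2} (hK : Bornology.IsBounded K) (R : ℝ) : ∃ C : ℝ, 0 ≤ C ∧ ∀ F, Hm F →
    SuppIn F K → ∀ ξ ξ' : R2, ‖ξ‖ ≤ R → ‖ξ'‖ ≤ R →
      ‖F ξ‖ ≤ C * √(Nw F) ∧ ‖F ξ - F ξ'‖ ≤ C * √(Nw F) * ‖ξ - ξ'‖ := by
  obtain ⟨r, hr⟩ := hK.subset_closedBall 0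
  obtain ⟨C, hC, h⟩ := rkhs_aux (le_max_right r 0) R
  exact ⟨C, hC, fun F hF hs => h F hF (hs.mono (hr.trans (Metric.closedBall_subset_closedBall (le_max_left _ _))))⟩

lemma supp_empty_eq_zero {G : R2 → ℂ} (hG : Hm G) (hs : SuppIn G ∅) : G = 0 := by
  ext ξ
  obtain ⟨j, hj, hj1, hjR⟩ := moll_exists ‖ξ‖
  have hi := (hG.mul_dec (testFT_dec hj)).1
  have h0 : 𝓕 (fun ξ => G ξ * testFT j ξ) = 0 := by
    ext y
    rw [fourier_eq_testFT]
    exact moll_supp hs hj _ (by simp)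
  have h1 := Continuous.fourierInv_fourier_eq (f := fun ξ => G ξ * testFT j ξ) (hG.1.mul (testFT_cont hj)) hi (by
    rw [h0]; exact integrable_zero _ _ _)
  rw [h0] at h1
  have h2 := congrFun h1 ξ
  have h3 : (0:ℂ) = G ξ * testFT j ξ := by
    rw [← h2, fourierInv_eq_testFT]; simp [testFT]
  have h4 := hjR ξ le_rfl
  rcases mul_eq_zero.1 h3.symm with h | h
  · exact h
  · rw [h] at h4; norm_num at h4

lemma entire_int {U : R2 → ℂ} (hU : Integrable U) {ρ : ℝ} (hs : ∀ y, ρ < ‖y‖ → U y = 0) (η : R2) :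
    Differentiable ℂ (fun z : ℂ => ∫ y, Complex.exp (Complex.I * (z * (rdot y η : ℂ))) * U y) := by
  intro z0
  have hrc : Continuous (fun x => rdot x η) := rdot_cont.comp (by fun_prop : Continuous fun x : R2 => (x, η))
  set M := |ρ| * ‖η‖
  have hM : 0 ≤ M := by positivity
  have key := hasDerivAt_integral_of_dominated_loc_of_deriv_le (μ := (volume : Measure R2)) (𝕜 := ℂ)
    (F := fun (z : ℂ) y => Complex.exp (Complex.I * (z * (rdot y η : ℂ))) * U y)
    (F' := fun (z : ℂ) y => Complex.exp (Complex.I * (z * (rdot y η : ℂ))) * (Complex.I * (rdot y η : ℂ)) * U y)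
    (x₀ := z0) (s := Metric.ball z0 1) (bound := fun y => Real.exp ((‖z0‖ + 1) * M) * M * ‖U y‖)
    (Metric.ball_mem_nhds z0 one_pos) ?_ ?_ ?_ ?_ ?_ ?_
  · exact key.2.differentiableAt
  · refine Eventually.of_forall fun z => AEStronglyMeasurable.mul (Continuous.aestronglyMeasurable (by fun_prop)) hU.1
  · refine ((hU.norm.const_mul (Real.exp (‖z0‖ * M)))).mono' (AEStronglyMeasurable.mul (Continuous.aestronglyMeasurable (by fun_prop)) hU.1) (Eventually.of_forall fun y => ?_)
    by_cases hy : ρ < ‖y‖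
    · simp [hs y hy]
    · rw [norm_mul]
      gcongr
      refine (Complex.norm_exp_le_exp_norm _).trans ?_
      rw [norm_mul, norm_mul, Complex.norm_I, one_mul, Complex.norm_real]
      gcongr
      refine (rdot_le y η).trans ?_
      exact mul_le_mul_of_nonneg_right ((not_lt.1 hy).trans (le_abs_self _)) (norm_nonneg _)
  · exact AEStronglyMeasurable.mul (Continuous.aestronglyMeasurable (by fun_prop)) hU.1
  · refine Eventually.of_forall fun y z hz => ?_
    by_cases hy : ρ < ‖y‖
    · simp [hs y hy]
    · have hd : |rdot y η| ≤ M := (rdot_le y η).trans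
        (mul_le_mul_of_nonneg_right ((not_lt.1 hy).trans (le_abs_self _)) (norm_nonneg _))
      have hz' : ‖z‖ ≤ ‖z0‖ + 1 := by
        have := norm_le_norm_add_norm_sub' z z0
        rw [Metric.mem_ball, dist_eq_norm] at hz
        linarith
      rw [norm_mul, norm_mul]
      gcongr
      · refine (Complex.norm_exp_le_exp_norm _).trans ?_
        rw [norm_mul, norm_mul, Complex.norm_I, one_mul, Complex.norm_real]
        gcongr
        exact hd
      · rw [norm_mul, Complex.norm_I, one_mul, Complex.norm_real]
        exact hd
  · exact hU.norm.const_mul _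
  · refine Eventually.of_forall fun y z hz => ?_
    have : HasDerivAt (fun z : ℂ => Complex.I * (z * (rdot y η : ℂ))) (Complex.I * (rdot y η : ℂ)) z := by
      simpa using ((hasDerivAt_id z).mul_const (rdot y η : ℂ)).const_mul Complex.I
    exact this.cexp.mul_const _

/-- unique continuation -/
lemma unique_cont {K : Set R2} (hK : Bornology.IsBounded K) {F : R2 → ℂ} (hF : Hm F) (hs : SuppIn F K)
    {k : ℝ} (hk : 0 < k) (h0 : ∀ ξ, ‖ξ‖ < k → F ξ = 0) : F = 0 := by
  obtain ⟨r, hr⟩ := hK.subset_closedBall 0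
  have hs' := hs.mono (hr.trans (Metric.closedBall_subset_closedBall (le_max_left r 0)))
  ext ξ
  obtain ⟨j, hj, hj1, hjR⟩ := moll_exists ‖ξ‖
  obtain ⟨U, hUc, hUs, hUb, hU⟩ := moll_inv (le_max_right r 0) hF hs' hj hj1
  obtain ⟨hUi, -⟩ := norm_int_le_ball hUc hUs hUb
  have hd := entire_int hUi hUs ((2 * π) • ξ)
  set g := fun z : ℂ => ∫ y, Complex.exp (Complex.I * (z * (rdot y ((2 * π) • ξ) : ℂ))) * U y with hg
  have hgt : ∀ t : ℝ, g t = F (t • ξ) * testFT j (t • ξ) := by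
    intro t
    rw [hU, hg]
    unfold testFT
    refine integral_congr_ae (Eventually.of_forall fun y => ?_)
    beta_reduce
    congr 3
    simp only [rdot, PiLp.smul_apply, smul_eq_mul]
    push_cast; ring
  have han : AnalyticOnNhd ℂ g Set.univ := hd.differentiableOn.analyticOnNhd isOpen_univ
  have hfr : ∃ᶠ z in 𝓝[≠] (0:ℂ), g z = 0 := by
    have hev : ∀ᶠ t : ℝ in 𝓝[≠] (0:ℝ), g t = 0 := by
      have : Tendsto (fun t : ℝ => ‖t • ξ‖) (𝓝 0) (𝓝 0) := by
        have h : Continuous (fun t : ℝ => ‖t • ξ‖) := by fun_prop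
        simpa using h.tendsto 0
      filter_upwards [nhdsWithin_le_nhds (this.eventually (gt_mem_nhds hk))] with t ht
      rw [hgt, h0 _ ht, zero_mul]
    have htd : Tendsto (fun t : ℝ => (t : ℂ)) (𝓝[≠] 0) (𝓝[≠] 0) := by
      refine tendsto_nhdsWithin_of_tendsto_nhds_of_eventually_within _ ?_ ?_
      · exact (Complex.continuous_ofReal.tendsto' 0 0 (by simp)).mono_left nhdsWithin_le_nhds
      · filter_upwards [self_mem_nhdsWithin] with t ht
        simpa using ht
    exact htd.frequently hev.frequently
  have hz := han.eqOn_zero_of_preconnected_of_frequently_eq_zero isPreconnected_univ (Set.mem_univ 0) hfr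
  have h1 := hz (Set.mem_univ ((1:ℝ):ℂ))
  rw [hgt, one_smul] at h1
  have h4 := hjR ξ le_rfl
  rcases mul_eq_zero.1 h1 with h | h
  · exact h
  · rw [h] at h4; norm_num at h4

end

noncomputable section
open MeasureTheory Complex Filter Topology
open scoped Real NNReal ContDiff FourierTransform

lemma peetre (ξ η : R2) : 1 + ‖η‖ ^ 2 ≤ 2 * (1 + ‖ξ‖ ^ 2) * (1 + ‖η - ξ‖ ^ 2) := by
  have h : ‖η‖ ≤ ‖ξ‖ + ‖η - ξ‖ := norm_le_norm_add_norm_sub' η ξ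
  have h2 : ‖η‖ ^ 2 ≤ (‖ξ‖ + ‖η - ξ‖) ^ 2 := by gcongr
  nlinarith [sq_nonneg (‖ξ‖ - ‖η - ξ‖), sq_nonneg (‖ξ‖ * ‖η - ξ‖)]

lemma peetre_inv (ξ η : R2) : ((1 + ‖η - ξ‖ ^ 2) ^ 2)⁻¹ ≤ 4 * (1 + ‖ξ‖ ^ 2) ^ 2 * ((1 + ‖η‖ ^ 2) ^ 2)⁻¹ := by
  rw [inv_le_iff_one_le_mul₀ (by positivity), mul_assoc, mul_comm _ ((1 + ‖η - ξ‖ ^ 2) ^ 2), ← mul_assoc,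
    le_mul_inv_iff₀ (by positivity), one_mul]
  calc (1 + ‖η‖ ^ 2) ^ 2 ≤ (2 * (1 + ‖ξ‖ ^ 2) * (1 + ‖η - ξ‖ ^ 2)) ^ 2 := by gcongr; exact peetre ξ η
    _ = _ := by ring

lemma wt_peetre (ξ η : R2) : wt ξ ≤ 2 * wt η * (wt (η - ξ))⁻¹ := by
  rw [wt_eq, wt_eq, wt_eq, inv_inv]
  have h1 := Real.sqrt_pos.2 (one_add_sq_pos ξ)
  have h2 := Real.sqrt_pos.2 (one_add_sq_pos η)
  rw [inv_le_iff_one_le_mul₀ h1]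
  have : √(1 + ‖η‖ ^ 2) ≤ 2 * √(1 + ‖ξ‖ ^ 2) * √(1 + ‖η - ξ‖ ^ 2) := by
    rw [Real.sqrt_le_iff]
    refine ⟨by positivity, ?_⟩
    rw [mul_pow, mul_pow, Real.sq_sqrt (one_add_sq_pos _).le, Real.sq_sqrt (one_add_sq_pos _).le]
    have := peetre ξ η
    have h3 : 0 ≤ (1 + ‖ξ‖ ^ 2) * (1 + ‖η - ξ‖ ^ 2) := by positivity
    linarith
  calc 1 = √(1 + ‖η‖ ^ 2) * (√(1 + ‖η‖ ^ 2))⁻¹ := by field_simp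
    _ ≤ 2 * √(1 + ‖ξ‖ ^ 2) * √(1 + ‖η - ξ‖ ^ 2) * (√(1 + ‖η‖ ^ 2))⁻¹ := by gcongr
    _ = _ := by ring

/-- the bracket as a decaying function -/
def brk (ξ : R2) : ℂ := ((((1 + ‖ξ‖ ^ 2) ^ 2)⁻¹ : ℝ) : ℂ)

lemma brk_cont : Continuous (fun ξ : R2 => ((1 + ‖ξ‖ ^ 2) ^ 2)⁻¹) :=
  Continuous.inv₀ (by fun_prop) (fun ξ => by positivity)

lemma norm_brk (ξ : R2) : ‖brk ξ‖ = ((1 + ‖ξ‖ ^ 2) ^ 2)⁻¹ := by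
  rw [brk, Complex.norm_real, Real.norm_of_nonneg (by positivity)]

lemma brk_dec : Dec brk :=
  ⟨Complex.continuous_ofReal.comp brk_cont, 1, zero_le_one, fun ζ => by rw [norm_brk, one_mul]⟩

lemma Hm.brk_int {F : R2 → ℂ} (hF : Hm F) : Integrable (fun η => ‖F η‖ * ((1 + ‖η‖ ^ 2) ^ 2)⁻¹) := by
  have := (hF.mul_dec brk_dec).1.norm
  simpa only [norm_mul, norm_brk] using this

lemma Dec.translate {m : R2 → ℂ} (hm : Dec m) (ξ : R2) : Dec (fun η => m (η - ξ)) := by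
  obtain ⟨hc, C, hC, hb⟩ := hm
  refine ⟨hc.comp (by fun_prop), C * (4 * (1 + ‖ξ‖ ^ 2) ^ 2), by positivity, fun η => (hb _).trans ?_⟩
  rw [mul_assoc]
  gcongr
  exact peetre_inv ξ η

def cv (m F : R2 → ℂ) (ξ : R2) : ℂ := ∫ η, F η * m (η - ξ)

lemma cv_int {m F : R2 → ℂ} (hF : Hm F) (hm : Dec m) (ξ : R2) : Integrable (fun η => F η * m (η - ξ)) :=
  (hF.mul_dec (hm.translate ξ)).1

lemma cv_cont {m F : R2 → ℂ} (hF : Hm F) (hm : Dec m) : Continuous (cv m F) := by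
  obtain ⟨hc, C, hC, hb⟩ := id hm
  have hFc := hF.1
  rw [continuous_iff_continuousAt]
  intro ξ0
  refine continuousAt_of_dominated (bound := fun η => C * (4 * (1 + (‖ξ0‖ + 1) ^ 2) ^ 2) * (‖F η‖ * ((1 + ‖η‖ ^ 2) ^ 2)⁻¹)) ?_ ?_ ?_ ?_
  · exact Eventually.of_forall fun ξ => (cv_int hF hm ξ).1
  · filter_upwards [Metric.ball_mem_nhds ξ0 one_pos] with ξ hξ
    refine Eventually.of_forall fun η => ?_
    have hx : ‖ξ‖ ≤ ‖ξ0‖ + 1 := by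
      have := norm_le_norm_add_norm_sub' ξ ξ0
      rw [Metric.mem_ball, dist_eq_norm] at hξ
      linarith
    rw [norm_mul]
    calc ‖F η‖ * ‖m (η - ξ)‖ ≤ ‖F η‖ * (C * (4 * (1 + ‖ξ‖ ^ 2) ^ 2 * ((1 + ‖η‖ ^ 2) ^ 2)⁻¹)) := by
          gcongr
          refine (hb _).trans ?_
          gcongr
          exact peetre_inv ξ η
      _ ≤ ‖F η‖ * (C * (4 * (1 + (‖ξ0‖ + 1) ^ 2) ^ 2 * ((1 + ‖η‖ ^ 2) ^ 2)⁻¹)) := by gcongr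
      _ = _ := by ring
  · exact hF.brk_int.const_mul _
  · refine Eventually.of_forall fun η => ?_
    exact (continuous_const.mul (hc.comp (by fun_prop))).continuousAt

lemma cv_bound {m : R2 → ℂ} (hm : Dec m) : ∃ C : ℝ, 0 ≤ C ∧ ∀ F, Hm F →
    Hm (cv m F) ∧ Nw (cv m F) ≤ C * Nw F := by
  obtain ⟨hc, C, hC, hb⟩ := id hm
  set A := ∫ ζ, ‖m ζ‖ with hA
  have hA0 : 0 ≤ A := integral_nonneg fun _ => norm_nonneg _
  set q : R2 → ℝ := fun ζ => (wt ζ)⁻¹ * ‖m ζ‖ with hq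
  have hwi : Continuous (fun ξ => (wt ξ)⁻¹) := wt_cont.inv₀ (fun ξ => (wt_pos ξ).ne')
  have hwt : ∀ ζ : R2, 0 < wt ζ := wt_pos
  have hq0 : ∀ ζ, 0 ≤ q ζ := fun ζ => mul_nonneg (inv_nonneg.2 (wt_pos ζ).le) (norm_nonneg _)
  have hqc : Continuous q := by fun_prop
  have hqi : Integrable q := by
    refine (integrable_bracket_wt.const_mul C).mono' hqc.aestronglyMeasurable (Eventually.of_forall fun ζ => ?_)
    rw [Real.norm_of_nonneg (hq0 ζ)]
    have h := hb ζ
    have := inv_pos.2 (wt_pos ζ)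
    calc q ζ ≤ (wt ζ)⁻¹ * (C * ((1 + ‖ζ‖ ^ 2) ^ 2)⁻¹) := by simp only [hq]; gcongr
      _ = _ := by ring
  have hqb : ∀ ζ, q ζ ≤ C := by
    intro ζ
    have h := hb ζ
    have h1 : (wt ζ)⁻¹ ≤ (1 + ‖ζ‖ ^ 2) ^ 2 := by
      rw [wt_eq, inv_inv]
      have : (1:ℝ) ≤ 1 + ‖ζ‖ ^ 2 := by nlinarith [sq_nonneg ‖ζ‖]
      calc √(1 + ‖ζ‖ ^ 2) ≤ 1 + ‖ζ‖ ^ 2 := by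
            rw [Real.sqrt_le_iff]; constructor <;> nlinarith
        _ ≤ _ := by nlinarith
    calc q ζ ≤ (1 + ‖ζ‖ ^ 2) ^ 2 * (C * ((1 + ‖ζ‖ ^ 2) ^ 2)⁻¹) := by simp only [hq]; gcongr
      _ = C := by have := (one_add_sq_pos ζ).ne'; field_simp
  refine ⟨2 * A * ∫ ζ, q ζ, mul_nonneg (by positivity) (integral_nonneg hq0), fun F hF => ?_⟩
  have hFc := hF.1
  set G : R2 → ℝ := fun η => wt η * ‖F η‖ ^ 2 with hG
  have hG0 : ∀ η, 0 ≤ G η := fun η => mul_nonneg (wt_pos η).le (sq_nonneg _)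
  have hGi : Integrable G := hF.2
  have hq'i : Integrable (fun ζ => q (-ζ)) := hqi.comp_neg
  have hconv := hGi.integrable_convolution (ContinuousLinearMap.mul ℝ ℝ) hq'i
  have hconv2 := integral_convolution (μ := volume) (ν := volume) (ContinuousLinearMap.mul ℝ ℝ) hGi hq'i
  have hce : ∀ ξ, (MeasureTheory.convolution G (fun ζ => q (-ζ)) (ContinuousLinearMap.mul ℝ ℝ) volume) ξ = ∫ η, G η * q (η - ξ) := by
    intro ξ
    simp [MeasureTheory.convolution]
  have hpt : ∀ ξ, wt ξ * ‖cv m F ξ‖ ^ 2 ≤ 2 * A * ∫ η, G η * q (η - ξ) := by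
    intro ξ
    have hqs : Continuous (fun η => q (η - ξ)) := hqc.comp (by fun_prop)
    have hms : Continuous (fun η => m (η - ξ)) := hc.comp (by fun_prop)
    have hGq : Integrable (fun η => G η * q (η - ξ)) := 
      hGi.mul_bdd (c := C) hqs.aestronglyMeasurable (Eventually.of_forall fun η => by
        rw [Real.norm_of_nonneg (hq0 _)]; exact hqb _)
    have hle : ∀ η, wt ξ * (‖F η‖ ^ 2 * ‖m (η - ξ)‖) ≤ 2 * (G η * q (η - ξ)) := by
      intro η
      calc wt ξ * (‖F η‖ ^ 2 * ‖m (η - ξ)‖) ≤ (2 * wt η * (wt (η - ξ))⁻¹) * (‖F η‖ ^ 2 * ‖m (η - ξ)‖) := by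
            gcongr; exact wt_peetre ξ η
        _ = _ := by simp only [hG, hq]; ring
    have hi1 : Integrable (fun η => wt ξ * (‖F η‖ ^ 2 * ‖m (η - ξ)‖)) := by
      refine (hGq.const_mul 2).mono' (Continuous.aestronglyMeasurable (by fun_prop)) (Eventually.of_forall fun η => ?_)
      rw [Real.norm_of_nonneg (mul_nonneg (wt_pos ξ).le (by positivity))]
      exact hle η
    have hi2 : Integrable (fun η => ‖F η‖ ^ 2 * ‖m (η - ξ)‖) := by
      have := hi1.const_mul (wt ξ)⁻¹
      refine this.congr (Eventually.of_forall fun η => ?_)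
      beta_reduce
      rw [← mul_assoc, inv_mul_cancel₀ (wt_pos ξ).ne', one_mul]
    have e1 : ∀ η, (‖F η‖ * √‖m (η - ξ)‖) ^ 2 = ‖F η‖ ^ 2 * ‖m (η - ξ)‖ := fun η => by
      rw [mul_pow, Real.sq_sqrt (norm_nonneg _)]
    have e2 : ∀ η, (√‖m (η - ξ)‖) ^ 2 = ‖m (η - ξ)‖ := fun η => Real.sq_sqrt (norm_nonneg _)
    have e3 : ∀ η, ‖F η‖ * √‖m (η - ξ)‖ * √‖m (η - ξ)‖ = ‖F η * m (η - ξ)‖ := fun η => by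
      rw [mul_assoc, Real.mul_self_sqrt (norm_nonneg _), norm_mul]
    have hcs := (integral_CS (μ := (volume : Measure R2)) (f := fun η => ‖F η‖ * √‖m (η - ξ)‖) (g := fun η => √‖m (η - ξ)‖)
      (fun η => by positivity) (fun η => by positivity) (Continuous.aestronglyMeasurable (by fun_prop))
      (Continuous.aestronglyMeasurable (by fun_prop)) (by simp only [e1]; exact hi2)
      (by simp only [e2]; exact (hm.translate ξ).integrable.norm)).2
    simp only [e1, e2, e3] at hcs
    have hA2 : ∫ η, ‖m (η - ξ)‖ = A := integral_sub_right_eq_self (fun ζ => ‖m ζ‖) ξ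
    rw [hA2] at hcs
    calc wt ξ * ‖cv m F ξ‖ ^ 2 ≤ wt ξ * ((∫ η, ‖F η‖ ^ 2 * ‖m (η - ξ)‖) * A) := by
          refine mul_le_mul_of_nonneg_left (le_trans ?_ hcs) (wt_pos ξ).le
          gcongr
          exact norm_integral_le_integral_norm _
      _ = (∫ η, wt ξ * (‖F η‖ ^ 2 * ‖m (η - ξ)‖)) * A := by rw [integral_const_mul]; ring
      _ ≤ (∫ η, 2 * (G η * q (η - ξ))) * A := by
          exact mul_le_mul_of_nonneg_right (integral_mono hi1 (hGq.const_mul 2) hle) hA0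
      _ = _ := by rw [integral_const_mul]; ring
  have hcvc := cv_cont hF hm
  have hci : Integrable (fun ξ => ∫ η, G η * q (η - ξ)) := hconv.congr (Eventually.of_forall hce)
  have hwc := wt_cont
  have h_integ : Integrable (fun ξ => wt ξ * ‖cv m F ξ‖ ^ 2) := by
    refine (hci.const_mul (2 * A)).mono' (Continuous.aestronglyMeasurable (by fun_prop)) (Eventually.of_forall fun ξ => ?_)
    rw [Real.norm_of_nonneg (mul_nonneg (wt_pos ξ).le (by positivity))]
    exact hpt ξ
  refine ⟨⟨hcvc, h_integ⟩, ?_⟩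
  have hstep : Nw (cv m F) ≤ ∫ ξ, 2 * A * ∫ η, G η * q (η - ξ) := integral_mono h_integ (hci.const_mul _) hpt
  rw [integral_const_mul] at hstep
  have e4 : ∫ ξ, ∫ η, G η * q (η - ξ) = (∫ η, G η) * ∫ ζ, q ζ := by
    have h5 : ∫ ζ, q (-ζ) = ∫ ζ, q ζ := integral_neg_eq_self q volume
    rw [← h5]
    simp only [hce] at hconv2
    simpa using hconv2
  rw [e4] at hstep
  have e5 : Nw F = ∫ η, G η := rfl
  rw [e5]
  linarith

lemma testFT_inv {φ : R2 → ℂ} (h : IsTest φ) (x : R2) :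
    ((((2 * π) ^ 2)⁻¹ : ℝ) : ℂ) * (∫ ξ, Complex.exp (-(Complex.I * (rdot x ξ : ℂ))) * testFT φ ξ) = φ x := by
  have hpi := Real.pi_pos
  have hi : Integrable (𝓕 φ) := by
    have e : 𝓕 φ = fun y => testFT φ (-((2 * π) • y)) := by ext y; rw [fourier_eq_testFT]
    rw [e]
    have := ((testFT_dec h).integrable.comp_neg).comp_smul (R := 2 * π) (by positivity)
    exact this
  have h1 := congrFun (Continuous.fourier_fourierInv_eq h.1.continuous h.integrable hi) x
  rw [← h1, Real.fourier_eq']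
  have e1 : ∀ y : R2, Complex.exp ((↑(-2 * π * inner ℝ y x) * Complex.I)) • 𝓕⁻ φ y = 
     (fun ξ => Complex.exp (-(Complex.I * (rdot x ξ : ℂ))) * testFT φ ξ) ((2 * π) • y) := by
    intro y
    beta_reduce
    rw [fourierInv_eq_testFT, smul_eq_mul, rdot_eq_inner, real_inner_comm, inner_smul_right]
    congr 2
    push_cast
    simp
    ring
  rw [integral_congr_ae (Eventually.of_forall e1), Measure.integral_comp_smul volume (fun ξ => Complex.exp (-(Complex.I * (rdot x ξ : ℂ))) * testFT φ ξ) (2 * π), abs_of_nonneg (by positivity)]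
  simp

def cc : ℂ := ((((2 * π) ^ 2)⁻¹ : ℝ) : ℂ)

/-- localisation (multiplication by χ) on the Fourier side -/
def Mx (χ F : R2 → ℂ) (ξ : R2) : ℂ := cc * cv (testFT χ) F ξ

lemma IsTest.mul {χ φ : R2 → ℂ} (hχ : IsTest χ) (hφ : IsTest φ) : IsTest (fun x => χ x * φ x) :=
  ⟨hχ.1.mul hφ.1, hφ.2.mul_left⟩

lemma conv_thm {χ φ : R2 → ℂ} (hχ : IsTest χ) (hφ : IsTest φ) (η : R2) :
    cc * ∫ ξ, testFT χ (η - ξ) * testFT φ ξ = testFT (fun x => χ x * φ x) η := by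
  have hsw : ∫ ξ, testFT χ (η - ξ) * testFT φ ξ =
      ∫ x, ∫ ξ, Complex.exp (Complex.I * (rdot x (η - ξ) : ℂ)) * χ x * testFT φ ξ := by
    rw [integral_integral_swap]
    · refine integral_congr_ae (Eventually.of_forall fun ξ => ?_)
      beta_reduce
      rw [integral_mul_const]; rfl
    · have h0 : Integrable (fun p : R2 × R2 => χ p.1 * testFT φ p.2) (volume.prod volume) :=
        hχ.integrable.mul_prod (testFT_dec hφ).integrable
      have hc : Continuous (fun p : R2 × R2 => Complex.exp (Complex.I * (rdot p.1 (η - p.2) : ℂ))) := by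
        have : Continuous (fun p : R2 × R2 => rdot p.1 (η - p.2)) := rdot_cont.comp (by fun_prop : Continuous fun p : R2 × R2 => (p.1, η - p.2))
        fun_prop
      have := h0.bdd_mul (c := 1) hc.aestronglyMeasurable (Eventually.of_forall fun p => (norm_cexp_rdot _ _).le)
      refine this.congr (Eventually.of_forall fun p => ?_)
      simp only [Function.uncurry]
      ring
  rw [hsw, ← integral_const_mul]
  unfold testFT
  refine integral_congr_ae (Eventually.of_forall fun x => ?_)
  beta_reduce
  have h2 := testFT_inv hφ x
  change cc * _ = φ x at h2
  rw [← h2]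
  change cc * (∫ ξ, cexp (I * (rdot x (η - ξ) : ℂ)) * χ x * testFT φ ξ) = _
  have : ∀ ξ, cexp (I * (rdot x (η - ξ) : ℂ)) * χ x * testFT φ ξ = cexp (I * (rdot x η : ℂ)) * χ x * (cexp (-(I * (rdot x ξ : ℂ))) * testFT φ ξ) := by
    intro ξ
    have : cexp (I * (rdot x (η - ξ) : ℂ)) = cexp (I * (rdot x η : ℂ)) * cexp (-(I * (rdot x ξ : ℂ))) := by
      rw [← Complex.exp_add]
      congr 1
      simp only [rdot, PiLp.sub_apply]
      push_cast; ring
    rw [this]; ring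
  simp only [this]
  rw [integral_const_mul]
  ring

lemma Mx_pair {χ F φ : R2 → ℂ} (hF : Hm F) (hχ : IsTest χ) (hφ : IsTest φ) :
    ∫ ξ, Mx χ F ξ * testFT φ ξ = ∫ η, F η * testFT (fun x => χ x * φ x) η := by
  have hFc := hF.1
  have hχc := testFT_cont hχ
  have hφc := testFT_cont hφ
  obtain ⟨C1, hC1, hb1⟩ := testFT_decay hχ 2
  obtain ⟨C2, hC2, hb2⟩ := testFT_decay hφ 4
  have hprod : Integrable (Function.uncurry fun (ξ η : R2) => F η * testFT χ (η - ξ) * testFT φ ξ) (volume.prod volume) := by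
    have h0 := (integrable_bracket2).mul_prod hF.brk_int (μ := volume) (ν := volume)
    refine (h0.const_mul (4 * C1 * C2)).mono' (Continuous.aestronglyMeasurable ?_) (Eventually.of_forall fun p => ?_)
    · have : Continuous (fun p : R2 × R2 => testFT χ (p.2 - p.1)) := hχc.comp (by fun_prop)
      unfold Function.uncurry
      fun_prop
    · obtain ⟨ξ, η⟩ := p
      simp only [Function.uncurry, norm_mul]
      have hne := (one_add_sq_pos ξ).ne'
      calc ‖F η‖ * ‖testFT χ (η - ξ)‖ * ‖testFT φ ξ‖ ≤ 
          ‖F η‖ * (C1 * (4 * (1 + ‖ξ‖ ^ 2) ^ 2 * ((1 + ‖η‖ ^ 2) ^ 2)⁻¹)) * (C2 * ((1 + ‖ξ‖ ^ 2) ^ 4)⁻¹) := by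
            gcongr
            · refine (hb1 _).trans ?_
              gcongr
              exact peetre_inv ξ η
            · exact hb2 ξ
        _ = _ := by field_simp
  have h1 : ∫ ξ, Mx χ F ξ * testFT φ ξ = cc * ∫ ξ, ∫ η, F η * testFT χ (η - ξ) * testFT φ ξ := by
    rw [← integral_const_mul]
    refine integral_congr_ae (Eventually.of_forall fun ξ => ?_)
    simp only [Mx, cv]
    rw [integral_mul_const]
    ring
  rw [h1, integral_integral_swap hprod, ← integral_const_mul]
  refine integral_congr_ae (Eventually.of_forall fun η => ?_)
  beta_reduce
  rw [← conv_thm hχ hφ η]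
  simp only [mul_assoc]
  rw [integral_const_mul]
  ring

lemma Mx_bound {χ : R2 → ℂ} (hχ : IsTest χ) : ∃ C : ℝ, 0 ≤ C ∧ ∀ F, Hm F →
    Hm (Mx χ F) ∧ Nw (Mx χ F) ≤ C * Nw F := by
  obtain ⟨C, hC, h⟩ := cv_bound (testFT_dec hχ)
  refine ⟨‖cc‖ ^ 2 * C, by positivity, fun F hF => ?_⟩
  obtain ⟨⟨h1, h2⟩, h3⟩ := h F hF
  have e : ∀ ξ, wt ξ * ‖Mx χ F ξ‖ ^ 2 = ‖cc‖ ^ 2 * (wt ξ * ‖cv (testFT χ) F ξ‖ ^ 2) := fun ξ => by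
    simp only [Mx, norm_mul]; ring
  refine ⟨⟨continuous_const.mul h1, ?_⟩, ?_⟩
  · simp only [e]; exact h2.const_mul _
  · unfold Nw at h3 ⊢
    simp only [e]
    rw [integral_const_mul, mul_assoc]
    gcongr

lemma Mx_supp {χ F : R2 → ℂ} {K : Set R2} (hF : Hm F) (hχ : IsTest χ) (hs : SuppIn F K) :
    SuppIn (Mx χ F) (K ∩ tsupport χ) := by
  intro φ hφ h0
  rw [Mx_pair hF hχ hφ]
  refine hs _ (hχ.mul hφ) ?_
  rw [Set.eq_empty_iff_forall_notMem] at h0 ⊢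
  rintro x ⟨h1, h2⟩
  exact h0 x ⟨tsupport_mul_subset_right h1, h2, tsupport_mul_subset_left h1⟩

lemma Hm.sub {F G : R2 → ℂ} (hF : Hm F) (hG : Hm G) : Hm (fun ξ => F ξ - G ξ) := by
  have hFc := hF.1
  have hGc := hG.1
  have hw := wt_cont
  refine ⟨by fun_prop, ?_⟩
  refine ((hF.2.add hG.2).const_mul 2).mono' (Continuous.aestronglyMeasurable (by fun_prop)) (Eventually.of_forall fun ξ => ?_)
  have hw := wt_pos ξ
  rw [Real.norm_of_nonneg (by positivity)]
  have h1 : ‖F ξ - G ξ‖ ^ 2 ≤ (‖F ξ‖ + ‖G ξ‖) ^ 2 := by gcongr; exact norm_sub_le _ _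
  have h2 : ‖F ξ - G ξ‖ ^ 2 ≤ 2 * (‖F ξ‖ ^ 2 + ‖G ξ‖ ^ 2) := by nlinarith [sq_nonneg (‖F ξ‖ - ‖G ξ‖)]
  simp only [Pi.add_apply]
  nlinarith

lemma Mx_one {χ F : R2 → ℂ} {K O : Set R2} (hF : Hm F) (hχ : IsTest χ) (hs : SuppIn F K)
    (hO : IsOpen O) (hKO : K ⊆ O) (h1 : ∀ x ∈ O, χ x = 1) : Mx χ F = F := by
  obtain ⟨C, -, hM⟩ := Mx_bound hχ
  have hMF := (hM F hF).1
  have : (fun ξ => F ξ - Mx χ F ξ) = 0 := by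
    refine supp_empty_eq_zero (hF.sub hMF) (fun φ hφ _ => ?_)
    have e : ∀ ξ, (F ξ - Mx χ F ξ) * testFT φ ξ = F ξ * testFT φ ξ - Mx χ F ξ * testFT φ ξ := fun ξ => by ring
    simp only [e]
    rw [integral_sub (hF.mul_dec (testFT_dec hφ)).1 (hMF.mul_dec (testFT_dec hφ)).1, Mx_pair hF hχ hφ,
      ← integral_sub (hF.mul_dec (testFT_dec hφ)).1 (hF.mul_dec (testFT_dec (hχ.mul hφ))).1]
    have ht : IsTest (fun x => φ x - χ x * φ x) := ⟨hφ.1.sub (hχ.mul hφ).1, hφ.2.sub (hχ.mul hφ).2⟩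
    have h2 := hs _ ht (by
      rw [Set.eq_empty_iff_forall_notMem]
      rintro x ⟨hx1, hx2⟩
      refine absurd hx1 ?_
      rw [notMem_tsupport_iff_eventuallyEq]
      filter_upwards [hO.mem_nhds (hKO hx2)] with y hy
      simp [h1 y hy])
    rw [← h2]
    refine integral_congr_ae (Eventually.of_forall fun ξ => ?_)
    beta_reduce
    rw [← mul_sub]
    congr 1
    unfold testFT
    rw [← integral_sub (cexp_mul_integrable hφ.integrable ξ) (cexp_mul_integrable (hχ.mul hφ).integrable ξ)]
    congr 1; ext x; ring
  ext ξ
  have h2 := congrFun this ξ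
  simp only [Pi.zero_apply] at h2
  exact (sub_eq_zero.1 h2).symm

lemma Mx_sum {ι : Type*} (s : Finset ι) {χ : ι → R2 → ℂ} {F : R2 → ℂ} (hF : Hm F) (hχ : ∀ i, IsTest (χ i)) (ξ : R2) :
    Mx (fun x => ∑ i ∈ s, χ i x) F ξ = ∑ i ∈ s, Mx (χ i) F ξ := by
  have h1 : ∀ ζ, testFT (fun x => ∑ i ∈ s, χ i x) ζ = ∑ i ∈ s, testFT (χ i) ζ := by
    intro ζ
    unfold testFT
    simp only [Finset.mul_sum]
    exact integral_finsetSum s fun i _ => cexp_mul_integrable (hχ i).integrable ζ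
  simp only [Mx, cv, h1, ← Finset.mul_sum]
  congr 1
  simp only [Finset.mul_sum]
  exact integral_finsetSum s fun i _ => cv_int hF (testFT_dec (hχ i)) ξ

lemma Mx_dot {χ F1 F2 : R2 → ℂ} (h1 : Hm F1) (h2 : Hm F2) (hχ : IsTest χ) (ξ : R2) :
    dotFt (Mx χ F1) (Mx χ F2) ξ = Mx χ (dotFt F1 F2) ξ -
      cc * (cv (fun ζ => (ζ 0 : ℂ) * testFT χ ζ) F1 ξ + cv (fun ζ => (ζ 1 : ℂ) * testFT χ ζ) F2 ξ) := by
  have key : cv (testFT χ) (dotFt F1 F2) ξ = 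
      (ξ 0 : ℂ) * cv (testFT χ) F1 ξ + (ξ 1 : ℂ) * cv (testFT χ) F2 ξ +
      (cv (fun ζ => (ζ 0 : ℂ) * testFT χ ζ) F1 ξ + cv (fun ζ => (ζ 1 : ℂ) * testFT χ ζ) F2 ξ) := by
    unfold cv
    have i1 := (cv_int h1 (testFT_dec hχ) ξ).const_mul (ξ 0 : ℂ)
    have i2 := (cv_int h2 (testFT_dec hχ) ξ).const_mul (ξ 1 : ℂ)
    have i3 := (cv_int h1 (testFT_coord_dec hχ 0) ξ)
    have i4 := (cv_int h2 (testFT_coord_dec hχ 1) ξ)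
    have e5 := integral_add (i1.add i2) (i3.add i4)
    simp only [Pi.add_apply] at e5
    rw [integral_add i1 i2, integral_add i3 i4, integral_const_mul, integral_const_mul] at e5
    rw [← e5]
    refine integral_congr_ae (Eventually.of_forall fun η => ?_)
    simp only [dotFt, PiLp.sub_apply]
    push_cast
    ring
  change (ξ 0:ℂ) * (cc * cv (testFT χ) F1 ξ) + (ξ 1:ℂ) * (cc * cv (testFT χ) F2 ξ) = cc * cv (testFT χ) (dotFt F1 F2) ξ - _
  rw [key]; ring

end

noncomputable section
open MeasureTheory Complex Filter Topology
open scoped Real NNReal ContDiff FourierTransform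

lemma dil_supp {F q : R2 → ℂ} {K K' : Set R2} {t : ℝ} (hF : Hm F) (hs : SuppIn F K) (hq : IsTest q)
    (hK : ∀ y ∈ K, ∀ θ ∈ tsupport q, y + t • θ ∈ K') :
    SuppIn (fun ξ => F ξ * testFT q (-(t • ξ))) K' := by
  intro φ hφ h0
  have hFi := (hF.mul_dec (testFT_dec hφ)).1
  have e1 : ∀ ξ, F ξ * testFT q (-(t • ξ)) * testFT φ ξ =
      ∫ θ, (F ξ * testFT φ ξ) * (Complex.exp (Complex.I * (rdot (-(t • θ)) ξ : ℂ)) * q θ) := by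
    intro ξ
    rw [integral_const_mul]
    have : testFT q (-(t • ξ)) = ∫ θ, (Complex.exp (Complex.I * (rdot (-(t • θ)) ξ : ℂ)) * q θ) := by
      unfold testFT
      have : ∀ θ, rdot θ (-(t • ξ)) = rdot (-(t • θ)) ξ := fun θ => by simp [rdot]; ring
      simp only [this]
    rw [this]; ring
  simp only [e1]
  rw [integral_integral_swap]
  · rw [← integral_zero R2 ℂ]
    refine integral_congr_ae (Eventually.of_forall fun θ => ?_)
    beta_reduce
    by_cases hθ : θ ∈ tsupport q
    · have h2 := hs _ (hφ.translate (-(t • θ))) (by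
        rw [Set.eq_empty_iff_forall_notMem] at h0 ⊢
        rintro y ⟨h1, h2⟩
        have h3 := mem_tsupport_translate h1
        rw [sub_neg_eq_add] at h3
        exact h0 _ ⟨h3, hK y h2 θ hθ⟩)
      simp only [testFT_translate] at h2
      have e3 : ∀ ξ, (F ξ * testFT φ ξ) * (Complex.exp (Complex.I * (rdot (-(t • θ)) ξ : ℂ)) * q θ) =
         (F ξ * (Complex.exp (Complex.I * (rdot (-(t • θ)) ξ : ℂ)) * testFT φ ξ)) * q θ := fun ξ => by ring
      simp only [e3]
      rw [integral_mul_const, h2, zero_mul]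
    · simp [image_eq_zero_of_notMem_tsupport hθ]
  · have hp := hFi.mul_prod hq.integrable (μ := volume) (ν := volume)
    have hc : Continuous (fun p : R2 × R2 => Complex.exp (Complex.I * (rdot (-(t • p.2)) p.1 : ℂ))) := by
      have : Continuous (fun p : R2 × R2 => rdot (-(t • p.2)) p.1) := 
        rdot_cont.comp (by fun_prop : Continuous fun p : R2 × R2 => (-(t • p.2), p.1))
      fun_prop
    have := hp.bdd_mul (c := 1) hc.aestronglyMeasurable (Eventually.of_forall fun p => (norm_cexp_rdot _ _).le)
    refine this.congr (Eventually.of_forall fun p => ?_)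
    simp only [Function.uncurry]
    ring

def Eh (q : R2 → ℂ) (ξ : R2) : ℂ := ∫ t in (0:ℝ)..1, testFT q (-(t • ξ))

lemma Eh_aux {q : R2 → ℂ} (hq : IsTest q) : Continuous (fun p : R2 × ℝ => testFT q (-(p.2 • p.1))) :=
  (testFT_cont hq).comp (by fun_prop)

lemma Eh_cont {q : R2 → ℂ} (hq : IsTest q) : Continuous (Eh q) := by
  unfold Eh
  exact intervalIntegral.continuous_parametric_intervalIntegral_of_continuous' (Eh_aux hq) 0 1

lemma Eh_supp {F q : R2 → ℂ} {K K' : Set R2} (hF : Hm F) (hs : SuppIn F K) (hq : IsTest q)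
    (hK : ∀ y ∈ K, ∀ θ ∈ tsupport q, ∀ t ∈ Set.Icc (0:ℝ) 1, y + t • θ ∈ K') :
    SuppIn (fun ξ => Eh q ξ * F ξ) K' := by
  intro φ hφ h0
  have hFi := (hF.mul_dec (testFT_dec hφ)).1
  have e1 : ∀ ξ, Eh q ξ * F ξ * testFT φ ξ = ∫ t in Set.Ioc (0:ℝ) 1, (F ξ * testFT q (-(t • ξ))) * testFT φ ξ := by
    intro ξ
    rw [Eh, intervalIntegral.integral_of_le zero_le_one, mul_assoc, ← integral_mul_const]
    congr 1; ext t; ring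
  simp only [e1]
  rw [integral_integral_swap]
  · rw [setIntegral_congr_fun (g := fun _ => 0) measurableSet_Ioc]
    · simp
    · intro t ht
      exact dil_supp hF hs hq (fun y hy θ hθ => hK y hy θ hθ t ⟨ht.1.le, ht.2⟩) φ hφ h0
  · have hone : Integrable (fun _ : ℝ => (1:ℂ)) (volume.restrict (Set.Ioc (0:ℝ) 1)) := by
      exact integrable_const _
    have hp := hFi.mul_prod hone (μ := volume)
    have := hp.bdd_mul (c := ∫ x, ‖q x‖) (Eh_aux hq).aestronglyMeasurable (Eventually.of_forall fun p => (testFT_norm_le _))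
    refine this.congr (Eventually.of_forall fun p => ?_)
    simp only [Function.uncurry]
    ring

lemma int_sq (r : ℝ) (hr : 0 ≤ r) : ∫ t in (0:ℝ)..1, ((1 + t * r) ^ 2)⁻¹ = (1 + r)⁻¹ := by
  have h : ∀ t ∈ Set.uIcc (0:ℝ) 1, HasDerivAt (fun t : ℝ => t / (1 + t * r)) (((1 + t * r) ^ 2)⁻¹) t := by
    intro t ht
    rw [Set.uIcc_of_le zero_le_one] at ht
    have : 0 < 1 + t * r := by have := mul_nonneg ht.1 hr; linarith
    have h1 := (hasDerivAt_id t).div (((hasDerivAt_id t).mul_const r).const_add 1) this.ne'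
    refine h1.congr_deriv ?_
    simp only [id]
    field_simp
    ring
  rw [intervalIntegral.integral_eq_sub_of_hasDerivAt h]
  · simp
  · apply ContinuousOn.intervalIntegrable
    intro t ht
    rw [Set.uIcc_of_le zero_le_one] at ht
    have : 0 < 1 + t * r := by have := mul_nonneg ht.1 hr; linarith
    have h3 : (1 + t * r) ^ 2 ≠ 0 := by positivity
    exact ContinuousAt.continuousWithinAt (ContinuousAt.inv₀ (by fun_prop) h3)

lemma Eh_bound {q : R2 → ℂ} (hq : IsTest q) : ∃ C : ℝ, 0 ≤ C ∧ ∀ ξ, ‖Eh q ξ‖ ^ 2 ≤ C * (1 + ‖ξ‖ ^ 2)⁻¹ := by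
  obtain ⟨C, hC, hb⟩ := testFT_decay hq 1
  refine ⟨(2 * C) ^ 2, by positivity, fun ξ => ?_⟩
  have h1 : ‖Eh q ξ‖ ≤ 2 * C * (1 + ‖ξ‖)⁻¹ := by
    rw [← int_sq ‖ξ‖ (norm_nonneg _), ← intervalIntegral.integral_const_mul]
    refine intervalIntegral.norm_integral_le_of_norm_le zero_le_one (Eventually.of_forall fun t ht => ?_) ?_
    · refine (hb _).trans ?_
      have ht0 := ht.1
      rw [norm_neg, norm_smul, Real.norm_of_nonneg ht.1.le, pow_one]
      rw [mul_comm 2 C, mul_assoc]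
      gcongr
      rw [inv_le_iff_one_le_mul₀ (by positivity), mul_comm 2, mul_assoc, ← div_eq_inv_mul, le_div_iff₀ (by positivity)]
      nlinarith [sq_nonneg (t * ‖ξ‖ - 1)]
    · apply ContinuousOn.intervalIntegrable
      intro t ht
      rw [Set.uIcc_of_le zero_le_one] at ht
      have : 0 < 1 + t * ‖ξ‖ := by have := mul_nonneg ht.1 (norm_nonneg ξ); linarith
      have h3 : (1 + t * ‖ξ‖) ^ 2 ≠ 0 := by positivity
      exact ContinuousAt.continuousWithinAt (continuousAt_const.mul (ContinuousAt.inv₀ (by fun_prop) h3))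
  calc ‖Eh q ξ‖ ^ 2 ≤ (2 * C * (1 + ‖ξ‖)⁻¹) ^ 2 := by gcongr
    _ = (2 * C) ^ 2 * ((1 + ‖ξ‖) ^ 2)⁻¹ := by rw [mul_pow, inv_pow]
    _ ≤ _ := by
      gcongr
      nlinarith [norm_nonneg ξ]

lemma IsTest.coord {ρ : R2 → ℂ} (h : IsTest ρ) (i : Fin 2) : IsTest (fun x => (x i : ℂ) * ρ x) := by
  refine ⟨?_, h.2.mul_left⟩
  refine ContDiff.mul ?_ h.1
  have : (fun x : R2 => (x i : ℂ)) = (Complex.ofRealCLM.comp (EuclideanSpace.proj i : R2 →L[ℝ] ℝ)) := by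
    ext x; simp
  rw [this]
  exact ContinuousLinearMap.contDiff _

lemma testFT_ray_deriv {ρ : R2 → ℂ} (h : IsTest ρ) (ξ : R2) (t : ℝ) :
    HasDerivAt (fun t : ℝ => testFT ρ (-(t • ξ)))
      (-(I * ((ξ 0 : ℂ) * testFT (fun x => (x 0 : ℂ) * ρ x) (-(t • ξ)) + (ξ 1 : ℂ) * testFT (fun x => (x 1 : ℂ) * ρ x) (-(t • ξ))))) t := by
  have hc := h.1.continuous
  have h0 := h.coord 0
  have h1 := h.coord 1
  have hi : Integrable (fun x => ‖ξ‖ * (‖x‖ * ‖ρ x‖)) := by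
    apply Continuous.integrable_of_hasCompactSupport
    · fun_prop
    · exact (h.2.norm.mul_left).mul_left
  have key := hasDerivAt_integral_of_dominated_loc_of_deriv_le (μ := (volume : Measure R2)) (𝕜 := ℝ)
    (F := fun (t : ℝ) x => Complex.exp (Complex.I * (rdot x (-(t • ξ)) : ℂ)) * ρ x)
    (F' := fun (t : ℝ) x => (-(I * (rdot x ξ : ℂ))) * (Complex.exp (Complex.I * (rdot x (-(t • ξ)) : ℂ)) * ρ x))
    (bound := fun x => ‖ξ‖ * (‖x‖ * ‖ρ x‖)) (x₀ := t) (s := Set.univ) univ_mem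
    (Eventually.of_forall fun t => (cexp_mul_integrable h.integrable _).1)
    (cexp_mul_integrable h.integrable _)
    (by
      have := cexp_rdot_cont (-(t • ξ))
      have h5 : Continuous (fun x => rdot x ξ) := rdot_cont.comp (by fun_prop : Continuous fun x : R2 => (x, ξ))
      exact Continuous.aestronglyMeasurable (by fun_prop))
    (Eventually.of_forall fun x s _ => by
      rw [norm_mul, norm_neg, norm_mul, norm_mul, norm_cexp_rdot, Complex.norm_I, one_mul, one_mul, Complex.norm_real]
      calc _ ≤ (‖x‖ * ‖ξ‖) * ‖ρ x‖ := by gcongr; exact rdot_le x ξ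
        _ = _ := by ring)
    hi
    (Eventually.of_forall fun x s _ => by
      have e : ∀ s : ℝ, Complex.I * (rdot x (-(s • ξ)) : ℂ) = -(I * (rdot x ξ : ℂ)) * (s : ℂ) := fun s => by
        simp [rdot]; ring
      simp only [e]
      have h2 : HasDerivAt (fun s : ℝ => -(I * (rdot x ξ : ℂ)) * (s : ℂ)) (-(I * (rdot x ξ : ℂ))) s := by
        simpa using (Complex.ofRealCLM.hasDerivAt (x := s)).const_mul (-(I * (rdot x ξ : ℂ)))
      have h3 := (h2.cexp.mul_const (ρ x))
      exact h3.congr_deriv (by ring))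
  refine key.2.congr_deriv ?_
  symm
  simp only [testFT]
  rw [← integral_const_mul, ← integral_const_mul, ← integral_add ((cexp_mul_integrable h0.integrable _).const_mul _) ((cexp_mul_integrable h1.integrable _).const_mul _),
    ← integral_const_mul, ← integral_neg]
  refine integral_congr_ae (Eventually.of_forall fun x => ?_)
  simp only [rdot]
  push_cast
  ring

lemma Eh_ftc {ρ : R2 → ℂ} (h : IsTest ρ) (h1 : ∫ x, ρ x = 1) (ξ : R2) :
    I * ((ξ 0 : ℂ) * Eh (fun x => (x 0 : ℂ) * ρ x) ξ + (ξ 1 : ℂ) * Eh (fun x => (x 1 : ℂ) * ρ x) ξ) = 1 - testFT ρ (-ξ) := by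
  have hc0 : Continuous (fun t : ℝ => testFT (fun x => (x 0 : ℂ) * ρ x) (-(t • ξ))) := (testFT_cont (h.coord 0)).comp (by fun_prop)
  have hc1 : Continuous (fun t : ℝ => testFT (fun x => (x 1 : ℂ) * ρ x) (-(t • ξ))) := (testFT_cont (h.coord 1)).comp (by fun_prop)
  have h2 := intervalIntegral.integral_eq_sub_of_hasDerivAt (a := 0) (b := 1) (fun t _ => testFT_ray_deriv h ξ t)
    (Continuous.intervalIntegrable (by fun_prop) _ _)
  rw [intervalIntegral.integral_neg, intervalIntegral.integral_const_mul, intervalIntegral.integral_add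
    (Continuous.intervalIntegrable (by fun_prop) _ _) (Continuous.intervalIntegrable (by fun_prop) _ _),
    intervalIntegral.integral_const_mul, intervalIntegral.integral_const_mul] at h2
  simp only [one_smul, zero_smul, neg_zero, testFT_zero, h1] at h2
  unfold Eh
  linear_combination -h2

lemma mult_exists (θ0 : R2) {ε : ℝ} (hε : 0 < ε) : ∃ E0 E1 r : R2 → ℂ,
    (Continuous E0 ∧ Continuous E1 ∧ Continuous r) ∧
    (∃ C : ℝ, 0 ≤ C ∧ ∀ ξ, ‖E0 ξ‖ ^ 2 ≤ C * (1 + ‖ξ‖ ^ 2)⁻¹ ∧ ‖E1 ξ‖ ^ 2 ≤ C * (1 + ‖ξ‖ ^ 2)⁻¹ ∧ ‖r ξ‖ ^ 2 ≤ C * (1 + ‖ξ‖ ^ 2)⁻¹) ∧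
    (∀ ξ : R2, I * ((ξ 0 : ℂ) * E0 ξ + (ξ 1 : ℂ) * E1 ξ) = 1 - r ξ) ∧
    ∀ K K' : Set R2, (∀ y ∈ K, ∀ θ ∈ Metric.closedBall θ0 ε, ∀ t ∈ Set.Icc (0:ℝ) 1, y + t • θ ∈ K') →
      ∀ F, Hm F → SuppIn F K → SuppIn (fun ξ => E0 ξ * F ξ) K' ∧ SuppIn (fun ξ => E1 ξ * F ξ) K' ∧ SuppIn (fun ξ => r ξ * F ξ) K' := by
  obtain ⟨ρ, hρ, hsup, h_integ, -⟩ := bump_exists θ0 hε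
  obtain ⟨C0, hC0, hb0⟩ := Eh_bound (hρ.coord 0)
  obtain ⟨C1, hC1, hb1⟩ := Eh_bound (hρ.coord 1)
  obtain ⟨C2, hC2, hb2⟩ := testFT_decay hρ 1
  refine ⟨Eh (fun x => (x 0 : ℂ) * ρ x), Eh (fun x => (x 1 : ℂ) * ρ x), fun ξ => testFT ρ (-ξ), 
    ⟨Eh_cont (hρ.coord 0), Eh_cont (hρ.coord 1), (testFT_cont hρ).comp continuous_neg⟩, 
    ⟨C0 + C1 + C2 ^ 2, by positivity, fun ξ => ⟨(hb0 ξ).trans ?_, (hb1 ξ).trans ?_, ?_⟩⟩, Eh_ftc hρ h_integ, ?_⟩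
  · gcongr; nlinarith [sq_nonneg C2]
  · gcongr; nlinarith [sq_nonneg C2]
  · have h := hb2 (-ξ)
    rw [norm_neg, pow_one] at h
    have h3 : (1 + ‖ξ‖ ^ 2)⁻¹ ≤ 1 := inv_le_one_of_one_le₀ (by nlinarith [sq_nonneg ‖ξ‖])
    have h4 : 0 < (1 + ‖ξ‖ ^ 2)⁻¹ := inv_pos.2 (one_add_sq_pos ξ)
    calc ‖testFT ρ (-ξ)‖ ^ 2 ≤ (C2 * (1 + ‖ξ‖ ^ 2)⁻¹) ^ 2 := by gcongr
      _ = C2 ^ 2 * ((1 + ‖ξ‖ ^ 2)⁻¹ * (1 + ‖ξ‖ ^ 2)⁻¹) := by ring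
      _ ≤ (C0 + C1 + C2 ^ 2) * (1 * (1 + ‖ξ‖ ^ 2)⁻¹) := by gcongr; linarith
      _ = _ := by ring
  · intro K K' hK F hF hs
    refine ⟨Eh_supp hF hs (hρ.coord 0) fun y hy θ hθ t ht => hK y hy θ (hsup (tsupport_mul_subset_right hθ)) t ht,
      Eh_supp hF hs (hρ.coord 1) fun y hy θ hθ t ht => hK y hy θ (hsup (tsupport_mul_subset_right hθ)) t ht, ?_⟩
    have := dil_supp (t := 1) hF hs hρ fun y hy θ hθ => hK y hy θ (hsup hθ) 1 ⟨zero_le_one, le_rfl⟩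
    simp only [one_smul] at this
    simpa only [mul_comm] using this

end

noncomputable section
open MeasureTheory Complex Filter Topology
open scoped Real NNReal ContDiff FourierTransform

lemma geom_local {Γ : Set R2} (hΓ : IsLipschitzDomain Γ) (x : R2) (hx : x ∈ closure Γ) :
    ∃ r > 0, ∃ θ0 : R2, ∃ ε > 0, ∀ y ∈ closure Γ, y ∈ Metric.ball x r → ∀ θ ∈ Metric.closedBall θ0 ε,
      ∀ t ∈ Set.Icc (0:ℝ) 1, y + t • θ ∈ closure Γ := by
  obtain ⟨hO, -, -, hL⟩ := hΓ
  by_cases hxΓ : x ∈ Γ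
  · obtain ⟨ρ, hρ, hb⟩ := Metric.isOpen_iff.1 hO x hxΓ
    refine ⟨ρ / 2, by positivity, 0, ρ / 2, by positivity, fun y _ hy θ hθ t ht => subset_closure (hb ?_)⟩
    rw [Metric.mem_ball, dist_eq_norm] at hy ⊢
    rw [mem_closedBall_zero_iff] at hθ
    have h1 : ‖t • θ‖ ≤ ρ / 2 := by
      rw [norm_smul, Real.norm_of_nonneg ht.1]
      calc t * ‖θ‖ ≤ 1 * (ρ / 2) := by gcongr; exact ht.2
        _ = _ := one_mul _
    have h2 : y + t • θ - x = (y - x) + t • θ := by abel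
    rw [h2]
    linarith [norm_add_le (y - x) (t • θ)]
  · have hf : x ∈ frontier Γ := by rw [frontier, hO.interior_eq]; exact ⟨hx, hxΓ⟩
    obtain ⟨e, L, f, U, hLip, hU, hxU, hiff⟩ := hL x hf
    obtain ⟨ρ, hρ, hb⟩ := Metric.isOpen_iff.1 hU x hxU
    have hL0 : (0:ℝ) ≤ L := L.2
    set h : ℝ := ρ / 4 with hh
    have hh0 : 0 < h := by positivity
    set ε : ℝ := h / (L + 2) with hε
    have hε0 : 0 < ε := by positivity
    have hεm : ε * (L + 2) = h := by rw [hε]; field_simp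
    have hεh : ε ≤ h := by nlinarith
    set v : R2 := EuclideanSpace.single 1 1 with hv
    have hvn : ‖v‖ = 1 := by simp [hv]
    have hmain : ∀ y ∈ Γ ∩ Metric.ball x (ρ / 2), ∀ θ ∈ Metric.closedBall (h • e.symm v) ε,
        ∀ t ∈ Set.Icc (0:ℝ) 1, y + t • θ ∈ Γ := by
      rintro y ⟨hyΓ, hy⟩ θ hθ t ht
      rw [Metric.mem_ball, dist_eq_norm] at hy
      rw [Metric.mem_closedBall, dist_eq_norm] at hθ
      have hn0 : ‖h • e.symm v‖ = h := by
        rw [norm_smul, e.symm.norm_map, hvn, Real.norm_of_nonneg hh0.le, mul_one]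
      have hθn : ‖θ‖ ≤ 2 * h := by
        have := norm_le_norm_add_norm_sub' θ (h • e.symm v)
        linarith
      have hyU : y ∈ U := hb (by rw [Metric.mem_ball, dist_eq_norm]; linarith)
      have hyU2 : y + t • θ ∈ U := by
        apply hb
        rw [Metric.mem_ball, dist_eq_norm]
        have h1 : ‖t • θ‖ ≤ 2 * h := by
          rw [norm_smul, Real.norm_of_nonneg ht.1]
          calc t * ‖θ‖ ≤ 1 * (2 * h) := by gcongr; exact ht.2
            _ = _ := one_mul _
        have h2 : y + t • θ - x = (y - x) + t • θ := by abel
        rw [h2]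
        linarith [norm_add_le (y - x) (t • θ)]
      rw [hiff _ hyU2]
      rw [hiff _ hyU] at hyΓ
      set δ : R2 := e θ - h • v with hδ
      have hδn : ‖δ‖ ≤ ε := by
        have : δ = e (θ - h • e.symm v) := by simp [hδ]
        rw [this, e.norm_map]; exact hθ
      have hc0 : |δ 0| ≤ ε := (PiLp.norm_apply_le δ 0).trans hδn
      have hc1 : |δ 1| ≤ ε := (PiLp.norm_apply_le δ 1).trans hδn
      have h0 : e θ 0 = δ 0 := by simp [hδ, hv]
      have h1 : e θ 1 = δ 1 + h := by simp [hδ, hv]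
      have e0 : e (y + t • θ) 0 = e y 0 + t * δ 0 := by simp [← h0]
      have e1 : e (y + t • θ) 1 = e y 1 + t * (δ 1 + h) := by simp [← h1]
      rw [e0, e1]
      have hl := hLip.dist_le_mul (e y 0 + t * δ 0) (e y 0)
      rw [Real.dist_eq, Real.dist_eq] at hl
      have h3 : |e y 0 + t * δ 0 - e y 0| ≤ t * ε := by
        rw [add_sub_cancel_left, abs_mul, abs_of_nonneg ht.1]
        exact mul_le_mul_of_nonneg_left hc0 ht.1
      have h4 := (le_abs_self _).trans (hl.trans (mul_le_mul_of_nonneg_left h3 hL0))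
      have h5 : L * (t * ε) ≤ t * (δ 1 + h) := by
        have : L * ε ≤ δ 1 + h := by have := (abs_le.1 hc1).1; nlinarith
        calc L * (t * ε) = t * (L * ε) := by ring
          _ ≤ _ := mul_le_mul_of_nonneg_left this ht.1
      linarith
    refine ⟨ρ / 2, by positivity, h • e.symm v, ε, hε0, fun y hy hyb θ hθ t ht => ?_⟩
    have hy2 : y ∈ closure (Γ ∩ Metric.ball x (ρ / 2)) := by
      have := Metric.isOpen_ball.inter_closure (t := Γ) ⟨hyb, hy⟩
      rwa [Set.inter_comm] at this
    exact map_mem_closure (f := fun y => y + t • θ) (by fun_prop) hy2 (fun z hz => hmain z hz θ hθ t ht)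

lemma IsTest.add {χ φ : R2 → ℂ} (hχ : IsTest χ) (hφ : IsTest φ) : IsTest (fun x => χ x + φ x) :=
  ⟨hχ.1.add hφ.1, hχ.2.add hφ.2⟩

lemma IsTest.sum {ι : Type*} (s : Finset ι) {χ : ι → R2 → ℂ} (h : ∀ i, IsTest (χ i)) :
    IsTest (fun x => ∑ i ∈ s, χ i x) := by
  classical
  induction s using Finset.induction_on with
  | empty => 
    simp only [Finset.sum_empty]
    exact ⟨contDiff_const, HasCompactSupport.zero⟩
  | insert a s ha ih =>
    simp only [Finset.sum_insert ha]
    exact (h a).add ih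

lemma pou_aux {ι : Type*} (s : Finset ι) {b : ι → R2 → ℂ} (hb : ∀ i, IsTest (b i)) :
    ∃ χ : ι → R2 → ℂ, (∀ i, IsTest (χ i) ∧ tsupport (χ i) ⊆ tsupport (b i)) ∧
      ∀ x, 1 - ∑ i ∈ s, χ i x = ∏ i ∈ s, (1 - b i x) := by
  classical
  induction s using Finset.induction_on with
  | empty => exact ⟨b, fun i => ⟨hb i, subset_rfl⟩, by simp⟩
  | insert a s ha ih =>
    obtain ⟨χ, h1, h2⟩ := ih
    refine ⟨Function.update χ a (fun x => b a x - (∑ i ∈ s, χ i x) * b a x), fun i => ?_, fun x => ?_⟩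
    · by_cases hi : i = a
      · subst hi
        rw [Function.update_self]
        have ht := (IsTest.sum s (fun i => (h1 i).1)).mul (hb i)
        refine ⟨⟨(hb i).1.sub ht.1, (hb i).2.sub ht.2⟩, ?_⟩
        have : (fun x => b i x - (∑ i ∈ s, χ i x) * b i x) = fun x => (1 - (∑ i ∈ s, χ i x)) * b i x := by
          ext x; ring
        rw [this]
        exact tsupport_mul_subset_right
      · rw [Function.update_of_ne hi]; exact h1 i
    · rw [Finset.sum_insert ha, Finset.prod_insert ha, Function.update_self, ← h2 x]
      have : ∑ i ∈ s, Function.update χ a (fun x => b a x - (∑ i ∈ s, χ i x) * b a x) i x = ∑ i ∈ s, χ i x := by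
        refine Finset.sum_congr rfl fun i hi => ?_
        rw [Function.update_of_ne (ne_of_mem_of_not_mem hi ha)]
      rw [this]; ring

lemma cutoff_exists (x : R2) {r : ℝ} (hr : 0 < r) : ∃ b : R2 → ℂ, IsTest b ∧ tsupport b ⊆ Metric.ball x r ∧
    ∀ y ∈ Metric.ball x (r / 4), b y = 1 := by
  let b : ContDiffBump x := ⟨r / 4, r / 2, by positivity, by linarith⟩
  refine ⟨fun y => (b y : ℂ), ⟨Complex.ofRealCLM.contDiff.comp b.contDiff, 
    b.hasCompactSupport.comp_left (g := fun r : ℝ => (r : ℂ)) (by simp)⟩, ?_, fun y hy => ?_⟩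
  · refine ((closure_mono ?_).trans b.tsupport_eq.le).trans (Metric.closedBall_subset_ball (by change r / 2 < r; linarith))
    intro x hx hx0
    exact hx (by simp [hx0])
  · have := b.one_of_mem_closedBall (Metric.ball_subset_closedBall hy)
    simp [this]

lemma geom_pou {Γ : Set R2} (hΓ : IsLipschitzDomain Γ) :
    ∃ (ι : Type) (s : Finset ι) (χ : ι → R2 → ℂ) (θ : ι → R2) (ε : ι → ℝ),
      (∀ i, IsTest (χ i) ∧ 0 < ε i ∧ ∀ y ∈ closure Γ ∩ tsupport (χ i), ∀ θ' ∈ Metric.closedBall (θ i) (ε i),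
        ∀ t ∈ Set.Icc (0:ℝ) 1, y + t • θ' ∈ closure Γ) ∧
      ∃ O : Set R2, IsOpen O ∧ closure Γ ⊆ O ∧ ∀ x ∈ O, ∑ i ∈ s, χ i x = 1 := by
  have hK : IsCompact (closure Γ) := Metric.isCompact_of_isClosed_isBounded isClosed_closure hΓ.2.1.closure
  choose r hr θ ε hε hg using fun x : closure Γ => geom_local hΓ x.1 x.2
  choose b hb hbs hb1 using fun x : closure Γ => cutoff_exists x.1 (hr x)
  obtain ⟨s, hs⟩ := hK.elim_finite_subcover (fun x : closure Γ => Metric.ball x.1 (r x / 4)) (fun _ => Metric.isOpen_ball)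
    (fun x hx => Set.mem_iUnion.2 ⟨⟨x, hx⟩, Metric.mem_ball_self (by have := hr ⟨x, hx⟩; positivity)⟩)
  obtain ⟨χ, h1, h2⟩ := pou_aux s hb
  refine ⟨closure Γ, s, χ, θ, ε, fun i => ⟨(h1 i).1, hε i, fun y hy θ' hθ' t ht =>
    hg i y hy.1 (hbs i ((h1 i).2 hy.2)) θ' hθ' t ht⟩, _, isOpen_biUnion fun _ _ => Metric.isOpen_ball, hs, fun x hx => ?_⟩
  obtain ⟨i, hi, hxi⟩ := Set.mem_iUnion₂.1 hx
  have h3 := h2 x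
  rw [Finset.prod_eq_zero hi (by rw [hb1 i x hxi, sub_self])] at h3
  exact (sub_eq_zero.1 h3).symm

end

noncomputable section
open MeasureTheory Complex Filter Topology
open scoped Real NNReal ContDiff FourierTransform

lemma testFT_coord {φ : R2 → ℂ} (h : IsTest φ) (i : Fin 2) : ∃ ψ : R2 → ℂ, IsTest ψ ∧ tsupport ψ ⊆ tsupport φ ∧
    ∀ ξ, (ξ i : ℂ) * testFT φ ξ = testFT ψ ξ := by
  set v : R2 := EuclideanSpace.single i 1 with hv
  have hd : ContDiff ℝ ∞ (fun x => fderiv ℝ φ x v) := by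
    have := h.1.fderiv_right (m := ∞) (by simp)
    exact this.clm_apply contDiff_const
  have hts : tsupport (fun x => fderiv ℝ φ x v) ⊆ tsupport φ := by
    exact tsupport_fderiv_apply_subset ℝ v
  have hψ : IsTest (fun x => fderiv ℝ φ x v) := ⟨hd, h.2.fderiv_apply (𝕜 := ℝ) v⟩
  have hψ2 : IsTest (fun x => I * fderiv ℝ φ x v) := ⟨contDiff_const.mul hd, hψ.2.mul_left⟩
  refine ⟨_, hψ2, tsupport_mul_subset_right.trans hts, fun ξ => ?_⟩
  have hf : ∀ x, HasFDerivAt (fun x : R2 => Complex.exp (I * (rdot x ξ : ℂ))) 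
     (Complex.exp (I * (rdot x ξ : ℂ)) • (I • (Complex.ofRealCLM.comp (innerSL ℝ ξ)))) x := by
    intro x
    refine HasFDerivAt.cexp ?_
    have : (fun x : R2 => I * (rdot x ξ : ℂ)) = fun x => (I • (Complex.ofRealCLM.comp (innerSL ℝ ξ))) x := by
      ext x; simp [rdot_eq_inner, real_inner_comm]
    rw [this]
    exact ContinuousLinearMap.hasFDerivAt _
  have hfe : ∀ x, fderiv ℝ (fun x : R2 => Complex.exp (I * (rdot x ξ : ℂ))) x v = Complex.exp (I * (rdot x ξ : ℂ)) * (I * (ξ i : ℂ)) := by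
    intro x
    rw [(hf x).fderiv]
    simp [hv, EuclideanSpace.inner_single_right]
  have key := integral_mul_fderiv_eq_neg_fderiv_mul_of_integrable (𝕜 := ℂ) (μ := (volume : Measure R2))
    (f := fun x : R2 => Complex.exp (I * (rdot x ξ : ℂ))) (g := φ) (v := v)
    (by
      simp only [hfe]
      refine ((cexp_mul_integrable h.integrable ξ).const_mul (I * (ξ i : ℂ))).congr (Eventually.of_forall fun x => ?_)
      beta_reduce; ring)
    (cexp_mul_integrable hψ.integrable ξ) (cexp_mul_integrable h.integrable ξ)
    (fun x _ => (hf x).differentiableAt) (fun x _ => h.1.differentiable (by simp) x)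
  simp only [hfe] at key
  have e1 : testFT (fun x => I * fderiv ℝ φ x v) ξ = I * ∫ x, Complex.exp (I * (rdot x ξ : ℂ)) * fderiv ℝ φ x v := by
    rw [← integral_const_mul]; unfold testFT; congr 1; ext x; ring
  have e2 : ∫ x, Complex.exp (I * (rdot x ξ : ℂ)) * (I * (ξ i : ℂ)) * φ x = (I * (ξ i : ℂ)) * testFT φ ξ := by
    unfold testFT
    rw [← integral_const_mul]; congr 1; ext x; ring
  rw [e1, key, e2]
  linear_combination ((ξ i : ℂ) * testFT φ ξ) * I_sq

lemma SuppIn.coord {F : R2 → ℂ} {K : Set R2} (h : SuppIn F K) (i : Fin 2) : SuppIn (fun ξ => (ξ i : ℂ) * F ξ) K := by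
  intro φ hφ h0
  obtain ⟨ψ, hψ, hs, he⟩ := testFT_coord hφ i
  have := h ψ hψ (Set.subset_eq_empty (Set.inter_subset_inter_left _ hs) h0)
  rw [← this]
  congr 1; ext ξ; rw [← he]; ring

lemma coord_int {F φ : R2 → ℂ} (hF : Hm F) (hφ : IsTest φ) (i : Fin 2) : Integrable (fun ξ : R2 => (ξ i : ℂ) * F ξ * testFT φ ξ) := by
  refine (hF.mul_dec (testFT_coord_dec hφ i)).1.congr (Eventually.of_forall fun ξ => ?_)
  beta_reduce; ring

lemma SuppIn.dot {F G : R2 → ℂ} {K : Set R2} (h : SuppIn F K) (h' : SuppIn G K) (hF : Hm F) (hG : Hm G) :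
    SuppIn (dotFt F G) K := by
  intro φ hφ h0
  simp only [dotFt, add_mul]
  rw [integral_add (coord_int hF hφ 0) (coord_int hG hφ 1), h.coord 0 φ hφ h0, h'.coord 1 φ hφ h0, add_zero]

lemma SuppIn.add {F G : R2 → ℂ} {K : Set R2} (h : SuppIn F K) (h' : SuppIn G K) (hF : Hm F) (hG : Hm G) :
    SuppIn (F + G) K := by
  intro φ hφ h0
  simp only [Pi.add_apply, add_mul]
  rw [integral_add (hF.mul_dec (testFT_dec hφ)).1 (hG.mul_dec (testFT_dec hφ)).1, h φ hφ h0, h' φ hφ h0, add_zero]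

lemma SuppIn.smul {F : R2 → ℂ} {K : Set R2} (h : SuppIn F K) (a : ℂ) : SuppIn (a • F) K := by
  intro φ hφ h0
  simp only [Pi.smul_apply, smul_eq_mul, mul_assoc]
  rw [integral_const_mul, h φ hφ h0, mul_zero]

/-- weighted square integrability with a general weight -/
lemma wsq_add {w : R2 → ℝ} (hw : Continuous w) (hw0 : ∀ ξ, 0 ≤ w ξ) {F G : R2 → ℂ} (hF : Continuous F) (hG : Continuous G)
    (iF : Integrable (fun ξ => w ξ * ‖F ξ‖ ^ 2)) (iG : Integrable (fun ξ => w ξ * ‖G ξ‖ ^ 2)) :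
    Integrable (fun ξ => w ξ * ‖(F + G) ξ‖ ^ 2) ∧
    ∫ ξ, w ξ * ‖(F + G) ξ‖ ^ 2 ≤ 2 * ((∫ ξ, w ξ * ‖F ξ‖ ^ 2) + ∫ ξ, w ξ * ‖G ξ‖ ^ 2) := by
  have hpt : ∀ ξ, w ξ * ‖(F + G) ξ‖ ^ 2 ≤ 2 * (w ξ * ‖F ξ‖ ^ 2 + w ξ * ‖G ξ‖ ^ 2) := by
    intro ξ
    have h1 : ‖F ξ + G ξ‖ ^ 2 ≤ (‖F ξ‖ + ‖G ξ‖) ^ 2 := by gcongr; exact norm_add_le _ _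
    have h2 : ‖F ξ + G ξ‖ ^ 2 ≤ 2 * (‖F ξ‖ ^ 2 + ‖G ξ‖ ^ 2) := by nlinarith [sq_nonneg (‖F ξ‖ - ‖G ξ‖)]
    have := hw0 ξ
    simp only [Pi.add_apply]
    nlinarith
  have h_integ : Integrable (fun ξ => w ξ * ‖(F + G) ξ‖ ^ 2) := by
    refine ((iF.add iG).const_mul 2).mono' (Continuous.aestronglyMeasurable ?_) (Eventually.of_forall fun ξ => ?_)
    · have := hF.add hG
      fun_prop
    · rw [Real.norm_of_nonneg (mul_nonneg (hw0 ξ) (by positivity))]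
      exact hpt ξ
  refine ⟨h_integ, ?_⟩
  rw [← integral_add iF iG, ← integral_const_mul]
  exact integral_mono h_integ ((iF.add iG).const_mul 2) hpt

lemma Hm.add {F G : R2 → ℂ} (hF : Hm F) (hG : Hm G) : Hm (F + G) :=
  ⟨hF.1.add hG.1, (wsq_add wt_cont (fun ξ => (wt_pos ξ).le) hF.1 hG.1 hF.2 hG.2).1⟩

lemma Nw_add {F G : R2 → ℂ} (hF : Hm F) (hG : Hm G) : Nw (F + G) ≤ 2 * (Nw F + Nw G) :=
  (wsq_add wt_cont (fun ξ => (wt_pos ξ).le) hF.1 hG.1 hF.2 hG.2).2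

lemma wsq_smul (w : R2 → ℝ) (F : R2 → ℂ) (a : ℂ) (ξ : R2) : w ξ * ‖(a • F) ξ‖ ^ 2 = ‖a‖ ^ 2 * (w ξ * ‖F ξ‖ ^ 2) := by
  simp only [Pi.smul_apply, smul_eq_mul, norm_mul]; ring

lemma Hm.smul {F : R2 → ℂ} (hF : Hm F) (a : ℂ) : Hm (a • F) := by
  refine ⟨hF.1.const_smul a, ?_⟩
  simp only [wsq_smul]
  exact hF.2.const_mul _

lemma Nw_smul (F : R2 → ℂ) (a : ℂ) : Nw (a • F) = ‖a‖ ^ 2 * Nw F := by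
  unfold Nw
  simp only [wsq_smul, integral_const_mul]

lemma Hm.zero : Hm (0 : R2 → ℂ) := ⟨continuous_const, by simp⟩

lemma dotFt_add (F1 F2 G1 G2 : R2 → ℂ) : dotFt (F1 + G1) (F2 + G2) = dotFt F1 F2 + dotFt G1 G2 := by
  ext ξ; simp only [dotFt, Pi.add_apply]; ring

lemma dotFt_smul (a : ℂ) (F1 F2 : R2 → ℂ) : dotFt (a • F1) (a • F2) = a • dotFt F1 F2 := by
  ext ξ; simp only [dotFt, Pi.smul_apply, smul_eq_mul]; ring

/-- The Fourier-side space X as a submodule. -/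
def XS (Γ : Set R2) : Submodule ℂ ((R2 → ℂ) × (R2 → ℂ)) where
  carrier := {F | Hm F.1 ∧ Hm F.2 ∧ Hm (dotFt F.1 F.2) ∧ SuppIn F.1 (closure Γ) ∧ SuppIn F.2 (closure Γ)}
  add_mem' := by
    rintro F G ⟨a1, a2, a3, a4, a5⟩ ⟨b1, b2, b3, b4, b5⟩
    refine ⟨a1.add b1, a2.add b2, ?_, a4.add b4 a1 b1, a5.add b5 a2 b2⟩
    simp only [Prod.fst_add, Prod.snd_add, dotFt_add]
    exact a3.add b3
  zero_mem' := by
    refine ⟨Hm.zero, Hm.zero, ?_, ?_, ?_⟩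
    · have : dotFt (0 : (R2 → ℂ) × (R2 → ℂ)).1 (0 : (R2 → ℂ) × (R2 → ℂ)).2 = 0 := by ext ξ; simp [dotFt]
      rw [this]; exact Hm.zero
    · intro φ _ _; simp
    · intro φ _ _; simp
  smul_mem' := by
    rintro a F ⟨a1, a2, a3, a4, a5⟩
    refine ⟨a1.smul a, a2.smul a, ?_, a4.smul a, a5.smul a⟩
    simp only [Prod.smul_fst, Prod.smul_snd, dotFt_smul]
    exact a3.smul a

def NX {Γ : Set R2} (F : XS Γ) : ℝ := Nw F.1.1 + Nw F.1.2 + Nw (dotFt F.1.1 F.1.2)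

lemma Mx_add {χ F G : R2 → ℂ} (hF : Hm F) (hG : Hm G) (hχ : IsTest χ) (ξ : R2) : Mx χ (F + G) ξ = Mx χ F ξ + Mx χ G ξ := by
  simp only [Mx, cv, Pi.add_apply, add_mul]
  rw [integral_add (cv_int hF (testFT_dec hχ) ξ) (cv_int hG (testFT_dec hχ) ξ)]
  ring

lemma Mx_smul {χ F : R2 → ℂ} (a : ℂ) (ξ : R2) : Mx χ (a • F) ξ = a * Mx χ F ξ := by
  simp only [Mx, cv, Pi.smul_apply, smul_eq_mul, mul_assoc]
  rw [integral_const_mul]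
  ring

lemma Mdot_bound {χ : R2 → ℂ} (hχ : IsTest χ) (Γ : Set R2) : ∃ C : ℝ, 0 ≤ C ∧ ∀ F : XS Γ,
    Hm (dotFt (Mx χ F.1.1) (Mx χ F.1.2)) ∧ Nw (dotFt (Mx χ F.1.1) (Mx χ F.1.2)) ≤ C * NX F := by
  obtain ⟨C, hC, h⟩ := Mx_bound hχ
  obtain ⟨C0, hC0, h0⟩ := cv_bound (testFT_coord_dec hχ 0)
  obtain ⟨C1, hC1, h1⟩ := cv_bound (testFT_coord_dec hχ 1)
  set a := ‖-cc‖ ^ 2 with ha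
  refine ⟨2 * C + 4 * a * (C0 + C1), by positivity, fun F => ?_⟩
  obtain ⟨a1, a2, a3, -, -⟩ := F.2
  have e : dotFt (Mx χ F.1.1) (Mx χ F.1.2) = Mx χ (dotFt F.1.1 F.1.2) +
      ((-cc) • (cv (fun ζ : R2 => (ζ 0 : ℂ) * testFT χ ζ) F.1.1 + cv (fun ζ : R2 => (ζ 1 : ℂ) * testFT χ ζ) F.1.2)) := by
    ext ξ
    rw [Mx_dot a1 a2 hχ]
    simp only [Pi.add_apply, Pi.smul_apply, smul_eq_mul]
    ring
  obtain ⟨u1, v1⟩ := h _ a3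
  obtain ⟨u2, v2⟩ := h0 _ a1
  obtain ⟨u3, v3⟩ := h1 _ a2
  have u4 := (u2.add u3).smul (-cc)
  rw [e]
  refine ⟨u1.add u4, (Nw_add u1 u4).trans ?_⟩
  rw [Nw_smul]
  have v4 := Nw_add u2 u3
  have n1 := Nw_nonneg F.1.1
  have n2 := Nw_nonneg F.1.2
  have n3 := Nw_nonneg (dotFt F.1.1 F.1.2)
  have ha0 : 0 ≤ a := by positivity
  have v5 : a * Nw (cv (fun ζ : R2 => (ζ 0 : ℂ) * testFT χ ζ) F.1.1 + cv (fun ζ : R2 => (ζ 1 : ℂ) * testFT χ ζ) F.1.2) ≤ 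
      a * (2 * (C0 * NX F + C1 * NX F)) := by
    refine mul_le_mul_of_nonneg_left (v4.trans ?_) ha0
    have : C0 * Nw F.1.1 ≤ C0 * NX F := by gcongr; unfold NX; linarith
    have : C1 * Nw F.1.2 ≤ C1 * NX F := by gcongr; unfold NX; linarith
    linarith
  have : C * Nw (dotFt F.1.1 F.1.2) ≤ C * NX F := by gcongr; unfold NX; linarith
  nlinarith

/-- A good (smoothing, support preserving) operator. -/
def Good (Γ : Set R2) (T : XS Γ →ₗ[ℂ] (R2 → ℂ)) : Prop :=
  ∃ C : ℝ, 0 ≤ C ∧ ∀ F, Continuous (T F) ∧ SuppIn (T F) (closure Γ) ∧ Integrable (fun ξ => (wt ξ)⁻¹ * ‖T F ξ‖ ^ 2) ∧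
    ∫ ξ, (wt ξ)⁻¹ * ‖T F ξ‖ ^ 2 ≤ C * NX F

lemma wti_cont : Continuous (fun ξ : R2 => (wt ξ)⁻¹) := wt_cont.inv₀ (fun ξ => (wt_pos ξ).ne')
lemma wti_pos (ξ : R2) : 0 < (wt ξ)⁻¹ := inv_pos.2 (wt_pos ξ)

lemma hm_of_good {F : R2 → ℂ} (hc : Continuous F) (hi : Integrable (fun ξ => (wt ξ)⁻¹ * ‖F ξ‖ ^ 2)) : Hm F := by
  have := wt_cont
  refine ⟨hc, hi.mono' (Continuous.aestronglyMeasurable (by fun_prop)) (Eventually.of_forall fun ξ => ?_)⟩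
  have := wt_pos ξ
  rw [Real.norm_of_nonneg (by positivity)]
  gcongr
  exact (wt_le_one ξ).trans ((one_le_inv₀ this).2 (wt_le_one ξ))

lemma Good.add {Γ : Set R2} {T T' : XS Γ →ₗ[ℂ] (R2 → ℂ)} (h : Good Γ T) (h' : Good Γ T') : Good Γ (T + T') := by
  obtain ⟨C, hC, h⟩ := h
  obtain ⟨C', hC', h'⟩ := h'
  refine ⟨2 * (C + C'), by positivity, fun F => ?_⟩
  obtain ⟨a1, a2, a3, a4⟩ := h F
  obtain ⟨b1, b2, b3, b4⟩ := h' F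
  obtain ⟨c1, c2⟩ := wsq_add wti_cont (fun ξ => (wti_pos ξ).le) a1 b1 a3 b3
  refine ⟨a1.add b1, a2.add b2 (hm_of_good a1 a3) (hm_of_good b1 b3), c1, c2.trans ?_⟩
  linarith

lemma Good.zero (Γ : Set R2) : Good Γ 0 :=
  ⟨0, le_rfl, fun F => ⟨continuous_const, fun φ _ _ => by simp, by simp, by simp⟩⟩

lemma mult_wsq {E G : R2 → ℂ} {C : ℝ} (hE : Continuous E) (hb : ∀ ξ, ‖E ξ‖ ^ 2 ≤ C * (1 + ‖ξ‖ ^ 2)⁻¹) (hG : Hm G) :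
    Integrable (fun ξ => (wt ξ)⁻¹ * ‖E ξ * G ξ‖ ^ 2) ∧ ∫ ξ, (wt ξ)⁻¹ * ‖E ξ * G ξ‖ ^ 2 ≤ C * Nw G := by
  have hpt : ∀ ξ, (wt ξ)⁻¹ * ‖E ξ * G ξ‖ ^ 2 ≤ C * (wt ξ * ‖G ξ‖ ^ 2) := by
    intro ξ
    have h := wt_pos ξ
    have h2 := hb ξ
    rw [← wt_sq] at h2
    calc (wt ξ)⁻¹ * ‖E ξ * G ξ‖ ^ 2 = (wt ξ)⁻¹ * (‖E ξ‖ ^ 2 * ‖G ξ‖ ^ 2) := by rw [norm_mul, mul_pow]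
      _ ≤ (wt ξ)⁻¹ * ((C * wt ξ ^ 2) * ‖G ξ‖ ^ 2) := by gcongr
      _ = _ := by field_simp
  have hGc := hG.1
  have := wti_cont
  have hi : Integrable (fun ξ => (wt ξ)⁻¹ * ‖E ξ * G ξ‖ ^ 2) := by
    refine (hG.2.const_mul C).mono' (Continuous.aestronglyMeasurable (by fun_prop)) (Eventually.of_forall fun ξ => ?_)
    have := wt_pos ξ
    rw [Real.norm_of_nonneg (by positivity)]
    exact hpt ξ
  refine ⟨hi, ?_⟩
  unfold Nw
  rw [← integral_const_mul]
  exact integral_mono hi (hG.2.const_mul C) hpt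

/-- piece operator: dot part -/
def Tdot {Γ : Set R2} (χ E : R2 → ℂ) (hχ : IsTest χ) : XS Γ →ₗ[ℂ] (R2 → ℂ) where
  toFun F := fun ξ => E ξ * (I * dotFt (Mx χ F.1.1) (Mx χ F.1.2) ξ)
  map_add' F G := by
    ext ξ
    have h1 := Mx_add F.2.1 G.2.1 hχ ξ
    have h2 := Mx_add F.2.2.1 G.2.2.1 hχ ξ
    simp only [dotFt, Submodule.coe_add, Prod.fst_add, Prod.snd_add, Pi.add_apply, h1, h2]
    ring
  map_smul' a F := by
    ext ξ
    simp only [dotFt, Submodule.coe_smul, Prod.smul_fst, Prod.smul_snd, Pi.smul_apply, Mx_smul, RingHom.id_apply, smul_eq_mul]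
    ring

def T1 {Γ : Set R2} (χ E : R2 → ℂ) (hχ : IsTest χ) : XS Γ →ₗ[ℂ] (R2 → ℂ) where
  toFun F := fun ξ => E ξ * Mx χ F.1.1 ξ
  map_add' F G := by
    ext ξ
    have h1 := Mx_add F.2.1 G.2.1 hχ ξ
    simp only [Submodule.coe_add, Prod.fst_add, Pi.add_apply, h1]
    ring
  map_smul' a F := by
    ext ξ
    simp only [Submodule.coe_smul, Prod.smul_fst, Pi.smul_apply, Mx_smul, RingHom.id_apply, smul_eq_mul]
    ring

def T2 {Γ : Set R2} (χ E : R2 → ℂ) (hχ : IsTest χ) : XS Γ →ₗ[ℂ] (R2 → ℂ) where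
  toFun F := fun ξ => E ξ * Mx χ F.1.2 ξ
  map_add' F G := by
    ext ξ
    have h1 := Mx_add F.2.2.1 G.2.2.1 hχ ξ
    simp only [Submodule.coe_add, Prod.snd_add, Pi.add_apply, h1]
    ring
  map_smul' a F := by
    ext ξ
    simp only [Submodule.coe_smul, Prod.smul_snd, Pi.smul_apply, Mx_smul, RingHom.id_apply, smul_eq_mul]
    ring

lemma Tdot_good {Γ : Set R2} {χ E : R2 → ℂ} (hχ : IsTest χ) {C : ℝ} (hC : 0 ≤ C) (hE : Continuous E)
    (hb : ∀ ξ, ‖E ξ‖ ^ 2 ≤ C * (1 + ‖ξ‖ ^ 2)⁻¹)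
    (hs : ∀ F, Hm F → SuppIn F (closure Γ ∩ tsupport χ) → SuppIn (fun ξ => E ξ * F ξ) (closure Γ)) :
    Good Γ (Tdot χ E hχ) := by
  obtain ⟨C1, hC1, h1⟩ := Mdot_bound hχ Γ
  obtain ⟨C2, hC2, h2⟩ := Mx_bound hχ
  refine ⟨C * C1, by positivity, fun F => ?_⟩
  obtain ⟨a1, a2, a3, a4, a5⟩ := F.2
  obtain ⟨u1, v1⟩ := h1 F
  have hH : Hm (fun ξ => I * dotFt (Mx χ F.1.1) (Mx χ F.1.2) ξ) := u1.smul I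
  have hN : Nw (fun ξ => I * dotFt (Mx χ F.1.1) (Mx χ F.1.2) ξ) = Nw (dotFt (Mx χ F.1.1) (Mx χ F.1.2)) := by
    have := Nw_smul (dotFt (Mx χ F.1.1) (Mx χ F.1.2)) I
    rw [Complex.norm_I, one_pow, one_mul] at this
    exact this
  obtain ⟨b1, b2⟩ := mult_wsq hE hb hH
  refine ⟨hE.mul hH.1, hs _ hH ?_, b1, b2.trans ?_⟩
  · exact ((Mx_supp a1 hχ a4).dot (Mx_supp a2 hχ a5) (h2 _ a1).1 (h2 _ a2).1).smul I
  · rw [hN, mul_assoc]; gcongr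

lemma T1_good {Γ : Set R2} {χ E : R2 → ℂ} (hχ : IsTest χ) {C : ℝ} (hC : 0 ≤ C) (hE : Continuous E)
    (hb : ∀ ξ, ‖E ξ‖ ^ 2 ≤ C * (1 + ‖ξ‖ ^ 2)⁻¹)
    (hs : ∀ F, Hm F → SuppIn F (closure Γ ∩ tsupport χ) → SuppIn (fun ξ => E ξ * F ξ) (closure Γ)) :
    Good Γ (T1 χ E hχ) ∧ Good Γ (T2 χ E hχ) := by
  obtain ⟨C2, hC2, h2⟩ := Mx_bound hχ
  constructor <;> refine ⟨C * C2, by positivity, fun F => ?_⟩ <;>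
  obtain ⟨a1, a2, a3, a4, a5⟩ := F.2
  · obtain ⟨u1, v1⟩ := h2 _ a1
    obtain ⟨b1, b2⟩ := mult_wsq hE hb u1
    refine ⟨hE.mul u1.1, hs _ u1 (Mx_supp a1 hχ a4), b1, b2.trans ?_⟩
    rw [mul_assoc]
    gcongr
    refine v1.trans ?_
    gcongr
    unfold NX
    linarith [Nw_nonneg F.1.2, Nw_nonneg (dotFt F.1.1 F.1.2)]
  · obtain ⟨u1, v1⟩ := h2 _ a2
    obtain ⟨b1, b2⟩ := mult_wsq hE hb u1
    refine ⟨hE.mul u1.1, hs _ u1 (Mx_supp a2 hχ a5), b1, b2.trans ?_⟩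
    rw [mul_assoc]
    gcongr
    refine v1.trans ?_
    gcongr
    unfold NX
    linarith [Nw_nonneg F.1.1, Nw_nonneg (dotFt F.1.1 F.1.2)]

lemma Good.sum {Γ : Set R2} {ι : Type*} (s : Finset ι) {T : ι → XS Γ →ₗ[ℂ] (R2 → ℂ)} (h : ∀ i, Good Γ (T i)) :
    Good Γ (∑ i ∈ s, T i) :=
  Finset.sum_induction T (Good Γ) (fun _ _ => Good.add) (Good.zero Γ) (fun i _ => h i)

lemma S_exists {Γ : Set R2} (hΓ : IsLipschitzDomain Γ) : ∃ (S : XS Γ →ₗ[ℂ] XS Γ) (C : ℝ), 0 ≤ C ∧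
    ∀ F : XS Γ, dotFt (S F).1.1 (S F).1.2 = dotFt F.1.1 F.1.2 ∧
      Integrable (fun ξ => (wt ξ)⁻¹ * (‖(S F).1.1 ξ‖ ^ 2 + ‖(S F).1.2 ξ‖ ^ 2)) ∧
      ∫ ξ, (wt ξ)⁻¹ * (‖(S F).1.1 ξ‖ ^ 2 + ‖(S F).1.2 ξ‖ ^ 2) ≤ C * NX F := by
  obtain ⟨ι, s, χ, θ, ε, hχ, O, hO, hKO, hone⟩ := geom_pou hΓ
  choose E0 E1 r hc hb hd hs using fun i => mult_exists (θ i) (hχ i).2.1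
  choose C hC hb using hb
  have hs' := fun i => hs i _ _ (hχ i).2.2
  let A0 : XS Γ →ₗ[ℂ] (R2 → ℂ) := ∑ i ∈ s, (Tdot (χ i) (E0 i) (hχ i).1 + T1 (χ i) (r i) (hχ i).1)
  let A1 : XS Γ →ₗ[ℂ] (R2 → ℂ) := ∑ i ∈ s, (Tdot (χ i) (E1 i) (hχ i).1 + T2 (χ i) (r i) (hχ i).1)
  have hA0 : Good Γ A0 := Good.sum s fun i => 
    (Tdot_good (hχ i).1 (hC i) (hc i).1 (fun ξ => (hb i ξ).1) fun F hF hsF => (hs' i F hF hsF).1).add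
    (T1_good (hχ i).1 (hC i) (hc i).2.2 (fun ξ => (hb i ξ).2.2) fun F hF hsF => (hs' i F hF hsF).2.2).1
  have hA1 : Good Γ A1 := Good.sum s fun i => 
    (Tdot_good (hχ i).1 (hC i) (hc i).2.1 (fun ξ => (hb i ξ).2.1) fun F hF hsF => (hs' i F hF hsF).2.1).add
    (T1_good (hχ i).1 (hC i) (hc i).2.2 (fun ξ => (hb i ξ).2.2) fun F hF hsF => (hs' i F hF hsF).2.2).2
  have hdot : ∀ F, dotFt (A0 F) (A1 F) = dotFt F.1.1 F.1.2 := by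
    intro F
    obtain ⟨a1, a2, a3, a4, a5⟩ := F.2
    have m1 := Mx_one a1 (IsTest.sum s fun i => (hχ i).1) a4 hO hKO hone
    have m2 := Mx_one a2 (IsTest.sum s fun i => (hχ i).1) a5 hO hKO hone
    ext ξ
    have n1 := Mx_sum s a1 (fun i => (hχ i).1) ξ
    have n2 := Mx_sum s a2 (fun i => (hχ i).1) ξ
    rw [m1] at n1
    rw [m2] at n2
    simp only [dotFt, n1, n2, A0, A1, LinearMap.sum_apply, Finset.sum_apply, Finset.mul_sum, ← Finset.sum_add_distrib,
      LinearMap.add_apply, Pi.add_apply]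
    refine Finset.sum_congr rfl fun i _ => ?_
    simp only [Tdot, T1, T2, LinearMap.coe_mk, AddHom.coe_mk, dotFt]
    have := hd i ξ
    linear_combination ((ξ 0 : ℂ) * Mx (χ i) F.1.1 ξ + (ξ 1 : ℂ) * Mx (χ i) F.1.2 ξ) * this
  obtain ⟨C0, hC0, g0⟩ := hA0
  obtain ⟨C1, hC1, g1⟩ := hA1
  have hmem : ∀ F, (A0.prod A1) F ∈ XS Γ := by
    intro F
    obtain ⟨u1, u2, u3, u4⟩ := g0 F
    obtain ⟨v1, v2, v3, v4⟩ := g1 F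
    refine ⟨hm_of_good u1 u3, hm_of_good v1 v3, ?_, u2, v2⟩
    change Hm (dotFt (A0 F) (A1 F))
    rw [hdot]
    exact F.2.2.2.1
  refine ⟨(A0.prod A1).codRestrict (XS Γ) hmem, C0 + C1, by positivity, fun F => ⟨hdot F, ?_⟩⟩
  obtain ⟨u1, u2, u3, u4⟩ := g0 F
  obtain ⟨v1, v2, v3, v4⟩ := g1 F
  simp only [mul_add]
  refine ⟨u3.add v3, ?_⟩
  change ∫ ξ, ((wt ξ)⁻¹ * ‖A0 F ξ‖ ^ 2 + (wt ξ)⁻¹ * ‖A1 F ξ‖ ^ 2) ≤ _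
  rw [integral_add u3 v3]
  linarith

end

noncomputable section
open MeasureTheory Complex Filter Topology
open scoped Real NNReal ContDiff FourierTransform

def ip (F G : R2 → ℂ) : ℂ := ∫ ξ, (wt ξ : ℂ) * (starRingEnd ℂ (F ξ) * G ξ)

lemma ip_int {F G : R2 → ℂ} (hF : Hm F) (hG : Hm G) : Integrable (fun ξ => (wt ξ : ℂ) * (starRingEnd ℂ (F ξ) * G ξ)) := by
  have h1 := hF.1
  have h2 := hG.1
  have hw := wt_cont
  refine (hF.2.add hG.2).mono' (Continuous.aestronglyMeasurable (by fun_prop)) (Eventually.of_forall fun ξ => ?_)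
  have hw := wt_pos ξ
  rw [norm_mul, norm_mul, RCLike.norm_conj, Complex.norm_real, Real.norm_of_nonneg hw.le]
  simp only [Pi.add_apply]
  nlinarith [sq_nonneg (‖F ξ‖ - ‖G ξ‖), sq_nonneg (‖F ξ‖ + ‖G ξ‖)]

lemma ip_self (F : R2 → ℂ) : ip F F = (Nw F : ℂ) := by
  unfold ip Nw
  rw [← integral_complex_ofReal]
  congr 1; ext ξ
  rw [mul_comm (starRingEnd ℂ (F ξ)), Complex.mul_conj, Complex.normSq_eq_norm_sq]
  push_cast; rfl

lemma ip_conj (F G : R2 → ℂ) : starRingEnd ℂ (ip G F) = ip F G := by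
  unfold ip
  rw [← integral_conj]
  congr 1; ext ξ
  simp only [map_mul, Complex.conj_conj, Complex.conj_ofReal]
  ring

lemma ip_add {F G K : R2 → ℂ} (hF : Hm F) (hG : Hm G) (hK : Hm K) : ip (F + G) K = ip F K + ip G K := by
  unfold ip
  rw [← integral_add (ip_int hF hK) (ip_int hG hK)]
  congr 1; ext ξ
  simp only [Pi.add_apply, map_add]; ring

lemma ip_smul (a : ℂ) (F K : R2 → ℂ) : ip (a • F) K = starRingEnd ℂ a * ip F K := by
  unfold ip
  rw [← integral_const_mul]
  congr 1; ext ξ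
  simp only [Pi.smul_apply, smul_eq_mul, map_mul]; ring

lemma Nw_eq_zero {F : R2 → ℂ} (hF : Hm F) (h : Nw F = 0) : F = 0 := by
  unfold Nw at h
  rw [integral_eq_zero_iff_of_nonneg (fun ξ => mul_nonneg (wt_pos ξ).le (sq_nonneg _)) hF.2] at h
  have hc := hF.1
  have hw := wt_cont
  have hcc : Continuous (fun ξ => wt ξ * ‖F ξ‖ ^ 2) := by fun_prop
  have h2 := (Continuous.ae_eq_iff_eq volume hcc continuous_zero).1 h
  ext ξ
  have h3 := congrFun h2 ξ
  have := wt_pos ξ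
  simpa [this.ne'] using h3

/-- the Hilbert space -/
def HX (Γ : Set R2) : Type := XS Γ

instance (Γ : Set R2) : AddCommGroup (HX Γ) := inferInstanceAs (AddCommGroup (XS Γ))
instance (Γ : Set R2) : Module ℂ (HX Γ) := inferInstanceAs (Module ℂ (XS Γ))

variable {Γ : Set R2}

def HX.f1 (V : HX Γ) : R2 → ℂ := V.1.1
def HX.f2 (V : HX Γ) : R2 → ℂ := V.1.2
def HX.d (V : HX Γ) : R2 → ℂ := dotFt V.f1 V.f2

lemma HX.h1 (V : HX Γ) : Hm V.f1 := V.2.1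
lemma HX.h2 (V : HX Γ) : Hm V.f2 := V.2.2.1
lemma HX.hd (V : HX Γ) : Hm V.d := V.2.2.2.1
lemma HX.s1 (V : HX Γ) : SuppIn V.f1 (closure Γ) := V.2.2.2.2.1
lemma HX.s2 (V : HX Γ) : SuppIn V.f2 (closure Γ) := V.2.2.2.2.2

lemma HX.f1_add (V W : HX Γ) : (V + W).f1 = V.f1 + W.f1 := rfl
lemma HX.f2_add (V W : HX Γ) : (V + W).f2 = V.f2 + W.f2 := rfl
lemma HX.f1_sub (V W : HX Γ) : (V - W).f1 = V.f1 - W.f1 := rfl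
lemma HX.f2_sub (V W : HX Γ) : (V - W).f2 = V.f2 - W.f2 := rfl
lemma HX.f1_smul (a : ℂ) (V : HX Γ) : (a • V).f1 = a • V.f1 := rfl
lemma HX.f2_smul (a : ℂ) (V : HX Γ) : (a • V).f2 = a • V.f2 := rfl
lemma HX.d_add (V W : HX Γ) : (V + W).d = V.d + W.d := by
  simp only [HX.d, HX.f1_add, HX.f2_add, dotFt_add]
lemma HX.d_smul (a : ℂ) (V : HX Γ) : (a • V).d = a • V.d := by
  simp only [HX.d, HX.f1_smul, HX.f2_smul, dotFt_smul]
lemma HX.d_sub (V W : HX Γ) : (V - W).d = V.d - W.d := by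
  have h : V - W = V + (-1 : ℂ) • W := by rw [neg_smul, one_smul, sub_eq_add_neg]
  rw [h, HX.d_add, HX.d_smul, neg_smul, one_smul, sub_eq_add_neg]
lemma HX.ext' {V W : HX Γ} (h1 : V.f1 = W.f1) (h2 : V.f2 = W.f2) : V = W := Subtype.ext (Prod.ext h1 h2)

@[reducible]
def HX.core (Γ : Set R2) : InnerProductSpace.Core ℂ (HX Γ) where
  inner V W := ip V.f1 W.f1 + ip V.f2 W.f2 + ip V.d W.d
  conj_inner_symm V W := by simp only [map_add, ip_conj]
  re_inner_nonneg V := by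
    simp only [ip_self, ← Complex.ofReal_add]
    exact add_nonneg (add_nonneg (Nw_nonneg _) (Nw_nonneg _)) (Nw_nonneg _)
  add_left V W U := by
    simp only [HX.f1_add, HX.f2_add, HX.d_add, ip_add V.h1 W.h1 U.h1, ip_add V.h2 W.h2 U.h2, ip_add V.hd W.hd U.hd]
    ring
  smul_left V W a := by
    simp only [HX.f1_smul, HX.f2_smul, HX.d_smul, ip_smul]
    ring
  definite V h := by
    simp only [ip_self, ← Complex.ofReal_add] at h
    have h' : Nw V.f1 + Nw V.f2 + Nw V.d = 0 := by exact_mod_cast h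
    have n1 := Nw_nonneg V.f1
    have n2 := Nw_nonneg V.f2
    have n3 := Nw_nonneg V.d
    refine HX.ext' (Nw_eq_zero V.h1 (by linarith)) (Nw_eq_zero V.h2 (by linarith))

instance : NormedAddCommGroup (HX Γ) := (HX.core Γ).toNormedAddCommGroup
instance : InnerProductSpace ℂ (HX Γ) := InnerProductSpace.ofCore (HX.core Γ).toCore

lemma HX.inner_def (V W : HX Γ) : inner ℂ V W = ip V.f1 W.f1 + ip V.f2 W.f2 + ip V.d W.d := rfl

lemma HX.norm_sq (V : HX Γ) : ‖V‖ ^ 2 = Nw V.f1 + Nw V.f2 + Nw V.d := by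
  have h := inner_self_eq_norm_sq_to_K (𝕜 := ℂ) V
  rw [HX.inner_def, ip_self, ip_self, ip_self] at h
  have h2 : ((Nw V.f1 + Nw V.f2 + Nw V.d : ℝ) : ℂ) = ((‖V‖ ^ 2 : ℝ) : ℂ) := by
    push_cast; exact h
  exact (Complex.ofReal_injective h2).symm

lemma HX.n1_le (V : HX Γ) : Nw V.f1 ≤ ‖V‖ ^ 2 := by
  rw [HX.norm_sq]; linarith [Nw_nonneg V.f2, Nw_nonneg V.d]
lemma HX.n2_le (V : HX Γ) : Nw V.f2 ≤ ‖V‖ ^ 2 := by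
  rw [HX.norm_sq]; linarith [Nw_nonneg V.f1, Nw_nonneg V.d]
lemma HX.nd_le (V : HX Γ) : Nw V.d ≤ ‖V‖ ^ 2 := by
  rw [HX.norm_sq]; linarith [Nw_nonneg V.f2, Nw_nonneg V.f1]

/-- sup and Lipschitz bounds -/
lemma HX.rkhs (hK : Bornology.IsBounded Γ) (R : ℝ) : ∃ C : ℝ, 0 ≤ C ∧ ∀ V : HX Γ, ∀ ξ ξ' : R2, ‖ξ‖ ≤ R → ‖ξ'‖ ≤ R →
    ‖V.f1 ξ‖ ≤ C * ‖V‖ ∧ ‖V.f2 ξ‖ ≤ C * ‖V‖ ∧ ‖V.f1 ξ - V.f1 ξ'‖ ≤ C * ‖V‖ * ‖ξ - ξ'‖ ∧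
    ‖V.f2 ξ - V.f2 ξ'‖ ≤ C * ‖V‖ * ‖ξ - ξ'‖ := by
  obtain ⟨C, hC, h⟩ := _root_.rkhs hK.closure R
  refine ⟨C, hC, fun V ξ ξ' hξ hξ' => ?_⟩
  have a1 := h V.f1 V.h1 V.s1 ξ ξ' hξ hξ'
  have a2 := h V.f2 V.h2 V.s2 ξ ξ' hξ hξ'
  have b1 : √(Nw V.f1) ≤ ‖V‖ := Real.sqrt_le_iff.2 ⟨norm_nonneg _, V.n1_le⟩
  have b2 : √(Nw V.f2) ≤ ‖V‖ := Real.sqrt_le_iff.2 ⟨norm_nonneg _, V.n2_le⟩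
  exact ⟨a1.1.trans (by gcongr), a2.1.trans (by gcongr), a1.2.trans (by gcongr), a2.2.trans (by gcongr)⟩

lemma fatou_lim {u : ℕ → R2 → ℂ} (hu : ∀ n, Hm (u n)) {F : R2 → ℂ} (hF : Continuous F)
    (hpt : ∀ ξ, Tendsto (fun n => u n ξ) atTop (𝓝 (F ξ))) {ε : ℝ} (n N : ℕ) (hε : 0 ≤ ε)
    (he : ∀ m ≥ N, Nw (u m - u n) ≤ ε) : Hm (F - u n) ∧ Nw (F - u n) ≤ ε := by
  have hw := wt_cont
  have hun := (hu n).1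
  have h0 : ∀ (G : R2 → ℂ) ξ, 0 ≤ wt ξ * ‖G ξ‖ ^ 2 := fun G ξ => mul_nonneg (wt_pos ξ).le (sq_nonneg _)
  have key : ∫⁻ ξ, ENNReal.ofReal (wt ξ * ‖(F - u n) ξ‖ ^ 2) ≤ ENNReal.ofReal ε := by
    have e : ∀ ξ, ENNReal.ofReal (wt ξ * ‖(F - u n) ξ‖ ^ 2) = liminf (fun m => ENNReal.ofReal (wt ξ * ‖(u m - u n) ξ‖ ^ 2)) atTop := by
      intro ξ
      symm
      apply Tendsto.liminf_eq
      refine ENNReal.tendsto_ofReal ?_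
      exact ((((hpt ξ).sub_const (u n ξ)).norm).pow 2).const_mul _
    simp only [e]
    refine (lintegral_liminf_le (fun m => ?_)).trans ?_
    · have hum := (hu m).1
      have : Continuous fun ξ => wt ξ * ‖(u m - u n) ξ‖ ^ 2 := by
        simp only [Pi.sub_apply]; fun_prop
      exact this.measurable.ennreal_ofReal
    · refine liminf_le_of_frequently_le' (Eventually.frequently ?_)
      filter_upwards [eventually_ge_atTop N] with m hm
      rw [← ofReal_integral_eq_lintegral_ofReal]
      · exact ENNReal.ofReal_le_ofReal (he m hm)
      · exact ((hu m).sub (hu n)).2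
      · exact Eventually.of_forall (h0 _)
  have hc : Continuous (fun ξ => wt ξ * ‖(F - u n) ξ‖ ^ 2) := by
    simp only [Pi.sub_apply]; fun_prop
  have hi : Integrable (fun ξ => wt ξ * ‖(F - u n) ξ‖ ^ 2) := by
    refine ⟨hc.aestronglyMeasurable, ?_⟩
    rw [hasFiniteIntegral_iff_ofReal (Eventually.of_forall (h0 _))]
    exact key.trans_lt ENNReal.ofReal_lt_top
  refine ⟨⟨hF.sub hun, hi⟩, ?_⟩
  unfold Nw
  rw [integral_eq_lintegral_of_nonneg_ae (Eventually.of_forall (h0 _)) hc.aestronglyMeasurable]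
  exact ENNReal.toReal_le_of_le_ofReal hε key

lemma loc_lim {u : ℕ → R2 → ℂ} (hu : ∀ n, Continuous (u n)) {a : ℕ → ℕ → ℝ}
    (ha : ∀ ε > 0, ∃ N, ∀ m ≥ N, ∀ n ≥ N, a m n ≤ ε)
    (hb : ∀ R : ℝ, ∃ C : ℝ, 0 ≤ C ∧ ∀ m n, ∀ ξ : R2, ‖ξ‖ ≤ R → ‖u m ξ - u n ξ‖ ≤ C * a m n) :
    ∃ F : R2 → ℂ, Continuous F ∧ ∀ ξ, Tendsto (fun n => u n ξ) atTop (𝓝 (F ξ)) := by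
  have huc : ∀ R : ℝ, UniformCauchySeqOn u atTop (Metric.closedBall 0 R) := by
    intro R
    obtain ⟨C, hC, h⟩ := hb R
    rw [Metric.uniformCauchySeqOn_iff]
    intro ε hε
    obtain ⟨N, hN⟩ := ha (ε / (C + 1)) (by positivity)
    refine ⟨N, fun m hm n hn ξ hξ => ?_⟩
    rw [dist_eq_norm]
    rw [mem_closedBall_zero_iff] at hξ
    calc _ ≤ C * a m n := h m n ξ hξ
      _ ≤ C * (ε / (C + 1)) := by gcongr; exact hN m hm n hn
      _ < (C + 1) * (ε / (C + 1)) := by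
        have : 0 < ε / (C + 1) := by positivity
        nlinarith
      _ = ε := by field_simp
  have hcau : ∀ ξ : R2, ∃ y, Tendsto (fun n => u n ξ) atTop (𝓝 y) := fun ξ =>
    cauchySeq_tendsto_of_complete ((huc ‖ξ‖).cauchySeq (by simp))
  choose F hF using hcau
  refine ⟨F, ?_, hF⟩
  rw [continuous_iff_continuousAt]
  intro ξ
  have h1 := (huc (‖ξ‖ + 1)).tendstoUniformlyOn_of_tendsto (fun x _ => hF x)
  have h2 := h1.continuousOn (Eventually.of_forall fun n => (hu n).continuousOn).frequently
  refine h2.continuousAt (Metric.closedBall_mem_nhds_of_mem (x := ξ) ?_)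
  rw [mem_ball_zero_iff]; linarith

lemma supp_lim {u : ℕ → R2 → ℂ} {F : R2 → ℂ} {K : Set R2} (hu : ∀ n, Hm (u n)) (hs : ∀ n, SuppIn (u n) K)
    (hF : Hm F) (h : ∀ ε > 0, ∃ n, Nw (F - u n) ≤ ε) : SuppIn F K := by
  intro φ hφ h0
  by_contra hne
  set A := ∫ ξ, (wt ξ)⁻¹ * ‖testFT φ ξ‖ ^ 2 with hA
  have hA0 : 0 ≤ A := integral_nonneg fun ξ => mul_nonneg (wti_pos ξ).le (sq_nonneg _)
  set z := ∫ ξ, F ξ * testFT φ ξ with hz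
  have hz0 : 0 < ‖z‖ := norm_pos_iff.2 hne
  obtain ⟨n, hn⟩ := h (‖z‖ ^ 2 / (2 * (A + 1))) (by positivity)
  have h1 := ((hF.sub (hu n)).mul_dec (testFT_dec hφ)).2
  have h2 : z = ∫ ξ, (F ξ - u n ξ) * testFT φ ξ := by
    simp only [sub_mul]
    rw [integral_sub (hF.mul_dec (testFT_dec hφ)).1 ((hu n).mul_dec (testFT_dec hφ)).1, hs n φ hφ h0, sub_zero]
  have h3 : ‖z‖ ^ 2 ≤ Nw (F - u n) * A := by
    refine le_trans ?_ h1
    rw [h2]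
    gcongr
    exact norm_integral_le_integral_norm _
  have h4 : ‖z‖ ^ 2 ≤ ‖z‖ ^ 2 / (2 * (A + 1)) * A := h3.trans (by gcongr)
  rw [div_mul_eq_mul_div, le_div_iff₀ (by positivity)] at h4
  have : 0 < ‖z‖ ^ 2 := by positivity
  nlinarith

lemma HX.complete (hK : Bornology.IsBounded Γ) : CompleteSpace (HX Γ) := by
  refine Metric.complete_of_cauchySeq_tendsto fun u hu => ?_
  rw [Metric.cauchySeq_iff] at hu
  have hb1 : ∀ R : ℝ, ∃ C : ℝ, 0 ≤ C ∧ ∀ m n, ∀ ξ : R2, ‖ξ‖ ≤ R → ‖(u m).f1 ξ - (u n).f1 ξ‖ ≤ C * ‖u m - u n‖ := fun R => by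
    obtain ⟨C, hC, h⟩ := HX.rkhs hK R
    exact ⟨C, hC, fun m n ξ hξ => (h (u m - u n) ξ ξ hξ hξ).1⟩
  have hb2 : ∀ R : ℝ, ∃ C : ℝ, 0 ≤ C ∧ ∀ m n, ∀ ξ : R2, ‖ξ‖ ≤ R → ‖(u m).f2 ξ - (u n).f2 ξ‖ ≤ C * ‖u m - u n‖ := fun R => by
    obtain ⟨C, hC, h⟩ := HX.rkhs hK R
    exact ⟨C, hC, fun m n ξ hξ => (h (u m - u n) ξ ξ hξ hξ).2.1⟩
  have ha : ∀ ε > 0, ∃ N, ∀ m ≥ N, ∀ n ≥ N, ‖u m - u n‖ ≤ ε := fun ε hε => by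
    obtain ⟨N, hN⟩ := hu ε hε
    exact ⟨N, fun m hm n hn => by rw [← dist_eq_norm]; exact (hN m hm n hn).le⟩
  obtain ⟨F1, hc1, hp1⟩ := loc_lim (fun n => (u n).h1.1) ha hb1
  obtain ⟨F2, hc2, hp2⟩ := loc_lim (fun n => (u n).h2.1) ha hb2
  have hcd : Continuous (dotFt F1 F2) := by unfold dotFt; fun_prop
  have hpd : ∀ ξ, Tendsto (fun n => (u n).d ξ) atTop (𝓝 (dotFt F1 F2 ξ)) := fun ξ =>
    ((hp1 ξ).const_mul _).add ((hp2 ξ).const_mul _)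
  have hest : ∀ ε > 0, ∃ N, ∀ n ≥ N, (Hm (F1 - (u n).f1) ∧ Nw (F1 - (u n).f1) ≤ ε) ∧ 
      (Hm (F2 - (u n).f2) ∧ Nw (F2 - (u n).f2) ≤ ε) ∧ (Hm (dotFt F1 F2 - (u n).d) ∧ Nw (dotFt F1 F2 - (u n).d) ≤ ε) := by
    intro ε hε
    obtain ⟨N, hN⟩ := ha (√ε) (by positivity)
    refine ⟨N, fun n hn => ⟨?_, ?_, ?_⟩⟩
    · refine fatou_lim (fun n => (u n).h1) hc1 hp1 n N hε.le fun m hm => ?_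
      rw [← HX.f1_sub]
      refine (HX.n1_le _).trans ?_
      rw [← Real.sq_sqrt hε.le]
      gcongr
      exact hN m hm n hn
    · refine fatou_lim (fun n => (u n).h2) hc2 hp2 n N hε.le fun m hm => ?_
      rw [← HX.f2_sub]
      refine (HX.n2_le _).trans ?_
      rw [← Real.sq_sqrt hε.le]
      gcongr
      exact hN m hm n hn
    · refine fatou_lim (fun n => (u n).hd) hcd hpd n N hε.le fun m hm => ?_
      rw [← HX.d_sub]
      refine (HX.nd_le _).trans ?_
      rw [← Real.sq_sqrt hε.le]
      gcongr
      exact hN m hm n hn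
  obtain ⟨N1, hN1⟩ := hest 1 one_pos
  obtain ⟨⟨m1, -⟩, ⟨m2, -⟩, ⟨m3, -⟩⟩ := hN1 N1 le_rfl
  have hH1 : Hm F1 := by have := m1.add (u N1).h1; rwa [sub_add_cancel] at this
  have hH2 : Hm F2 := by have := m2.add (u N1).h2; rwa [sub_add_cancel] at this
  have hHd : Hm (dotFt F1 F2) := by have := m3.add (u N1).hd; rwa [sub_add_cancel] at this
  have hs1 : SuppIn F1 (closure Γ) := supp_lim (fun n => (u n).h1) (fun n => (u n).s1) hH1 fun ε hε => by
    obtain ⟨N, hN⟩ := hest ε hε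
    exact ⟨N, (hN N le_rfl).1.2⟩
  have hs2 : SuppIn F2 (closure Γ) := supp_lim (fun n => (u n).h2) (fun n => (u n).s2) hH2 fun ε hε => by
    obtain ⟨N, hN⟩ := hest ε hε
    exact ⟨N, (hN N le_rfl).2.1.2⟩
  let W : HX Γ := ⟨(F1, F2), hH1, hH2, hHd, hs1, hs2⟩
  refine ⟨W, ?_⟩
  rw [Metric.tendsto_atTop]
  intro ε hε
  obtain ⟨N, hN⟩ := hest (ε ^ 2 / 4) (by positivity)
  refine ⟨N, fun n hn => ?_⟩
  obtain ⟨⟨-, e1⟩, ⟨-, e2⟩, ⟨-, e3⟩⟩ := hN n hn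
  rw [dist_comm, dist_eq_norm]
  have h := HX.norm_sq (W - u n)
  rw [HX.f1_sub, HX.f2_sub, HX.d_sub] at h
  change _ = Nw (F1 - (u n).f1) + Nw (F2 - (u n).f2) + Nw (dotFt F1 F2 - (u n).d) at h
  refine lt_of_pow_lt_pow_left₀ 2 hε.le ?_
  rw [h]
  nlinarith [sq_pos_of_pos hε]

end

noncomputable section
open MeasureTheory Complex Filter Topology
open scoped Real NNReal ContDiff FourierTransform

variable {Γ : Set R2}

/-- modulus of the multiplier -/
def ga (k : ℝ) (ξ : R2) : ℝ := (√|k ^ 2 - ‖ξ‖ ^ 2|)⁻¹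

lemma ga_nonneg (k : ℝ) (ξ : R2) : 0 ≤ ga k ξ := inv_nonneg.2 (Real.sqrt_nonneg _)

lemma g0_norm {k : ℝ} (hk : 0 < k) (ξ : R2) : ‖g0hat k ξ‖ = ga k ξ := by
  unfold g0hat ga
  have h0 := norm_nonneg ξ
  split_ifs with h
  · rw [norm_div, Complex.norm_I, Complex.norm_real, Real.norm_of_nonneg (Real.sqrt_nonneg _), one_div,
      abs_of_nonneg (by nlinarith)]
  · push Not at h
    rw [norm_div, norm_one, Complex.norm_real, Real.norm_of_nonneg (Real.sqrt_nonneg _), one_div,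
      abs_of_nonpos (by nlinarith), neg_sub]

lemma g0_meas (k : ℝ) : Measurable (g0hat k) := by
  unfold g0hat
  refine Measurable.ite (measurableSet_lt (by fun_prop) (by fun_prop)) (by fun_prop) (by fun_prop)

lemma ga_meas (k : ℝ) : Measurable (ga k) := by
  unfold ga; fun_prop

lemma half_int (M : ℝ) : Integrable (fun x : ℝ => (Set.Iio M).indicator (fun y => (√y)⁻¹) ‖x‖) := by
  rw [integrable_fun_norm_addHaar (volume : Measure ℝ) (f := (Set.Iio M).indicator (fun y => (√y)⁻¹))]
  simp only [Module.finrank_self, Nat.sub_self, pow_zero, one_smul]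
  rw [← integrable_indicator_iff measurableSet_Ioi, Set.indicator_indicator, integrable_indicator_iff (by measurability)]
  have h := (intervalIntegral.intervalIntegrable_rpow' (a := 0) (b := max M 0) (r := -(1/2)) (by norm_num))
  rw [intervalIntegrable_iff_integrableOn_Ioc_of_le (le_max_right _ _)] at h
  refine (h.mono_set ?_).congr_fun ?_ (by measurability)
  · intro x hx
    exact ⟨hx.1, (le_of_lt hx.2).trans (le_max_left _ _)⟩
  · intro x hx
    simp only
    rw [Real.rpow_neg (le_of_lt hx.1), Real.sqrt_eq_rpow]

/-- cut-off low frequency weight -/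
def rho (k R : ℝ) (ξ : R2) : ℝ := (Metric.ball (0 : R2) R).indicator (ga k) ξ

lemma rho_nonneg (k R : ℝ) (ξ : R2) : 0 ≤ rho k R ξ := Set.indicator_nonneg (fun _ _ => ga_nonneg _ _) _

lemma rho_int {k : ℝ} (hk : 0 < k) (R : ℝ) : Integrable (rho k R) := by
  have e : rho k R = fun ξ : R2 => (Set.Iio R).indicator (fun y => (√|k ^ 2 - y ^ 2|)⁻¹) ‖ξ‖ := by
    ext ξ
    by_cases h : ‖ξ‖ < R
    · rw [rho, Set.indicator_of_mem (by simpa using h), Set.indicator_of_mem (by simpa using h), ga]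
    · rw [rho, Set.indicator_of_notMem (by simpa using h), Set.indicator_of_notMem (by simpa using h)]
  rw [e, integrable_fun_norm_addHaar (volume : Measure R2) (f := (Set.Iio R).indicator (fun y => (√|k ^ 2 - y ^ 2|)⁻¹))]
  have h := ((half_int (R + k)).comp_sub_right k).const_mul (|R| * (√k)⁻¹)
  refine h.integrableOn.mono' ?_ ?_
  · refine Measurable.aestronglyMeasurable ?_
    have hm : Measurable ((Set.Iio R).indicator (fun y : ℝ => (√|k ^ 2 - y ^ 2|)⁻¹)) :=
      Measurable.indicator (by fun_prop) measurableSet_Iio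
    have hm2 : Measurable (fun y : ℝ => y ^ (Module.finrank ℝ R2 - 1)) := by fun_prop
    exact hm2.smul hm
  · refine (ae_restrict_iff' measurableSet_Ioi).2 (Eventually.of_forall fun y hy => ?_)
    have hy : 0 < y := hy
    simp only [finrank_euclideanSpace, Fintype.card_fin, Nat.add_one_sub_one, pow_one, smul_eq_mul, norm_mul]
    by_cases hR : y < R
    · rw [Set.indicator_of_mem (by simpa using hR), Set.indicator_of_mem]
      · rw [Real.norm_of_nonneg hy.le, Real.norm_of_nonneg (by positivity), abs_of_pos (hy.trans hR), mul_assoc]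
        by_cases hyk : y = k
        · subst hyk; simp
        have hR0 : 0 ≤ R := (hy.trans hR).le
        gcongr
        rw [← mul_inv, ← Real.sqrt_mul hk.le]
        have hp : 0 < |y - k| := abs_pos.2 (sub_ne_zero.2 hyk)
        have : k ^ 2 - y ^ 2 = -((k + y) * (y - k)) := by ring
        rw [this, abs_neg, abs_mul, abs_of_pos (by linarith : 0 < k + y), Real.norm_eq_abs]
        gcongr
        linarith
      · simp only [Set.mem_Iio, Real.norm_eq_abs]
        rw [abs_lt]; constructor <;> linarith
    · rw [Set.indicator_of_notMem (by simpa using hR)]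
      simp only [norm_zero, mul_zero]
      have : 0 ≤ (Set.Iio (R + k)).indicator (fun y => (√y)⁻¹) ‖y - k‖ :=
        Set.indicator_nonneg (fun _ _ => by positivity) _
      positivity

lemma wprod {u v : R2 → ℝ} (hu : Continuous u) (hv : Continuous v) (u0 : ∀ ξ, 0 ≤ u ξ) (v0 : ∀ ξ, 0 ≤ v ξ)
    (iu : Integrable (fun ξ => wt ξ * u ξ ^ 2)) (iv : Integrable (fun ξ => wt ξ * v ξ ^ 2)) {a b : ℝ} (ha : 0 ≤ a) (hb : 0 ≤ b)
    (hA : ∫ ξ, wt ξ * u ξ ^ 2 ≤ a ^ 2) (hB : ∫ ξ, wt ξ * v ξ ^ 2 ≤ b ^ 2) :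
    Integrable (fun ξ => wt ξ * (u ξ * v ξ)) ∧ ∫ ξ, wt ξ * (u ξ * v ξ) ≤ a * b := by
  have hw := wt_cont
  have e1 : ∀ u : R2 → ℝ, (fun ξ => (√(wt ξ) * u ξ) ^ 2) = fun ξ => wt ξ * u ξ ^ 2 := by
    intro u; ext ξ; rw [mul_pow, Real.sq_sqrt (wt_pos ξ).le]
  have e2 : (fun ξ => (√(wt ξ) * u ξ) * (√(wt ξ) * v ξ)) = fun ξ => wt ξ * (u ξ * v ξ) := by
    ext ξ; nth_rw 3 [← Real.mul_self_sqrt (wt_pos ξ).le]; ring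
  have := integral_CS (μ := (volume : Measure R2)) (f := fun ξ => √(wt ξ) * u ξ) (g := fun ξ => √(wt ξ) * v ξ)
    (fun ξ => mul_nonneg (Real.sqrt_nonneg _) (u0 ξ)) (fun ξ => mul_nonneg (Real.sqrt_nonneg _) (v0 ξ))
    (Continuous.aestronglyMeasurable (by fun_prop)) (Continuous.aestronglyMeasurable (by fun_prop))
    (by rw [e1]; exact iu) (by rw [e1]; exact iv)
  rw [e1, e1, e2] at this
  refine ⟨this.1, ?_⟩
  have h2 : (∫ ξ, wt ξ * (u ξ * v ξ)) ^ 2 ≤ (a * b) ^ 2 := by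
    rw [mul_pow]
    refine this.2.trans (mul_le_mul hA hB ?_ (by positivity))
    exact integral_nonneg fun ξ => mul_nonneg (wt_pos ξ).le (sq_nonneg _)
  exact abs_le_of_sq_le_sq' h2 (by positivity) |>.2

/-- pointwise size -/
def HX.q (V : HX Γ) (ξ : R2) : ℝ := ‖V.f1 ξ‖ + ‖V.f2 ξ‖

lemma HX.q_nonneg (V : HX Γ) (ξ : R2) : 0 ≤ V.q ξ := by unfold HX.q; positivity

lemma HX.q_cont (V : HX Γ) : Continuous V.q := by
  have := V.h1.1; have := V.h2.1
  unfold HX.q; fun_prop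

lemma HX.q_int (V : HX Γ) : Integrable (fun ξ => wt ξ * V.q ξ ^ 2) ∧ ∫ ξ, wt ξ * V.q ξ ^ 2 ≤ (2 * ‖V‖) ^ 2 := by
  have hi := (V.h1.2.add V.h2.2).const_mul 2
  have hle : ∀ ξ, wt ξ * V.q ξ ^ 2 ≤ 2 * (wt ξ * ‖V.f1 ξ‖ ^ 2 + wt ξ * ‖V.f2 ξ‖ ^ 2) := by
    intro ξ
    have := wt_pos ξ
    unfold HX.q
    nlinarith [mul_nonneg this.le (sq_nonneg (‖V.f1 ξ‖ - ‖V.f2 ξ‖))]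
  have hi2 : Integrable (fun ξ => wt ξ * V.q ξ ^ 2) := by
    refine hi.mono' (Continuous.aestronglyMeasurable (wt_cont.mul (V.q_cont.pow 2))) (Eventually.of_forall fun ξ => ?_)
    rw [Real.norm_of_nonneg (mul_nonneg (wt_pos ξ).le (sq_nonneg _))]
    exact hle ξ
  refine ⟨hi2, (integral_mono hi2 hi hle).trans ?_⟩
  simp only [Pi.add_apply]
  rw [integral_const_mul, integral_add V.h1.2 V.h2.2]
  have h1 : Nw V.f1 ≤ ‖V‖ ^ 2 := V.n1_le
  have h2 : Nw V.f2 ≤ ‖V‖ ^ 2 := V.n2_le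
  unfold Nw at h1 h2
  nlinarith

lemma HX.d_le (V : HX Γ) (ξ : R2) : ‖V.d ξ‖ ≤ ‖ξ‖ * V.q ξ := by
  unfold HX.d HX.q dotFt
  refine (norm_add_le _ _).trans ?_
  rw [norm_mul, norm_mul, mul_add]
  gcongr <;> exact coord_le _ _

lemma HX.c_le (V : HX Γ) (ξ : R2) : ‖curlFt V.f1 V.f2 ξ‖ ≤ ‖ξ‖ * V.q ξ := by
  unfold HX.q curlFt
  refine (norm_sub_le _ _).trans ?_
  rw [norm_mul, norm_mul, mul_add]
  gcongr <;> exact coord_le _ _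

/-- integrand -/
def Bi (k : ℝ) (W V : HX Γ) (ξ : R2) : ℂ := Bintegrand k W.f1 W.f2 V.f1 V.f2 ξ

lemma Bi_meas (k : ℝ) (W V : HX Γ) : Measurable (Bi k W V) := by
  unfold Bi Bintegrand dotFt curlFt
  have := g0_meas k
  have := W.h1.1.measurable; have := W.h2.1.measurable
  have := V.h1.1.measurable; have := V.h2.1.measurable
  fun_prop

lemma wt_ge {ξ : R2} (h : 1 ≤ ‖ξ‖) : ‖ξ‖⁻¹ ≤ 2 * wt ξ := by
  rw [wt_eq, ← div_eq_mul_inv, inv_eq_one_div, div_le_div_iff₀ (by positivity) (by positivity), one_mul]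
  rw [Real.sqrt_le_iff]; constructor
  · positivity
  · nlinarith

lemma ga_high {k : ℝ} (hk : 0 < k) {ξ : R2} (h : 2 * k + 1 ≤ ‖ξ‖) : ga k ξ ≤ 2 * wt ξ := by
  rw [wt_eq, ga, ← div_eq_mul_inv, inv_eq_one_div]
  have h1 : (1 + ‖ξ‖ ^ 2) / 4 ≤ |k ^ 2 - ‖ξ‖ ^ 2| := by
    rw [abs_of_nonpos (by nlinarith)]; nlinarith
  have : 0 < √(1 + ‖ξ‖ ^ 2) := by positivity
  have h2 : √(1 + ‖ξ‖ ^ 2) ≤ 2 * √|k ^ 2 - ‖ξ‖ ^ 2| := by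
    rw [Real.sqrt_le_iff]; refine ⟨by positivity, ?_⟩
    rw [mul_pow, Real.sq_sqrt (abs_nonneg _)]; linarith
  rw [div_le_div_iff₀ (by linarith) this]; linarith

lemma Bi_norm {k : ℝ} (hk : 0 < k) (W V : HX Γ) (ξ : R2) : ‖Bi k W V ξ‖ ≤
    2 * (wt ξ * (‖W.d ξ‖ * ‖V.d ξ‖)) + 2 * k ^ 2 * (wt ξ * (W.q ξ * V.q ξ)) +
    (9 * (2 * k + 1) ^ 2) * (rho k (2 * k + 1) ξ * (W.q ξ * V.q ξ)) := by
  have hw := wt_pos ξ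
  have hr := rho_nonneg k (2 * k + 1) ξ
  have hqW := W.q_nonneg ξ
  have hqV := V.q_nonneg ξ
  have hg := ga_nonneg k ξ
  have hn : ‖Bi k W V ξ‖ ≤ ga k ξ * (|‖ξ‖ ^ 2 - k ^ 2| * (‖W.d ξ‖ * ‖V.d ξ‖) +
      k ^ 2 * (‖curlFt W.f1 W.f2 ξ‖ * ‖curlFt V.f1 V.f2 ξ‖)) / ‖ξ‖ ^ 2 := by
    unfold Bi Bintegrand
    rw [norm_div, norm_mul, g0_norm hk, Complex.norm_real, Real.norm_of_nonneg (sq_nonneg _)]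
    gcongr
    refine (norm_sub_le _ _).trans_eq ?_
    simp only [norm_mul, RCLike.norm_conj, Complex.norm_real]
    rw [Real.norm_of_nonneg (sq_nonneg k)]; rfl
  have hcc : ‖curlFt W.f1 W.f2 ξ‖ * ‖curlFt V.f1 V.f2 ξ‖ ≤ ‖ξ‖ ^ 2 * (W.q ξ * V.q ξ) := by
    calc _ ≤ (‖ξ‖ * W.q ξ) * (‖ξ‖ * V.q ξ) := by gcongr; exact W.c_le ξ; exact V.c_le ξ
      _ = _ := by ring
  have hdd : ‖W.d ξ‖ * ‖V.d ξ‖ ≤ ‖ξ‖ ^ 2 * (W.q ξ * V.q ξ) := by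
    calc _ ≤ (‖ξ‖ * W.q ξ) * (‖ξ‖ * V.q ξ) := by gcongr; exact W.d_le ξ; exact V.d_le ξ
      _ = _ := by ring
  refine hn.trans ?_
  by_cases h : ‖ξ‖ < 2 * k + 1
  · have hre : rho k (2 * k + 1) ξ = ga k ξ := by rw [rho, Set.indicator_of_mem (by simpa using h)]
    have hab : |‖ξ‖ ^ 2 - k ^ 2| ≤ (2 * k + 1) ^ 2 := by
      rw [abs_le]; constructor <;> nlinarith [norm_nonneg ξ]
    have h3 : ga k ξ * (|‖ξ‖ ^ 2 - k ^ 2| * (‖W.d ξ‖ * ‖V.d ξ‖) +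
      k ^ 2 * (‖curlFt W.f1 W.f2 ξ‖ * ‖curlFt V.f1 V.f2 ξ‖)) / ‖ξ‖ ^ 2 ≤
      ga k ξ * (9 * (2 * k + 1) ^ 2 * (W.q ξ * V.q ξ)) := by
      refine div_le_of_le_mul₀ (by positivity) (by positivity) ?_
      rw [mul_assoc]
      gcongr
      calc _ ≤ (2 * k + 1) ^ 2 * (‖ξ‖ ^ 2 * (W.q ξ * V.q ξ)) + (2 * k + 1) ^ 2 * (‖ξ‖ ^ 2 * (W.q ξ * V.q ξ)) := by
            gcongr
            linarith
        _ ≤ _ := by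
            have : 0 ≤ (2 * k + 1) ^ 2 * (‖ξ‖ ^ 2 * (W.q ξ * V.q ξ)) := by positivity
            nlinarith
    rw [hre]
    have h4 : 0 ≤ 2 * (wt ξ * (‖W.d ξ‖ * ‖V.d ξ‖)) + 2 * k ^ 2 * (wt ξ * (W.q ξ * V.q ξ)) := by positivity
    linarith
  · push Not at h
    have h0 : 0 < ‖ξ‖ := by linarith
    have hA : ga k ξ * |‖ξ‖ ^ 2 - k ^ 2| ≤ 2 * wt ξ * ‖ξ‖ ^ 2 := by
      have : ga k ξ * |‖ξ‖ ^ 2 - k ^ 2| ≤ ‖ξ‖ := by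
        rw [ga, abs_sub_comm, inv_mul_eq_div, Real.div_sqrt, Real.sqrt_le_iff]
        refine ⟨h0.le, ?_⟩
        rw [abs_of_nonneg (by nlinarith)]; nlinarith
      have h5 := wt_ge (ξ := ξ) (by linarith)
      calc _ ≤ ‖ξ‖ := this
        _ = ‖ξ‖⁻¹ * ‖ξ‖ ^ 2 := by field_simp
        _ ≤ _ := by gcongr
    have hG := ga_high hk h
    rw [div_le_iff₀ (by positivity)]
    calc _ = (ga k ξ * |‖ξ‖ ^ 2 - k ^ 2|) * (‖W.d ξ‖ * ‖V.d ξ‖) +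
          ga k ξ * (k ^ 2 * (‖curlFt W.f1 W.f2 ξ‖ * ‖curlFt V.f1 V.f2 ξ‖)) := by ring
      _ ≤ (2 * wt ξ * ‖ξ‖ ^ 2) * (‖W.d ξ‖ * ‖V.d ξ‖) + (2 * wt ξ) * (k ^ 2 * (‖ξ‖ ^ 2 * (W.q ξ * V.q ξ))) := by
          gcongr
      _ = (2 * (wt ξ * (‖W.d ξ‖ * ‖V.d ξ‖)) + 2 * k ^ 2 * (wt ξ * (W.q ξ * V.q ξ))) * ‖ξ‖ ^ 2 := by ring
      _ ≤ _ := by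
          have : 0 ≤ (9 * (2 * k + 1) ^ 2) * (rho k (2 * k + 1) ξ * (W.q ξ * V.q ξ)) := by positivity
          exact mul_le_mul_of_nonneg_right (by linarith) (by positivity)

lemma Bi_bound (hK : Bornology.IsBounded Γ) {k : ℝ} (hk : 0 < k) : ∃ C : ℝ, 0 ≤ C ∧ ∀ W V : HX Γ,
    Integrable (Bi k W V) ∧ ‖∫ ξ, Bi k W V ξ‖ ≤ C * ‖W‖ * ‖V‖ := by
  obtain ⟨C, hC, hr⟩ := HX.rkhs hK (2 * k + 1)
  have hri := rho_int hk (2 * k + 1)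
  have hr0 := rho_nonneg k (2 * k + 1)
  set J := ∫ ξ, rho k (2 * k + 1) ξ with hJ
  have hJ0 : 0 ≤ J := integral_nonneg hr0
  refine ⟨2 + 2 * k ^ 2 * 4 + (9 * (2 * k + 1) ^ 2) * (4 * C ^ 2 * J), by positivity, fun W V => ?_⟩
  have i1 := wprod (u := fun ξ => ‖W.d ξ‖) (v := fun ξ => ‖V.d ξ‖) W.hd.1.norm V.hd.1.norm (fun _ => norm_nonneg _)
    (fun _ => norm_nonneg _) W.hd.2 V.hd.2 (norm_nonneg W) (norm_nonneg V) W.nd_le V.nd_le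
  have i2 := wprod W.q_cont V.q_cont W.q_nonneg V.q_nonneg W.q_int.1 V.q_int.1 (by positivity) (by positivity)
    W.q_int.2 V.q_int.2
  have hq : ∀ (W : HX Γ) ξ, ‖ξ‖ ≤ 2 * k + 1 → W.q ξ ≤ 2 * (C * ‖W‖) := by
    intro W ξ h
    have := hr W ξ ξ h h
    unfold HX.q; linarith [this.1, this.2.1]
  have p3 : ∀ ξ, rho k (2 * k + 1) ξ * (W.q ξ * V.q ξ) ≤ (4 * C ^ 2 * ‖W‖ * ‖V‖) * rho k (2 * k + 1) ξ := by
    intro ξ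
    by_cases h : ‖ξ‖ < 2 * k + 1
    · have h1 := mul_le_mul (hq W ξ h.le) (hq V ξ h.le) (V.q_nonneg ξ) (by positivity)
      have := mul_le_mul_of_nonneg_left h1 (hr0 ξ)
      refine this.trans_eq (by ring)
    · rw [rho, Set.indicator_of_notMem (by simpa using h)]; simp
  have i3 : Integrable (fun ξ => rho k (2 * k + 1) ξ * (W.q ξ * V.q ξ)) := by
    refine (hri.const_mul (4 * C ^ 2 * ‖W‖ * ‖V‖)).mono' (hri.1.mul (W.q_cont.mul V.q_cont).aestronglyMeasurable)
      (Eventually.of_forall fun ξ => ?_)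
    rw [Real.norm_of_nonneg (mul_nonneg (hr0 ξ) (mul_nonneg (W.q_nonneg ξ) (V.q_nonneg ξ)))]
    exact p3 ξ
  have j3 : ∫ ξ, rho k (2 * k + 1) ξ * (W.q ξ * V.q ξ) ≤ (4 * C ^ 2 * ‖W‖ * ‖V‖) * J := by
    rw [hJ, ← integral_const_mul]
    exact integral_mono i3 (hri.const_mul _) p3
  have hi := ((i1.1.const_mul 2).add (i2.1.const_mul (2 * k ^ 2))).add (i3.const_mul (9 * (2 * k + 1) ^ 2))
  refine ⟨hi.mono' (Bi_meas k W V).aestronglyMeasurable (Eventually.of_forall fun ξ => Bi_norm hk W V ξ), ?_⟩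
  refine (norm_integral_le_of_norm_le hi (Eventually.of_forall fun ξ => Bi_norm hk W V ξ)).trans ?_
  rw [integral_add' ((i1.1.const_mul 2).add (i2.1.const_mul (2 * k ^ 2))) (i3.const_mul (9 * (2 * k + 1) ^ 2)),
    integral_add' (i1.1.const_mul 2) (i2.1.const_mul (2 * k ^ 2)), integral_const_mul, integral_const_mul, integral_const_mul]
  calc _ ≤ 2 * (‖W‖ * ‖V‖) + 2 * k ^ 2 * (2 * ‖W‖ * (2 * ‖V‖)) + 9 * (2 * k + 1) ^ 2 * ((4 * C ^ 2 * ‖W‖ * ‖V‖) * J) := by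
        gcongr
        exact i1.2
        exact i2.2
    _ = _ := by ring

lemma Bi_add_left (k : ℝ) (W W' V : HX Γ) : Bi k (W + W') V = fun ξ => Bi k W V ξ + Bi k W' V ξ := by
  ext ξ
  simp only [Bi, Bintegrand, HX.f1_add, HX.f2_add, dotFt, curlFt, Pi.add_apply]
  ring

lemma Bi_add_right (k : ℝ) (W V V' : HX Γ) : Bi k W (V + V') = fun ξ => Bi k W V ξ + Bi k W V' ξ := by
  ext ξ
  simp only [Bi, Bintegrand, HX.f1_add, HX.f2_add, dotFt, curlFt, Pi.add_apply, map_add, map_mul, map_sub]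
  ring

lemma Bi_smul_left (k : ℝ) (a : ℂ) (W V : HX Γ) : Bi k (a • W) V = fun ξ => a * Bi k W V ξ := by
  ext ξ
  simp only [Bi, Bintegrand, HX.f1_smul, HX.f2_smul, dotFt, curlFt, Pi.smul_apply, smul_eq_mul]
  ring

lemma Bi_smul_right (k : ℝ) (a : ℂ) (W V : HX Γ) : Bi k W (a • V) = fun ξ => starRingEnd ℂ a * Bi k W V ξ := by
  ext ξ
  simp only [Bi, Bintegrand, HX.f1_smul, HX.f2_smul, dotFt, curlFt, Pi.smul_apply, smul_eq_mul, map_add, map_mul, map_sub]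
  ring

lemma A_exists (hK : Bornology.IsBounded Γ) {k : ℝ} (hk : 0 < k) : ∃ A : HX Γ →L[ℂ] HX Γ, ∀ W V : HX Γ,
    inner ℂ V (A W) = ∫ ξ, Bi k W V ξ := by
  obtain ⟨C, hC, h⟩ := Bi_bound hK hk
  haveI := HX.complete hK
  let f : HX Γ →ₗ⋆[ℂ] HX Γ →ₗ[ℂ] ℂ := LinearMap.mk₂'ₛₗ (starRingEnd ℂ) (RingHom.id ℂ) (fun V W => ∫ ξ, Bi k W V ξ)
    (by intro V V' W; rw [Bi_add_right, integral_add (h W V).1 (h W V').1])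
    (by intro a V W; rw [Bi_smul_right, integral_const_mul]; rfl)
    (by intro V W W'; rw [Bi_add_left, integral_add (h W V).1 (h W' V).1])
    (by intro a V W; rw [Bi_smul_left, integral_const_mul]; rfl)
  let F := LinearMap.mkContinuous₂ f C (fun V W => (h W V).2.trans_eq (by ring))
  refine ⟨ContinuousLinearMap.adjoint (InnerProductSpace.continuousLinearMapOfBilin F), fun W V => ?_⟩
  rw [ContinuousLinearMap.adjoint_inner_right, InnerProductSpace.continuousLinearMapOfBilin_apply]
  rfl

end

noncomputable section
open MeasureTheory Complex Filter Topology
open scoped Real NNReal ContDiff FourierTransform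

variable {Γ : Set R2}

lemma S_HX (hΓ : IsLipschitzDomain Γ) : ∃ (S : HX Γ →ₗ[ℂ] HX Γ) (C : ℝ), 0 ≤ C ∧ ∀ D : HX Γ,
    (S D).d = D.d ∧ Integrable (fun ξ => (wt ξ)⁻¹ * (S D).q ξ ^ 2) ∧ ∫ ξ, (wt ξ)⁻¹ * (S D).q ξ ^ 2 ≤ C * ‖D‖ ^ 2 ∧
    ‖S D‖ ^ 2 ≤ C * ‖D‖ ^ 2 := by
  obtain ⟨S, C, hC, h⟩ := S_exists hΓ
  let S' : HX Γ →ₗ[ℂ] HX Γ := S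
  refine ⟨S', 2 * C + 1, by positivity, fun D => ?_⟩
  obtain ⟨h1, h2, h3⟩ := h D
  have h1 : (S' D).d = D.d := h1
  have h2 : Integrable (fun ξ => (wt ξ)⁻¹ * (‖(S' D).f1 ξ‖ ^ 2 + ‖(S' D).f2 ξ‖ ^ 2)) := h2
  have h3 : ∫ ξ, (wt ξ)⁻¹ * (‖(S' D).f1 ξ‖ ^ 2 + ‖(S' D).f2 ξ‖ ^ 2) ≤ C * ‖D‖ ^ 2 := by
    rw [HX.norm_sq]; exact h3
  have hle : ∀ ξ, (wt ξ)⁻¹ * (S' D).q ξ ^ 2 ≤ 2 * ((wt ξ)⁻¹ * (‖(S' D).f1 ξ‖ ^ 2 + ‖(S' D).f2 ξ‖ ^ 2)) := by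
    intro ξ
    have := wti_pos ξ
    unfold HX.q
    nlinarith [mul_nonneg this.le (sq_nonneg (‖(S' D).f1 ξ‖ - ‖(S' D).f2 ξ‖))]
  have hi : Integrable (fun ξ => (wt ξ)⁻¹ * (S' D).q ξ ^ 2) := by
    refine (h2.const_mul 2).mono' (wti_cont.mul ((S' D).q_cont.pow 2)).aestronglyMeasurable (Eventually.of_forall fun ξ => ?_)
    rw [Real.norm_of_nonneg (mul_nonneg (wti_pos ξ).le (sq_nonneg _))]
    exact hle ξ
  refine ⟨h1, hi, ?_, ?_⟩
  · refine (integral_mono hi (h2.const_mul 2) hle).trans ?_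
    rw [integral_const_mul]; nlinarith [sq_nonneg ‖D‖]
  · rw [HX.norm_sq, h1]
    have : Nw (S' D).f1 + Nw (S' D).f2 ≤ C * ‖D‖ ^ 2 := by
      refine le_trans ?_ h3
      unfold Nw
      rw [← integral_add (S' D).h1.2 (S' D).h2.2]
      refine integral_mono ((S' D).h1.2.add (S' D).h2.2) h2 fun ξ => ?_
      simp only [Pi.add_apply]
      rw [← mul_add]
      have : wt ξ ≤ (wt ξ)⁻¹ := (wt_le_one ξ).trans ((one_le_inv₀ (wt_pos ξ)).2 (wt_le_one ξ))
      gcongr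
    have h4 := D.nd_le
    nlinarith [sq_nonneg ‖D‖]

/-- low frequency weight -/
def lo (k R : ℝ) (ξ : R2) : ℝ := (Metric.ball (0 : R2) R).indicator (fun ξ => 1 + ga k ξ) ξ

lemma lo_nonneg (k R : ℝ) (ξ : R2) : 0 ≤ lo k R ξ :=
  Set.indicator_nonneg (fun ξ _ => by have := ga_nonneg k ξ; positivity) _

lemma lo_in {k R : ℝ} {ξ : R2} (h : ‖ξ‖ < R) : lo k R ξ = 1 + ga k ξ := by
  rw [lo, Set.indicator_of_mem (by simpa using h)]

lemma lo_out {k R : ℝ} {ξ : R2} (h : ¬ ‖ξ‖ < R) : lo k R ξ = 0 := by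
  rw [lo, Set.indicator_of_notMem (by simpa using h)]

lemma lo_int {k : ℝ} (hk : 0 < k) (R : ℝ) : Integrable (lo k R) := by
  have h1 : Integrable ((Metric.ball (0 : R2) R).indicator (fun _ => (1:ℝ))) :=
    (integrable_indicator_iff Metric.isOpen_ball.measurableSet).2 (integrableOn_const (Metric.isBounded_ball.measure_lt_top.ne) (by simp))
  refine (h1.add (rho_int hk R)).congr (Eventually.of_forall fun ξ => ?_)
  simp only [Pi.add_apply, rho, lo]
  rw [← Pi.add_apply, ← Set.indicator_add']
  rfl

lemma lowfreq (hK : Bornology.IsBounded Γ) {k : ℝ} (hk : 0 < k) (R : ℝ) {δ : ℝ} (hδ : 0 < δ) :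
    ∃ (P : Finset R2) (C : ℝ), 0 ≤ C ∧ ∀ V : HX Γ, Integrable (fun ξ => lo k R ξ * V.q ξ ^ 2) ∧
      ∫ ξ, lo k R ξ * V.q ξ ^ 2 ≤ δ * ‖V‖ ^ 2 + C * ∑ p ∈ P, V.q p ^ 2 := by
  obtain ⟨C, hC, hr⟩ := HX.rkhs hK R
  have hi := lo_int hk R
  set J := ∫ ξ, lo k R ξ with hJ
  have hJ0 : 0 ≤ J := integral_nonneg (lo_nonneg k R)
  obtain ⟨η, hη, hηδ⟩ : ∃ η : ℝ, 0 < η ∧ J * (8 * C ^ 2 * η ^ 2) ≤ δ := by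
    refine ⟨√(δ / (J * (8 * C ^ 2) + 1)), by positivity, ?_⟩
    rw [Real.sq_sqrt (by positivity)]
    rw [← mul_assoc, ← mul_div_assoc, div_le_iff₀ (by positivity)]
    nlinarith
  obtain ⟨t, ht, htf, hcov⟩ := (isCompact_closedBall (0 : R2) R).finite_cover_balls hη
  refine ⟨htf.toFinset, J * 2, by positivity, fun V => ?_⟩
  have hpt : ∀ ξ, lo k R ξ * V.q ξ ^ 2 ≤ (8 * C ^ 2 * η ^ 2 * ‖V‖ ^ 2 + 2 * ∑ p ∈ htf.toFinset, V.q p ^ 2) * lo k R ξ := by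
    intro ξ
    by_cases h : ‖ξ‖ < R
    · have hm : ξ ∈ Metric.closedBall (0 : R2) R := by simpa using h.le
      have := hcov hm
      simp only [Set.mem_iUnion] at this
      obtain ⟨p, hp, hpξ⟩ := this
      have hpR : ‖p‖ ≤ R := by simpa using ht hp
      have hd : ‖ξ - p‖ ≤ η := by rw [← dist_eq_norm]; exact (Metric.mem_ball.1 hpξ).le
      obtain ⟨-, -, a1, a2⟩ := hr V ξ p h.le hpR
      have b : V.q ξ ≤ V.q p + 2 * (C * ‖V‖ * η) := by
        have c1 : C * ‖V‖ * ‖ξ - p‖ ≤ C * ‖V‖ * η := by gcongr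
        unfold HX.q
        have e1 := norm_sub_norm_le (V.f1 ξ) (V.f1 p)
        have e2 := norm_sub_norm_le (V.f2 ξ) (V.f2 p)
        linarith
      have b2 : V.q ξ ^ 2 ≤ 2 * V.q p ^ 2 + 8 * C ^ 2 * η ^ 2 * ‖V‖ ^ 2 := by
        have := pow_le_pow_left₀ (V.q_nonneg ξ) b 2
        nlinarith [sq_nonneg (V.q p - 2 * (C * ‖V‖ * η))]
      have b3 : V.q p ^ 2 ≤ ∑ p ∈ htf.toFinset, V.q p ^ 2 :=
        Finset.single_le_sum (f := fun p => V.q p ^ 2) (fun _ _ => sq_nonneg _) (by simpa using hp)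
      rw [mul_comm]
      exact mul_le_mul_of_nonneg_right (by linarith) (lo_nonneg _ _ _)
    · rw [lo_out h]; simp
  have hi2 : Integrable (fun ξ => lo k R ξ * V.q ξ ^ 2) := by
    refine (hi.const_mul (8 * C ^ 2 * η ^ 2 * ‖V‖ ^ 2 + 2 * ∑ p ∈ htf.toFinset, V.q p ^ 2)).mono'
      (hi.1.mul (V.q_cont.pow 2).aestronglyMeasurable) (Eventually.of_forall fun ξ => ?_)
    rw [Real.norm_of_nonneg (mul_nonneg (lo_nonneg _ _ _) (sq_nonneg _))]
    exact hpt ξ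
  refine ⟨hi2, (integral_mono hi2 (hi.const_mul _) hpt).trans ?_⟩
  rw [integral_const_mul, ← hJ]
  nlinarith [mul_le_mul_of_nonneg_right hηδ (sq_nonneg ‖V‖)]

lemma dc_sq (F1 F2 : R2 → ℂ) (ξ : R2) : ‖dotFt F1 F2 ξ‖ ^ 2 + ‖curlFt F1 F2 ξ‖ ^ 2 = ‖ξ‖ ^ 2 * (‖F1 ξ‖ ^ 2 + ‖F2 ξ‖ ^ 2) := by
  rw [EuclideanSpace.norm_sq_eq ξ, Fin.sum_univ_two]
  simp only [← Complex.normSq_eq_norm_sq, dotFt, curlFt, Complex.normSq_apply, Real.norm_eq_abs, sq_abs]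
  simp
  ring

lemma re_high {a q : ℂ} : (a * starRingEnd ℂ (2 * q - a)).re ≤ 2 * ‖q‖ ^ 2 - ‖a‖ ^ 2 / 2 := by
  simp only [← Complex.normSq_eq_norm_sq, Complex.normSq_apply]
  simp
  nlinarith [sq_nonneg (a.re - 2 * q.re), sq_nonneg (a.im - 2 * q.im)]


lemma real_high {k r m h d2 c2 q2 F Q : ℝ} (hk : 0 < k) (hr : 2 * k + 1 ≤ r) (hm : 0 < m) (hmr : m ^ 2 = r ^ 2 - k ^ 2)
    (hh : 0 < h) (hhr : h ^ 2 = 1 + r ^ 2) (hd : 0 ≤ d2) (hF : 0 ≤ F) (hQ : 0 ≤ Q) (hdc : d2 + c2 = r ^ 2 * F)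
    (hq : q2 ≤ r ^ 2 * Q) :
    1 / 4 * (h⁻¹ * d2) + k ^ 2 / 2 * (h⁻¹ * F) ≤ (m⁻¹ / r ^ 2) * (m ^ 2 * d2 - k ^ 2 * (2 * q2 - c2 / 2)) + 4 * k ^ 2 * (h⁻¹ * Q) := by
  have hr0 : 0 < r := by linarith
  have e : (m⁻¹ / r ^ 2) * (m ^ 2 * d2 - k ^ 2 * (2 * q2 - c2 / 2)) =
      d2 * ((m - k ^ 2 / (2 * m)) / r ^ 2) + k ^ 2 / 2 * (m⁻¹ * F) - 2 * k ^ 2 * (m⁻¹ * (q2 / r ^ 2)) := by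
    have : c2 = r ^ 2 * F - d2 := by linarith
    rw [this]; field_simp; ring
  have a1 : h⁻¹ ≤ m⁻¹ := by
    gcongr
    nlinarith
  have a2 : m⁻¹ ≤ 2 * h⁻¹ := by
    rw [← div_eq_mul_inv, inv_eq_one_div, div_le_div_iff₀ hm hh]
    nlinarith
  have a3 : q2 / r ^ 2 ≤ Q := by rw [div_le_iff₀ (by positivity)]; linarith
  have a4 : 1 / 4 * h⁻¹ ≤ (m - k ^ 2 / (2 * m)) / r ^ 2 := by
    have b1 : k ^ 2 / (2 * m) ≤ m / 2 := by
      rw [div_le_div_iff₀ (by positivity) (by norm_num)]; nlinarith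
    have b2 : h ≤ 2 * m := by nlinarith
    rw [le_div_iff₀ (by positivity)]
    have b3 : h⁻¹ * r ^ 2 ≤ h := by
      rw [inv_mul_le_iff₀ hh]; nlinarith
    linarith
  have a5 : m⁻¹ * (q2 / r ^ 2) ≤ 2 * h⁻¹ * Q := by
    calc _ ≤ m⁻¹ * Q := by gcongr
      _ ≤ _ := by gcongr
  have a6 := mul_le_mul_of_nonneg_left a4 hd
  have a7 : k ^ 2 / 2 * (h⁻¹ * F) ≤ k ^ 2 / 2 * (m⁻¹ * F) := by gcongr
  have a8 := mul_le_mul_of_nonneg_left a5 (by positivity : (0:ℝ) ≤ 2 * k ^ 2)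
  rw [e]
  linarith

/-- the reflected test field -/
def HX.refl (s D : HX Γ) : HX Γ := (2 : ℂ) • s - D

lemma curl_refl (s D : HX Γ) (ξ : R2) : curlFt (s.refl D).f1 (s.refl D).f2 ξ = 2 * curlFt s.f1 s.f2 ξ - curlFt D.f1 D.f2 ξ := by
  unfold HX.refl
  simp only [HX.f1_sub, HX.f2_sub, HX.f1_smul, HX.f2_smul, curlFt, Pi.sub_apply, Pi.smul_apply, smul_eq_mul]
  ring

lemma d_refl {s D : HX Γ} (h : s.d = D.d) : (s.refl D).d = D.d := by
  unfold HX.refl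
  rw [HX.d_sub, HX.d_smul, h]
  ext ξ
  simp only [Pi.sub_apply, Pi.smul_apply, smul_eq_mul]
  ring

lemma q_refl (s D : HX Γ) (ξ : R2) : (s.refl D).q ξ ≤ 2 * s.q ξ + D.q ξ := by
  unfold HX.refl HX.q
  simp only [HX.f1_sub, HX.f2_sub, HX.f1_smul, HX.f2_smul, Pi.sub_apply, Pi.smul_apply, smul_eq_mul]
  have h1 := norm_sub_le (2 * s.f1 ξ) (D.f1 ξ)
  have h2 := norm_sub_le (2 * s.f2 ξ) (D.f2 ξ)
  rw [norm_mul] at h1 h2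
  simp only [Complex.norm_ofNat] at h1 h2
  linarith

lemma pt_high {k : ℝ} (hk : 0 < k) {s D : HX Γ} (h : s.d = D.d) {ξ : R2} (hξ : 2 * k + 1 ≤ ‖ξ‖) :
    1 / 4 * (wt ξ * ‖D.d ξ‖ ^ 2) + k ^ 2 / 2 * (wt ξ * (‖D.f1 ξ‖ ^ 2 + ‖D.f2 ξ‖ ^ 2)) ≤
    (Bi k D (s.refl D) ξ).re + 4 * k ^ 2 * (wt ξ * s.q ξ ^ 2) := by
  have hp : 0 < ‖ξ‖ ^ 2 - k ^ 2 := by nlinarith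
  have hm : 0 < √(‖ξ‖ ^ 2 - k ^ 2) := Real.sqrt_pos.2 hp
  have hms : √(‖ξ‖ ^ 2 - k ^ 2) ^ 2 = ‖ξ‖ ^ 2 - k ^ 2 := Real.sq_sqrt hp.le
  have hq2 : ‖curlFt s.f1 s.f2 ξ‖ ^ 2 ≤ ‖ξ‖ ^ 2 * s.q ξ ^ 2 := by
    rw [← mul_pow]; exact pow_le_pow_left₀ (norm_nonneg _) (s.c_le ξ) 2
  have key := real_high hk hξ hm hms (h := √(1 + ‖ξ‖ ^ 2)) (by positivity) (Real.sq_sqrt (by positivity))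
    (sq_nonneg ‖D.d ξ‖) (by positivity : 0 ≤ ‖D.f1 ξ‖ ^ 2 + ‖D.f2 ξ‖ ^ 2) (sq_nonneg (s.q ξ)) (dc_sq D.f1 D.f2 ξ) hq2
  rw [← wt_eq] at key
  refine key.trans ?_
  gcongr
  have e : Bi k D (s.refl D) ξ = (((√(‖ξ‖ ^ 2 - k ^ 2))⁻¹ / ‖ξ‖ ^ 2 : ℝ) : ℂ) *
      (((‖ξ‖ ^ 2 - k ^ 2 : ℝ) : ℂ) * (D.d ξ * starRingEnd ℂ (D.d ξ)) -
      ((k ^ 2 : ℝ) : ℂ) * (curlFt D.f1 D.f2 ξ * starRingEnd ℂ (2 * curlFt s.f1 s.f2 ξ - curlFt D.f1 D.f2 ξ))) := by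
    have e1 : dotFt (s.refl D).f1 (s.refl D).f2 = D.d := d_refl h
    unfold Bi Bintegrand
    rw [e1, curl_refl, g0hat, if_neg (by push Not; linarith)]
    unfold HX.d
    push_cast
    ring
  rw [e, Complex.re_ofReal_mul, Complex.sub_re, Complex.re_ofReal_mul, Complex.re_ofReal_mul, hms, Complex.mul_conj,
    Complex.ofReal_re, Complex.normSq_eq_norm_sq]
  have := re_high (a := curlFt D.f1 D.f2 ξ) (q := curlFt s.f1 s.f2 ξ)
  gcongr

lemma pt_low {k : ℝ} (hk : 0 < k) : ∃ M : ℝ, 0 ≤ M ∧ ∀ {s D : HX Γ} (_ : s.d = D.d) {ξ : R2} (_ : ‖ξ‖ < 2 * k + 1),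
    1 / 4 * (wt ξ * ‖D.d ξ‖ ^ 2) + k ^ 2 / 2 * (wt ξ * (‖D.f1 ξ‖ ^ 2 + ‖D.f2 ξ‖ ^ 2)) ≤
    (Bi k D (s.refl D) ξ).re + M * (lo k (2 * k + 1) ξ * D.q ξ ^ 2 + lo k (2 * k + 1) ξ * s.q ξ ^ 2) := by
  set R := 2 * k + 1 with hR
  refine ⟨(1 / 4 * R ^ 2 + k ^ 2 / 2 + (2 * R ^ 2 + 6 * k ^ 2 + 27 * R ^ 2)), by positivity, fun {s D} h {ξ} hξ => ?_⟩
  have hw := wt_pos ξ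
  have hw1 := wt_le_one ξ
  have hg := ga_nonneg k ξ
  have hqD := D.q_nonneg ξ
  have hqs := s.q_nonneg ξ
  have hre : -‖Bi k D (s.refl D) ξ‖ ≤ (Bi k D (s.refl D) ξ).re := (abs_le.1 (Complex.abs_re_le_norm _)).1
  have hB := Bi_norm hk D (s.refl D) ξ
  rw [d_refl h, rho, Set.indicator_of_mem (by simpa using hξ), ← hR] at hB
  rw [lo_in hξ, ← mul_add]
  set Q := D.q ξ ^ 2 + s.q ξ ^ 2 with hQ
  have hQ0 : 0 ≤ Q := by positivity
  have hd : ‖D.d ξ‖ ^ 2 ≤ R ^ 2 * Q := by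
    calc _ ≤ (‖ξ‖ * D.q ξ) ^ 2 := by gcongr; exact D.d_le ξ
      _ = ‖ξ‖ ^ 2 * D.q ξ ^ 2 := by ring
      _ ≤ _ := by gcongr; nlinarith
  have hf : ‖D.f1 ξ‖ ^ 2 + ‖D.f2 ξ‖ ^ 2 ≤ Q := by
    have : 0 ≤ ‖D.f1 ξ‖ * ‖D.f2 ξ‖ := by positivity
    rw [hQ]; unfold HX.q; nlinarith [sq_nonneg (s.q ξ), sq_nonneg (‖s.f1 ξ‖ + ‖s.f2 ξ‖)]
  have hqq : D.q ξ * (s.refl D).q ξ ≤ 3 * Q := by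
    calc _ ≤ D.q ξ * (2 * s.q ξ + D.q ξ) := by gcongr; exact q_refl s D ξ
      _ ≤ _ := by nlinarith [sq_nonneg (D.q ξ - s.q ξ)]
  have hqr := (s.refl D).q_nonneg ξ
  have t1 : wt ξ * ‖D.d ξ‖ ^ 2 ≤ R ^ 2 * Q := by
    calc _ ≤ 1 * ‖D.d ξ‖ ^ 2 := by gcongr
      _ ≤ _ := by linarith
  have t2 : wt ξ * (‖D.f1 ξ‖ ^ 2 + ‖D.f2 ξ‖ ^ 2) ≤ Q := by
    calc _ ≤ 1 * (‖D.f1 ξ‖ ^ 2 + ‖D.f2 ξ‖ ^ 2) := by gcongr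
      _ ≤ _ := by linarith
  have t3 : wt ξ * (D.q ξ * (s.refl D).q ξ) ≤ 3 * Q := by
    calc _ ≤ 1 * (D.q ξ * (s.refl D).q ξ) := by gcongr
      _ ≤ _ := by linarith
  have t4 : ga k ξ * (D.q ξ * (s.refl D).q ξ) ≤ ga k ξ * (3 * Q) := by gcongr
  have u2 := mul_le_mul_of_nonneg_left t2 (by positivity : 0 ≤ k ^ 2 / 2)
  have u3 := mul_le_mul_of_nonneg_left t3 (by positivity : 0 ≤ 2 * k ^ 2)
  have u4 := mul_le_mul_of_nonneg_left t4 (by positivity : 0 ≤ 9 * R ^ 2)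
  have v1 : 0 ≤ ga k ξ * Q * (1 / 4 * R ^ 2 + k ^ 2 / 2 + (2 * R ^ 2 + 6 * k ^ 2)) := by positivity
  have v2 : 0 ≤ 27 * R ^ 2 * Q := by positivity
  rw [← sq] at hB
  nlinarith

end

noncomputable section
open MeasureTheory Complex Filter Topology
open scoped Real NNReal ContDiff FourierTransform

variable {Γ : Set R2}

lemma wt_split {ε : ℝ} (hε : 0 < ε) (k : ℝ) {R : ℝ} (hR : ε⁻¹ + 1 ≤ R) (Q : ℝ) (hQ : 0 ≤ Q) (ξ : R2) :
    wt ξ * Q ≤ ε * ((wt ξ)⁻¹ * Q) + lo k R ξ * Q := by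
  have hw := wt_pos ξ
  by_cases h : ‖ξ‖ < R
  · rw [lo_in h]
    have h1 : wt ξ * Q ≤ 1 * Q := by gcongr; exact wt_le_one ξ
    have h2 : 0 ≤ ε * ((wt ξ)⁻¹ * Q) := by positivity
    have h3 : 0 ≤ ga k ξ * Q := mul_nonneg (ga_nonneg _ _) hQ
    nlinarith
  · rw [lo_out h, zero_mul, add_zero, ← mul_assoc]
    push Not at h
    gcongr
    rw [← div_eq_mul_inv, le_div_iff₀ hw, ← sq, wt_sq, inv_le_comm₀ (by positivity) hε]
    have : 0 < ε⁻¹ := by positivity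
    nlinarith

lemma lo_mono (k : ℝ) {R R' : ℝ} (h : R ≤ R') (ξ : R2) : lo k R ξ ≤ lo k R' ξ := by
  by_cases h1 : ‖ξ‖ < R
  · rw [lo_in h1, lo_in (h1.trans_le h)]
  · rw [lo_out h1]; exact lo_nonneg _ _ _

lemma key_ineq (hΓ : IsLipschitzDomain Γ) {k : ℝ} (hk : 0 < k) : ∃ (S : HX Γ →ₗ[ℂ] HX Γ) (C c : ℝ) (P : Finset R2),
    0 ≤ C ∧ 0 < c ∧ ∀ D : HX Γ, ‖S D‖ ^ 2 ≤ C * ‖D‖ ^ 2 ∧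
      c * ‖D‖ ^ 2 ≤ (∫ ξ, Bi k D ((S D).refl D) ξ).re + C * ∑ p ∈ P, (D.q p ^ 2 + (S D).q p ^ 2) := by
  have hK := hΓ.2.1
  obtain ⟨S, CS, hCS, hS⟩ := S_HX hΓ
  obtain ⟨M, hM, hlow⟩ := pt_low (Γ := Γ) hk
  obtain ⟨CB, -, hB⟩ := Bi_bound hK hk
  obtain ⟨κ, hκ, hκ1, hκ2⟩ : ∃ κ : ℝ, 0 < κ ∧ κ ≤ 1 / 4 ∧ κ ≤ k ^ 2 / 2 :=
    ⟨min (1/4) (k ^ 2 / 2), by positivity, min_le_left _ _, min_le_right _ _⟩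
  obtain ⟨ε, hε, hεκ⟩ : ∃ ε : ℝ, 0 < ε ∧ 4 * k ^ 2 * (ε * CS) ≤ κ / 4 := by
    refine ⟨κ / 4 / (4 * k ^ 2 * CS + 1), by positivity, ?_⟩
    have : 4 * k ^ 2 * (κ / 4 / (4 * k ^ 2 * CS + 1) * CS) = (4 * k ^ 2 * CS) * (κ / 4) / (4 * k ^ 2 * CS + 1) := by ring
    rw [this, div_le_iff₀ (by positivity)]
    nlinarith
  set R := max (2 * k + 1) (ε⁻¹ + 1) with hR
  set N := M + 4 * k ^ 2 with hN
  have hN0 : 0 < N := by positivity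
  obtain ⟨δ, hδ, hδκ⟩ : ∃ δ : ℝ, 0 < δ ∧ N * (δ * (1 + CS)) ≤ κ / 4 := by
    refine ⟨κ / 4 / (N * (1 + CS)), by positivity, le_of_eq ?_⟩
    field_simp
  obtain ⟨P, CP, hCP, hP⟩ := lowfreq hK hk R hδ
  refine ⟨S, CS + N * CP, κ / 2, P, by positivity, by positivity, fun D => ?_⟩
  obtain ⟨s1, s2, s3, s4⟩ := hS D
  have hQ : (0:ℝ) ≤ ‖D‖ ^ 2 := by positivity
  have hsum : 0 ≤ ∑ p ∈ P, (D.q p ^ 2 + (S D).q p ^ 2) := Finset.sum_nonneg fun _ _ => by positivity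
  refine ⟨s4.trans (by nlinarith [mul_nonneg hN0.le hCP]), ?_⟩
  obtain ⟨bi, -⟩ := hB D ((S D).refl D)
  obtain ⟨l1, l2⟩ := hP D
  obtain ⟨l3, l4⟩ := hP (S D)
  have hpt : ∀ ξ, κ * (wt ξ * ‖D.f1 ξ‖ ^ 2 + wt ξ * ‖D.f2 ξ‖ ^ 2 + wt ξ * ‖D.d ξ‖ ^ 2) ≤
      ((Bi k D ((S D).refl D) ξ).re + 4 * k ^ 2 * (ε * ((wt ξ)⁻¹ * (S D).q ξ ^ 2))) +
        N * (lo k R ξ * D.q ξ ^ 2 + lo k R ξ * (S D).q ξ ^ 2) := by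
    intro ξ
    have hw := wt_pos ξ
    have hl : lo k (2 * k + 1) ξ ≤ lo k R ξ := lo_mono k (le_max_left _ _) ξ
    have hl0 := lo_nonneg k R ξ
    have a0 : κ * (wt ξ * ‖D.f1 ξ‖ ^ 2 + wt ξ * ‖D.f2 ξ‖ ^ 2 + wt ξ * ‖D.d ξ‖ ^ 2) ≤
        1 / 4 * (wt ξ * ‖D.d ξ‖ ^ 2) + k ^ 2 / 2 * (wt ξ * (‖D.f1 ξ‖ ^ 2 + ‖D.f2 ξ‖ ^ 2)) := by
      have a1 := mul_le_mul_of_nonneg_right hκ1 (by positivity : 0 ≤ wt ξ * ‖D.d ξ‖ ^ 2)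
      have a2 := mul_le_mul_of_nonneg_right hκ2 (by positivity : 0 ≤ wt ξ * (‖D.f1 ξ‖ ^ 2 + ‖D.f2 ξ‖ ^ 2))
      linarith
    refine a0.trans ?_
    have p1 : 0 ≤ 4 * k ^ 2 * (ε * ((wt ξ)⁻¹ * (S D).q ξ ^ 2)) := by positivity
    have p2 : 0 ≤ lo k R ξ * D.q ξ ^ 2 := by positivity
    have p3 : 0 ≤ lo k R ξ * (S D).q ξ ^ 2 := by positivity
    have p4 : 0 ≤ k ^ 2 * (lo k R ξ * D.q ξ ^ 2) := by positivity
    have p5 : 0 ≤ k ^ 2 * (lo k R ξ * (S D).q ξ ^ 2) := by positivity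
    have p6 : 0 ≤ M * (lo k R ξ * D.q ξ ^ 2) := by positivity
    have p7 : 0 ≤ M * (lo k R ξ * (S D).q ξ ^ 2) := by positivity
    by_cases h : ‖ξ‖ < 2 * k + 1
    · refine (hlow s1 h).trans ?_
      have : M * (lo k (2 * k + 1) ξ * D.q ξ ^ 2 + lo k (2 * k + 1) ξ * (S D).q ξ ^ 2) ≤
          M * (lo k R ξ * D.q ξ ^ 2 + lo k R ξ * (S D).q ξ ^ 2) := by gcongr
      rw [hN]
      linarith
    · refine (pt_high hk s1 (not_lt.1 h)).trans ?_
      have := mul_le_mul_of_nonneg_left (wt_split hε k (le_max_right (2 * k + 1) _) _ (sq_nonneg ((S D).q ξ)) ξ)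
        (by positivity : 0 ≤ 4 * k ^ 2)
      rw [← hR] at this
      rw [hN]
      linarith
  have ib := bi.re
  have i1 := ((D.h1.2.add D.h2.2).add D.hd.2).const_mul κ
  have i2 := (ib.add ((s2.const_mul ε).const_mul (4 * k ^ 2)))
  have i3 := (l1.add l3).const_mul N
  have h_integ := integral_mono i1 (i2.add i3) hpt
  rw [integral_const_mul, integral_add' (D.h1.2.add D.h2.2) D.hd.2, integral_add' D.h1.2 D.h2.2, integral_add' i2 i3,
    integral_add' ib ((s2.const_mul ε).const_mul (4 * k ^ 2)), integral_const_mul, integral_const_mul, integral_const_mul,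
    integral_add' l1 l3] at h_integ
  have hn : ‖D‖ ^ 2 = (∫ ξ, wt ξ * ‖D.f1 ξ‖ ^ 2) + (∫ ξ, wt ξ * ‖D.f2 ξ‖ ^ 2) + ∫ ξ, wt ξ * ‖D.d ξ‖ ^ 2 := D.norm_sq
  rw [← hn] at h_integ
  have hre : ∫ ξ, RCLike.re (Bi k D ((S D).refl D) ξ) = (∫ ξ, Bi k D ((S D).refl D) ξ).re := by
    rw [integral_re bi]; rfl
  rw [hre] at h_integ
  have f1 : 4 * k ^ 2 * (ε * ∫ ξ, (wt ξ)⁻¹ * (S D).q ξ ^ 2) ≤ κ / 4 * ‖D‖ ^ 2 := by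
    calc _ ≤ 4 * k ^ 2 * (ε * (CS * ‖D‖ ^ 2)) := by gcongr
      _ = 4 * k ^ 2 * (ε * CS) * ‖D‖ ^ 2 := by ring
      _ ≤ _ := by gcongr
  have f2 : N * ((∫ ξ, lo k R ξ * D.q ξ ^ 2) + ∫ ξ, lo k R ξ * (S D).q ξ ^ 2) ≤
      κ / 4 * ‖D‖ ^ 2 + N * CP * ∑ p ∈ P, (D.q p ^ 2 + (S D).q p ^ 2) := by
    calc _ ≤ N * ((δ * ‖D‖ ^ 2 + CP * ∑ p ∈ P, D.q p ^ 2) + (δ * (CS * ‖D‖ ^ 2) + CP * ∑ p ∈ P, (S D).q p ^ 2)) := by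
          gcongr
          exact l4.trans (by gcongr)
      _ = N * (δ * (1 + CS)) * ‖D‖ ^ 2 + N * CP * ∑ p ∈ P, (D.q p ^ 2 + (S D).q p ^ 2) := by
          rw [Finset.sum_add_distrib]; ring
      _ ≤ _ := by gcongr
  have f3 := mul_nonneg hCS hsum
  linarith

/-- evaluation functionals -/
def ev1 (p : R2) : HX Γ →ₗ[ℂ] ℂ where
  toFun V := V.f1 p
  map_add' _ _ := rfl
  map_smul' _ _ := rfl

def ev2 (p : R2) : HX Γ →ₗ[ℂ] ℂ where
  toFun V := V.f2 p
  map_add' _ _ := rfl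
  map_smul' _ _ := rfl

lemma garding (hΓ : IsLipschitzDomain Γ) {k : ℝ} (hk : 0 < k) (A : HX Γ →L[ℂ] HX Γ)
    (hA : ∀ W V : HX Γ, inner ℂ V (A W) = ∫ ξ, Bi k W V ξ) :
    ∃ (n : ℕ) (ℓ : Fin n → HX Γ →ₗ[ℂ] ℂ) (C c K : ℝ), 0 ≤ C ∧ 0 < c ∧ (∀ i D, ‖ℓ i D‖ ≤ K * ‖D‖) ∧
      ∀ D : HX Γ, c * ‖D‖ ^ 2 ≤ C * ‖D‖ * ‖A D‖ + C * ∑ i, ‖ℓ i D‖ ^ 2 := by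
  obtain ⟨S, C, c, P, hC, hc, h⟩ := key_ineq hΓ hk
  obtain ⟨R, hR⟩ : ∃ R : ℝ, ∀ p ∈ P, ‖p‖ ≤ R := by
    obtain ⟨R, hR⟩ := (P.finite_toSet.image (fun p => ‖p‖)).bddAbove
    exact ⟨R, fun p hp => hR ⟨p, hp, rfl⟩⟩
  obtain ⟨E, hE, hr⟩ := HX.rkhs hΓ.2.1 R
  let ι := Fin 4 × P
  let L : ι → HX Γ →ₗ[ℂ] ℂ := fun i => ![ev1 (i.2 : R2), ev2 (i.2 : R2), (ev1 (i.2 : R2)).comp S, (ev2 (i.2 : R2)).comp S] i.1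
  let e : Fin (Fintype.card ι) ≃ ι := (Fintype.equivFin ι).symm
  have hSn : ∀ D, ‖S D‖ ≤ (1 + C) * ‖D‖ := by
    intro D
    refine abs_le_of_sq_le_sq' ?_ (by positivity) |>.2
    refine (h D).1.trans ?_
    rw [mul_pow]; gcongr; nlinarith
  refine ⟨_, fun i => L (e i), 2 * (1 + C) + 1 + 2 * C, c, E * (1 + (1 + C)), by positivity, hc, ?_, ?_⟩
  · intro i D
    change ‖L (e i) D‖ ≤ _
    generalize e i = ei
    obtain ⟨j, p, hp⟩ := ei
    have a := hr D p p (hR p hp) (hR p hp)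
    have b := hr (S D) p p (hR p hp) (hR p hp)
    have a' : E * ‖D‖ ≤ E * (1 + (1 + C)) * ‖D‖ := by
      rw [mul_assoc]; gcongr; nlinarith [norm_nonneg D]
    have b' : E * ‖S D‖ ≤ E * (1 + (1 + C)) * ‖D‖ := by
      rw [mul_assoc]; gcongr; nlinarith [norm_nonneg D, hSn D]
    fin_cases j
    · exact a.1.trans a'
    · exact a.2.1.trans a'
    · exact b.1.trans b'
    · exact b.2.1.trans b'
  · intro D
    have hsum : ∑ i, ‖L (e i) D‖ ^ 2 = ∑ p ∈ P, (‖D.f1 p‖ ^ 2 + ‖D.f2 p‖ ^ 2 + ‖(S D).f1 p‖ ^ 2 + ‖(S D).f2 p‖ ^ 2) := by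
      rw [Equiv.sum_comp e (fun i => ‖L i D‖ ^ 2), Fintype.sum_prod_type_right, ← Finset.sum_coe_sort P]
      refine Finset.sum_congr rfl fun p _ => ?_
      rw [Fin.sum_univ_four]; rfl
    have h2 : ∑ p ∈ P, (D.q p ^ 2 + (S D).q p ^ 2) ≤ 2 * ∑ i, ‖L (e i) D‖ ^ 2 := by
      rw [hsum, Finset.mul_sum]
      refine Finset.sum_le_sum fun p _ => ?_
      unfold HX.q
      nlinarith [sq_nonneg (‖D.f1 p‖ - ‖D.f2 p‖), sq_nonneg (‖(S D).f1 p‖ - ‖(S D).f2 p‖)]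
    have h0 : 0 ≤ ∑ i, ‖L (e i) D‖ ^ 2 := Finset.sum_nonneg fun _ _ => by positivity
    have h1 := (h D).2
    rw [← hA] at h1
    have h3 : (inner ℂ ((S D).refl D) (A D)).re ≤ (2 * (1 + C) + 1) * ‖D‖ * ‖A D‖ := by
      refine (Complex.re_le_norm _).trans ((norm_inner_le_norm _ _).trans ?_)
      gcongr
      unfold HX.refl
      refine (norm_sub_le _ _).trans ?_
      rw [norm_smul, Complex.norm_ofNat]
      nlinarith [hSn D]
    have h4 : 0 ≤ ‖D‖ * ‖A D‖ := by positivity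
    nlinarith [mul_le_mul_of_nonneg_left h2 hC, mul_nonneg hC h4, mul_nonneg hC h0]

end

noncomputable section
open MeasureTheory Complex Filter Topology
open scoped Real NNReal ContDiff FourierTransform

variable {Γ : Set R2}

lemma im_low {k : ℝ} (W : HX Γ) {ξ : R2} (h : ‖ξ‖ < k) : (Bi k W W ξ).im =
    -((√(k ^ 2 - ‖ξ‖ ^ 2))⁻¹ / ‖ξ‖ ^ 2 * ((k ^ 2 - ‖ξ‖ ^ 2) * ‖W.d ξ‖ ^ 2 + k ^ 2 * ‖curlFt W.f1 W.f2 ξ‖ ^ 2)) := by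
  have e : Bi k W W ξ = ((-((√(k ^ 2 - ‖ξ‖ ^ 2))⁻¹ / ‖ξ‖ ^ 2 * ((k ^ 2 - ‖ξ‖ ^ 2) * ‖W.d ξ‖ ^ 2 +
      k ^ 2 * ‖curlFt W.f1 W.f2 ξ‖ ^ 2)) : ℝ) : ℂ) * Complex.I := by
    unfold Bi Bintegrand
    rw [g0hat, if_pos h, Complex.mul_conj, Complex.mul_conj, Complex.normSq_eq_norm_sq, Complex.normSq_eq_norm_sq]
    unfold HX.d
    push_cast
    ring
  rw [e]; simp only [Complex.mul_I_im, Complex.ofReal_re]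

lemma im_high {k : ℝ} (W : HX Γ) {ξ : R2} (h : ¬ ‖ξ‖ < k) : (Bi k W W ξ).im = 0 := by
  have e : Bi k W W ξ = (((√(‖ξ‖ ^ 2 - k ^ 2))⁻¹ / ‖ξ‖ ^ 2 * ((‖ξ‖ ^ 2 - k ^ 2) * ‖W.d ξ‖ ^ 2 -
      k ^ 2 * ‖curlFt W.f1 W.f2 ξ‖ ^ 2) : ℝ) : ℂ) := by
    unfold Bi Bintegrand
    rw [g0hat, if_neg h, Complex.mul_conj, Complex.mul_conj, Complex.normSq_eq_norm_sq, Complex.normSq_eq_norm_sq]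
    unfold HX.d
    push_cast
    ring
  rw [e, Complex.ofReal_im]

lemma inj (hK : Bornology.IsBounded Γ) {k : ℝ} (hk : 0 < k) (W : HX Γ) (h0 : ∫ ξ, Bi k W W ξ = 0) : W = 0 := by
  obtain ⟨_, _, hB⟩ := Bi_bound hK hk
  obtain ⟨bi, -⟩ := hB W W
  have him : ∀ ξ, 0 ≤ -(Bi k W W ξ).im := by
    intro ξ
    by_cases h : ‖ξ‖ < k
    · have : 0 < k ^ 2 - ‖ξ‖ ^ 2 := by nlinarith [norm_nonneg ξ]
      rw [im_low W h, neg_neg]; positivity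
    · rw [im_high W h, neg_zero]
  have hz : ∫ ξ, -(Bi k W W ξ).im = 0 := by
    have := integral_im bi
    rw [h0] at this
    rw [integral_neg]
    simpa using this
  have hae := (integral_eq_zero_iff_of_nonneg him bi.im.neg).1 hz
  have hne : ∀ᵐ ξ : R2, ξ ≠ 0 := by simp [ae_iff, measure_singleton]
  have hall : ∀ᵐ ξ : R2, ‖ξ‖ < k → W.f1 ξ = 0 ∧ W.f2 ξ = 0 := by
    filter_upwards [hae, hne] with ξ h1 h2 h
    have hp : 0 < k ^ 2 - ‖ξ‖ ^ 2 := by nlinarith [norm_nonneg ξ]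
    have hr : 0 < ‖ξ‖ := norm_pos_iff.2 h2
    simp only [Pi.zero_apply, im_low W h, neg_neg] at h1
    have h3 : 0 < (√(k ^ 2 - ‖ξ‖ ^ 2))⁻¹ / ‖ξ‖ ^ 2 := by positivity
    have h4 := (mul_eq_zero.1 h1).resolve_left h3.ne'
    have h5 : 0 ≤ (k ^ 2 - ‖ξ‖ ^ 2) * ‖W.d ξ‖ ^ 2 := by positivity
    have h6 : 0 ≤ k ^ 2 * ‖curlFt W.f1 W.f2 ξ‖ ^ 2 := by positivity
    have h7 : ‖W.d ξ‖ ^ 2 = 0 := (mul_eq_zero.1 (by linarith : (k ^ 2 - ‖ξ‖ ^ 2) * ‖W.d ξ‖ ^ 2 = 0)).resolve_left hp.ne'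
    have h8 : ‖curlFt W.f1 W.f2 ξ‖ ^ 2 = 0 :=
      (mul_eq_zero.1 (by linarith : k ^ 2 * ‖curlFt W.f1 W.f2 ξ‖ ^ 2 = 0)).resolve_left (by positivity)
    have h9 := dc_sq W.f1 W.f2 ξ
    have h7' : ‖dotFt W.f1 W.f2 ξ‖ ^ 2 = 0 := h7
    rw [h7', h8, add_zero] at h9
    have h10 := (mul_eq_zero.1 h9.symm).resolve_left (by positivity)
    have a1 : ‖W.f1 ξ‖ ^ 2 = 0 := by nlinarith [sq_nonneg ‖W.f1 ξ‖, sq_nonneg ‖W.f2 ξ‖]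
    have a2 : ‖W.f2 ξ‖ ^ 2 = 0 := by nlinarith [sq_nonneg ‖W.f1 ξ‖, sq_nonneg ‖W.f2 ξ‖]
    exact ⟨by simpa using a1, by simpa using a2⟩
  have hz : ∀ F : R2 → ℂ, Continuous F → (∀ᵐ ξ : R2, ‖ξ‖ < k → F ξ = 0) → ∀ ξ, ‖ξ‖ < k → F ξ = 0 := by
    intro F hF h ξ hξ
    have := Measure.eqOn_open_of_ae_eq (μ := (volume : Measure R2)) (U := Metric.ball 0 k) (f := F) (g := fun _ => 0)
      ((ae_restrict_iff' Metric.isOpen_ball.measurableSet).2 (h.mono fun ξ h1 h2 => h1 (by simpa using h2)))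
      Metric.isOpen_ball hF.continuousOn continuousOn_const
    exact this (by simpa using hξ)
  refine HX.ext' ?_ ?_
  · exact unique_cont hK.closure W.h1 W.s1 hk (hz _ W.h1.1 (hall.mono fun ξ h h' => (h h').1))
  · exact unique_cont hK.closure W.h2 W.s2 hk (hz _ W.h2.1 (hall.mono fun ξ h h' => (h h').2))

lemma fredholm {H : Type*} [NormedAddCommGroup H] [InnerProductSpace ℂ H] [CompleteSpace H] (A : H →L[ℂ] H)
    (hinj : ∀ x, inner ℂ x (A x) = 0 → x = 0) {n : ℕ} (ℓ : Fin n → H →ₗ[ℂ] ℂ) {C c K : ℝ} (hC : 0 ≤ C) (hc : 0 < c)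
    (hK : ∀ i x, ‖ℓ i x‖ ≤ K * ‖x‖) (hG : ∀ x, c * ‖x‖ ^ 2 ≤ C * ‖x‖ * ‖A x‖ + C * ∑ i, ‖ℓ i x‖ ^ 2) :
    ∃ C' : ℝ, 0 < C' ∧ (∀ x, ‖x‖ ≤ C' * ‖A x‖) ∧ Function.Surjective A := by
  have hb : ∃ C' : ℝ, 0 < C' ∧ ∀ x, ‖x‖ ≤ C' * ‖A x‖ := by
    by_contra hcon
    push Not at hcon
    have : ∀ n : ℕ, ∃ y : H, ‖y‖ = 1 ∧ ‖A y‖ ≤ 1 / ((n : ℝ) + 1) := by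
      intro n
      obtain ⟨x, hx⟩ := hcon ((n : ℝ) + 1) (by positivity)
      have hx0 : 0 < ‖x‖ := lt_of_le_of_lt (by positivity) hx
      refine ⟨((‖x‖⁻¹ : ℝ) : ℂ) • x, ?_, ?_⟩
      · rw [norm_smul, Complex.norm_real, Real.norm_of_nonneg (by positivity), inv_mul_cancel₀ hx0.ne']
      · rw [map_smul, norm_smul, Complex.norm_real, Real.norm_of_nonneg (by positivity), inv_mul_le_iff₀ hx0,
          mul_one_div, le_div_iff₀ (by positivity)]
        linarith
    choose y hy1 hy2 using this
    have hbd : ∀ m, (fun i => ℓ i (y m)) ∈ Metric.closedBall (0 : Fin n → ℂ) |K| := by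
      intro m
      rw [mem_closedBall_zero_iff, pi_norm_le_iff_of_nonneg (abs_nonneg K)]
      intro i
      have := hK i (y m)
      rw [hy1, mul_one] at this
      exact this.trans (le_abs_self K)
    obtain ⟨v, -, φ, hφ, hv⟩ := tendsto_subseq_of_bounded Metric.isBounded_closedBall hbd
    have hAy : Tendsto (fun m => A (y (φ m))) atTop (𝓝 0) := by
      have h1 : Tendsto (fun m => A (y m)) atTop (𝓝 0) :=
        squeeze_zero_norm hy2 tendsto_one_div_add_atTop_nhds_zero_nat
      exact h1.comp hφ.tendsto_atTop
    have hcau : CauchySeq (fun m => y (φ m)) := by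
      rw [cauchySeq_iff_tendsto_dist_atTop_0, ← prod_atTop_atTop_eq]
      have hR : Tendsto (fun p : ℕ × ℕ => (C * 2 * ‖A (y (φ p.1)) - A (y (φ p.2))‖ +
          C * ∑ i, ‖ℓ i (y (φ p.1)) - ℓ i (y (φ p.2))‖ ^ 2) / c) (atTop ×ˢ atTop) (𝓝 0) := by
        have t1 : Tendsto (fun p : ℕ × ℕ => A (y (φ p.1)) - A (y (φ p.2))) (atTop ×ˢ atTop) (𝓝 (0 - 0)) :=
          (hAy.comp tendsto_fst).sub (hAy.comp tendsto_snd)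
        have t2 : ∀ i, Tendsto (fun p : ℕ × ℕ => ℓ i (y (φ p.1)) - ℓ i (y (φ p.2))) (atTop ×ˢ atTop) (𝓝 (v i - v i)) := by
          intro i
          have := (tendsto_pi_nhds.1 hv) i
          exact (this.comp tendsto_fst).sub (this.comp tendsto_snd)
        have t3 := ((t1.norm.const_mul (C * 2)).add
          ((tendsto_finsetSum Finset.univ fun i _ => ((t2 i).norm.pow 2)).const_mul C)).div_const c
        simpa using t3
      have hS : Tendsto (fun p : ℕ × ℕ => √((C * 2 * ‖A (y (φ p.1)) - A (y (φ p.2))‖ +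
          C * ∑ i, ‖ℓ i (y (φ p.1)) - ℓ i (y (φ p.2))‖ ^ 2) / c)) (atTop ×ˢ atTop) (𝓝 0) := by
        simpa using hR.sqrt
      refine squeeze_zero (fun _ => dist_nonneg) (fun p => ?_) hS
      rw [dist_eq_norm]
      refine Real.le_sqrt_of_sq_le ?_
      rw [le_div_iff₀ hc, mul_comm]
      refine (hG _).trans ?_
      simp only [map_sub]
      gcongr
      refine (norm_sub_le _ _).trans ?_
      rw [hy1, hy1]; norm_num
    obtain ⟨z, hz⟩ := cauchySeq_tendsto_of_complete hcau
    have hz1 : ‖z‖ = 1 := by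
      refine tendsto_nhds_unique hz.norm ?_
      simp only [hy1]; exact tendsto_const_nhds
    have hAz : A z = 0 := tendsto_nhds_unique ((A.continuous.tendsto z).comp hz) hAy
    have := hinj z (by rw [hAz, inner_zero_right])
    rw [this, norm_zero] at hz1
    exact zero_ne_one hz1
  obtain ⟨C', hC', hb⟩ := hb
  refine ⟨C', hC', hb, ?_⟩
  have hanti : AntilipschitzWith C'.toNNReal A := by
    refine A.antilipschitz_of_bound fun x => ?_
    rw [Real.coe_toNNReal _ hC'.le]; exact hb x
  have hcl : IsClosed (Set.range A) := hanti.isClosed_range A.uniformContinuous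
  have hcl' : IsClosed ((LinearMap.range A.toLinearMap : Submodule ℂ H) : Set H) := by
    simpa [LinearMap.coe_range] using hcl
  have htop : LinearMap.range A.toLinearMap = ⊤ := by
    rw [← hcl'.submodule_topologicalClosure_eq, Submodule.topologicalClosure_eq_top_iff, Submodule.eq_bot_iff]
    intro y hy
    refine hinj y ?_
    rw [← inner_conj_symm, Submodule.mem_orthogonal .. |>.1 hy (A y) ⟨y, rfl⟩, map_zero]
  intro y
  have : y ∈ LinearMap.range A.toLinearMap := by rw [htop]; trivial
  exact this

/-- change of representation -/
def toHX (V : Xelt Γ) : HX Γ := ⟨(V.c1.ft, V.c2.ft), ⟨V.c1.cont, V.c1.mem⟩, ⟨V.c2.cont, V.c2.mem⟩,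
  ⟨by have := V.c1.cont; have := V.c2.cont; change Continuous (fun ξ => dotFt _ _ ξ); unfold dotFt; fun_prop, V.divMem⟩,
  fun φ hφ h => V.c1.supp φ hφ.1 hφ.2 h, fun φ hφ h => V.c2.supp φ hφ.1 hφ.2 h⟩

def ofHX (V : HX Γ) : Xelt Γ where
  c1 := ⟨V.f1, V.h1.1, V.h1.2, fun φ h1 h2 h => V.s1 φ ⟨h1, h2⟩ h⟩
  c2 := ⟨V.f2, V.h2.1, V.h2.2, fun φ h1 h2 h => V.s2 φ ⟨h1, h2⟩ h⟩
  divMem := V.hd.2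

lemma of_to (V : Xelt Γ) : ofHX (toHX V) = V := rfl
lemma to_of (V : HX Γ) : toHX (ofHX V) = V := rfl

lemma Bform_eq (k : ℝ) (W V : Xelt Γ) : Bform k W V = ∫ ξ, Bi k (toHX W) (toHX V) ξ := rfl

lemma Xinner_eq (Y V : Xelt Γ) : Xinner Y V = ((((2 * π) ^ 2)⁻¹ : ℝ) : ℂ) * inner ℂ (toHX V) (toHX Y) := by
  unfold Xinner
  rw [HX.inner_def]
  congr 1
  unfold ip
  have j1 := ip_int (toHX V).h1 (toHX Y).h1
  have j2 := ip_int (toHX V).h2 (toHX Y).h2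
  have j3 := ip_int (toHX V).hd (toHX Y).hd
  rw [← integral_add' j1 j2, ← integral_add' (j1.add j2) j3]
  congr 1
  ext ξ
  simp only [Pi.add_apply]
  have e : divFt Y ξ * starRingEnd ℂ (divFt V ξ) = starRingEnd ℂ ((toHX V).d ξ) * (toHX Y).d ξ := by
    unfold divFt
    rw [map_mul, Complex.conj_I]
    change Complex.I * (toHX Y).d ξ * (-Complex.I * starRingEnd ℂ ((toHX V).d ξ)) = _
    linear_combination -(starRingEnd ℂ ((toHX V).d ξ) * (toHX Y).d ξ) * Complex.I_mul_I
  rw [e]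
  change (wt ξ : ℂ) * ((toHX Y).f1 ξ * starRingEnd ℂ ((toHX V).f1 ξ) + (toHX Y).f2 ξ * starRingEnd ℂ ((toHX V).f2 ξ) + _) = _
  ring

lemma Xnorm_eq (V : Xelt Γ) : Xnorm V = √(((2 * π) ^ 2)⁻¹) * ‖toHX V‖ := by
  unfold Xnorm
  have : XnormSq V = ((2 * π) ^ 2)⁻¹ * ‖toHX V‖ ^ 2 := by
    rw [HX.norm_sq, mul_add, mul_add]
    unfold XnormSq HnormSq
    have e : wnormSq (-(1/2)) (divFt V) = ((2 * π) ^ 2)⁻¹ * Nw (toHX V).d := by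
      unfold wnormSq divFt Nw
      congr 2
      ext ξ
      rw [norm_mul, Complex.norm_I, one_mul]; rfl
    rw [e]; rfl
  rw [this, Real.sqrt_mul (by positivity), Real.sqrt_sq (norm_nonneg _)]

theorem main_thm_aux (Γ : Set R2) (hΓ : IsLipschitzDomain Γ) (k : ℝ) (hk : 0 < k) :
    ∃ C > 0, ∀ Y : Xelt Γ,
      (∃! W : Xelt Γ, ∀ V : Xelt Γ, Bform k W V = Xinner Y V) ∧
      (∀ W : Xelt Γ, (∀ V : Xelt Γ, Bform k W V = Xinner Y V) →
        Xnorm W ≤ C * Xnorm Y) := by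
  have := HX.complete hΓ.2.1
  obtain ⟨A, hA⟩ := A_exists hΓ.2.1 hk
  obtain ⟨n, ℓ, C, c, K, hC, hc, hK, hG⟩ := garding hΓ hk A hA
  obtain ⟨C', hC', hb, hsurj⟩ := fredholm A (fun x hx => inj hΓ.2.1 hk x (by rw [← hA, hx])) ℓ hC hc hK hG
  set a : ℝ := ((2 * π) ^ 2)⁻¹ with ha
  have ha0 : 0 < a := by positivity
  have hiff : ∀ Y W : Xelt Γ, (∀ V : Xelt Γ, Bform k W V = Xinner Y V) ↔ A (toHX W) = (a : ℂ) • toHX Y := by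
    intro Y W
    constructor
    · intro h
      refine ext_inner_left ℂ fun V => ?_
      have := h (ofHX V)
      rw [Bform_eq, Xinner_eq, to_of, ← hA, ← ha] at this
      rw [this, inner_smul_right]
    · intro h V
      rw [Bform_eq, Xinner_eq, ← hA, h, inner_smul_right]
  have hinj : Function.Injective A := by
    refine (injective_iff_map_eq_zero A).2 fun x hx => ?_
    have := hb x
    rw [hx, norm_zero, mul_zero] at this
    exact norm_le_zero_iff.1 this
  refine ⟨C' * a, by positivity, fun Y => ⟨?_, fun W hW => ?_⟩⟩
  · obtain ⟨w, hw⟩ := hsurj ((a : ℂ) • toHX Y)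
    refine ⟨ofHX w, (hiff Y _).2 hw, fun W' hW' => ?_⟩
    have h := (hiff Y W').1 hW'
    rw [← of_to W', hinj (h.trans hw.symm)]
  · have h := hb (toHX W)
    rw [(hiff Y W).1 hW, norm_smul, Complex.norm_real, Real.norm_of_nonneg ha0.le] at h
    rw [Xnorm_eq, Xnorm_eq]
    calc _ ≤ √(((2 * π) ^ 2)⁻¹) * (C' * (a * ‖toHX Y‖)) := by gcongr
      _ = _ := by ring

end

/-- Theorem 3.7, well-posedness: for every bounded conjugate-linear
functional `Y` on `X` (represented via Riesz as `V ↦ Xinner Y V`, `Y ∈ X`, with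
`‖Y‖_{X*} = ‖Y‖_X`) there is a unique `W ∈ X` with `B(W,V) = ⟨Y,V⟩` for all `V ∈ X`,
and `‖W‖_X ≤ C ‖Y‖_{X*}` with `C` independent of `Y`. -/
theorem statement11 (Γ : Set R2) (hΓ : IsLipschitzDomain Γ) (k : ℝ) (hk : 0 < k) :
    ∃ C > 0, ∀ Y : Xelt Γ,
      (∃! W : Xelt Γ, ∀ V : Xelt Γ, Bform k W V = Xinner Y V) ∧
      (∀ W : Xelt Γ, (∀ V : Xelt Γ, Bform k W V = Xinner Y V) →
        Xnorm W ≤ C * Xnorm Y) := by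
  exact main_thm_aux Γ hΓ k hk

end
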